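/- arXiv:2101.02610 — 2 statements merged into one kernel-verified Lean document; each statement's English description precedes it below -/
import Mathlib

section
/- Let (X, d, T) be a topological dynamical system. Then for every δ ∈ (0,1), the upper metric mean dimension satisfies mdim̄_M(X,d,T) = limsup_{ε→0} (1/log(1/ε)) · sup_{μ ∈ E_T(X)} inf{ h_μ^S(U, δ) : U a finite open cover of X with diam(U) ≤ ε }. -/
open Filter MeasureTheory Set Topology

variable {X : Type*}

/-- The dynamical (Bowen) metric `d_n(x,y) = max_{0 ≤ k ≤ n-1} d(T^k x, T^k y)`. -/
noncomputable def dynDist [MetricSpace X] (T : X → X) (n : ℕ) (x y : X) : ℝ :=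
  ⨆ k ∈ Finset.range n, dist (T^[k] x) (T^[k] y)

/-- The open dynamical ball `B_n(x, ε) = {y : d_n(x,y) < ε}`. -/
def dynBall [MetricSpace X] (T : X → X) (n : ℕ) (x : X) (ε : ℝ) : Set X :=
  {y | dynDist T n x y < ε}

/-- `s_n(K, ε)`: the maximal cardinality of an `(n,ε)`-separated subset of `K`. -/
noncomputable def sepNum [MetricSpace X] (T : X → X) (n : ℕ) (K : Set X) (ε : ℝ) : ℕ :=
  sSup {m | ∃ E : Finset X, ↑E ⊆ K ∧
    (∀ x ∈ E, ∀ y ∈ E, x ≠ y → ε < dynDist T n x y) ∧ E.card = m}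

/-- `S(K, ε) = limsup_n (1/n) log s_n(K, ε)`. -/
noncomputable def sepEnt [MetricSpace X] (T : X → X) (K : Set X) (ε : ℝ) : EReal :=
  limsup (fun n : ℕ => ((Real.log (sepNum T n K ε) / n : ℝ) : EReal)) atTop

/-- `r_n(K, ε)`: the minimal cardinality of an `(n,ε)`-spanning set for `K`. -/
noncomputable def spanNum [MetricSpace X] (T : X → X) (n : ℕ) (K : Set X) (ε : ℝ) : ℕ :=
  sInf {m | ∃ F : Finset X, (∀ x ∈ K, ∃ y ∈ F, dynDist T n x y ≤ ε) ∧ F.card = m}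

/-- `R(K, ε) = limsup_n (1/n) log r_n(K, ε)`. -/
noncomputable def spanEnt [MetricSpace X] (T : X → X) (K : Set X) (ε : ℝ) : EReal :=
  limsup (fun n : ℕ => ((Real.log (spanNum T n K ε) / n : ℝ) : EReal)) atTop

/-- Upper metric mean dimension. -/
noncomputable def mdimUpper [MetricSpace X] (T : X → X) : EReal :=
  limsup (fun ε : ℝ => sepEnt T univ ε / ((Real.log (1 / ε) : ℝ) : EReal)) (𝓝[>] (0:ℝ))

/-- Lower metric mean dimension. -/
noncomputable def mdimLower [MetricSpace X] (T : X → X) : EReal :=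
  liminf (fun ε : ℝ => sepEnt T univ ε / ((Real.log (1 / ε) : ℝ) : EReal)) (𝓝[>] (0:ℝ))

/-- The ergodic `T`-invariant Borel probability measures. -/
def ergodicMeasures [MeasurableSpace X] (T : X → X) : Set (Measure X) :=
  {μ | IsProbabilityMeasure μ ∧ Ergodic T μ}

/-- `U` is a finite open cover of `X`. -/
def IsFiniteOpenCover [TopologicalSpace X] (U : Finset (Set X)) : Prop :=
  (∀ V ∈ U, IsOpen V) ∧ ⋃₀ (U : Set (Set X)) = univ

/-- The cover `U^n = ⋁_{i=0}^{n-1} T^{-i} U`. -/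
def dynRefine (T : X → X) (U : Finset (Set X)) (n : ℕ) : Set (Set X) :=
  {V | ∃ f : Fin n → Set X, (∀ i, f i ∈ U) ∧ V = ⋂ i : Fin n, T^[(i : ℕ)] ⁻¹' f i}

/-- `N(C)`: the minimal cardinality of a subcover of `C`. -/
noncomputable def coverNum (C : Set (Set X)) : ℕ :=
  sInf {m | ∃ F : Finset (Set X), ↑F ⊆ C ∧ ⋃₀ (F : Set (Set X)) = univ ∧ F.card = m}

/-- `N_μ(U^n, δ)`: minimal number of members of `U^n` needed to cover a set of measure ≥ δ. -/
noncomputable def shapiraNum [MeasurableSpace X] (T : X → X) (μ : Measure X)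
    (U : Finset (Set X)) (n : ℕ) (δ : ℝ) : ℕ :=
  sInf {m | ∃ F : Finset (Set X), ↑F ⊆ dynRefine T U n ∧
    ENNReal.ofReal δ ≤ μ (⋃₀ (F : Set (Set X))) ∧ F.card = m}

/-- Shapira's entropy `h_μ^S(U, δ) = limsup_n (1/n) log N_μ(U^n, δ)`. -/
noncomputable def shapiraEnt [MeasurableSpace X] (T : X → X) (μ : Measure X)
    (U : Finset (Set X)) (δ : ℝ) : EReal :=
  limsup (fun n : ℕ => ((Real.log (shapiraNum T μ U n δ) / n : ℝ) : EReal)) atTop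

/-- `N_μ^δ(n, ε)`: smallest number of open `(n,ε)`-dynamical balls whose union has
measure `> δ`. -/
noncomputable def katokNum [MetricSpace X] [MeasurableSpace X] (T : X → X) (μ : Measure X)
    (n : ℕ) (ε δ : ℝ) : ℕ :=
  sInf {m | ∃ F : Finset X, ENNReal.ofReal δ < μ (⋃ x ∈ F, dynBall T n x ε) ∧ F.card = m}

/-- Katok's entropy `h_μ^K(ε, δ) = limsup_n (1/n) log N_μ^δ(n, ε)`. -/
noncomputable def katokEnt [MetricSpace X] [MeasurableSpace X] (T : X → X) (μ : Measure X)
    (ε δ : ℝ) : EReal :=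
  limsup (fun n : ℕ => ((Real.log (katokNum T μ n ε δ) / n : ℝ) : EReal)) atTop

/-- Lower Katok entropy `h̲_μ^K(ε, δ) = liminf_n (1/n) log N_μ^δ(n, ε)`. -/
noncomputable def katokEntLower [MetricSpace X] [MeasurableSpace X] (T : X → X) (μ : Measure X)
    (ε δ : ℝ) : EReal :=
  liminf (fun n : ℕ => ((Real.log (katokNum T μ n ε δ) / n : ℝ) : EReal)) atTop

/-- `Ñ_μ^δ(n, ε)`: smallest number of sets of `d_n`-diameter ≤ ε whose union has
measure `> δ`. -/
noncomputable def katokNumTilde [MetricSpace X] [MeasurableSpace X] (T : X → X) (μ : Measure X)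
    (n : ℕ) (ε δ : ℝ) : ℕ :=
  sInf {m | ∃ F : Finset (Set X), (∀ A ∈ F, ∀ x ∈ A, ∀ y ∈ A, dynDist T n x y ≤ ε) ∧
    ENNReal.ofReal δ < μ (⋃₀ (F : Set (Set X))) ∧ F.card = m}

/-- Brin–Katok local entropy `h_μ^{BK}(x, ε) = limsup_n -(1/n) log μ(B_n(x, ε))`. -/
noncomputable def brinKatok [MetricSpace X] [MeasurableSpace X] (T : X → X) (μ : Measure X)
    (x : X) (ε : ℝ) : EReal :=
  limsup (fun n : ℕ => -(ENNReal.log (μ (dynBall T n x ε))) / (n : EReal)) atTop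

/-- Lower Brin–Katok local entropy `h̲_μ^{BK}(x, ε) = liminf_n -(1/n) log μ(B_n(x, ε))`. -/
noncomputable def brinKatokLower [MetricSpace X] [MeasurableSpace X] (T : X → X) (μ : Measure X)
    (x : X) (ε : ℝ) : EReal :=
  liminf (fun n : ℕ => -(ENNReal.log (μ (dynBall T n x ε))) / (n : EReal)) atTop

/-- Local entropy function `h_d(x, ε) = inf { S(K, ε) : K closed neighborhood of x }`. -/
noncomputable def locEnt [MetricSpace X] (T : X → X) (x : X) (ε : ℝ) : EReal :=
  ⨅ K ∈ {K : Set X | IsClosed K ∧ K ∈ 𝓝 x}, sepEnt T K ε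

/-- Local spanning entropy `h̃_d(x, ε) = inf { R(K, ε) : K closed neighborhood of x }`. -/
noncomputable def locSpanEnt [MetricSpace X] (T : X → X) (x : X) (ε : ℝ) : EReal :=
  ⨅ K ∈ {K : Set X | IsClosed K ∧ K ∈ 𝓝 x}, spanEnt T K ε

/-- `U_x^n`: the union of all cells of `U^n` containing `x`. -/
def dynCoverCell (T : X → X) (U : Finset (Set X)) (n : ℕ) (x : X) : Set X :=
  ⋃₀ {V | V ∈ dynRefine T U n ∧ x ∈ V}


set_option linter.unusedSectionVars false
set_option linter.unusedVariables false
namespace MMD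

open scoped BigOperators

universe u

/-- A finite continuous partition of unity. -/
structure PU (X : Type u) [TopologicalSpace X] where
  κ : Type u
  ft : Fintype κ
  φ : κ → C(X, ℝ)
  nonneg : ∀ k x, 0 ≤ φ k x
  sum_one : ∑ k, φ k = 1

attribute [instance] PU.ft

/-- A positive normalized additive functional. -/
structure IsState {X : Type u} [TopologicalSpace X] (L : C(X, ℝ) → ℝ) : Prop where
  add : ∀ f g, L (f + g) = L f + L g
  nonneg : ∀ f : C(X, ℝ), (∀ x, 0 ≤ f x) → 0 ≤ L f
  one : L 1 = 1

section
variable {X : Type u} [TopologicalSpace X]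

theorem IsState.zero {L : C(X, ℝ) → ℝ} (h : IsState L) : L 0 = 0 := by
  have := h.add 0 0
  simp at this
  exact this

theorem IsState.sum {L : C(X, ℝ) → ℝ} (h : IsState L) {ι : Type*} (s : Finset ι)
    (f : ι → C(X, ℝ)) : L (∑ i ∈ s, f i) = ∑ i ∈ s, L (f i) := by
  classical
  induction s using Finset.induction_on with
  | empty => simp [h.zero]
  | insert a s ha ih => rw [Finset.sum_insert ha, Finset.sum_insert ha, h.add, ih]

theorem IsState.comp {L : C(X, ℝ) → ℝ} (h : IsState L) (S : C(X, X)) :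
    IsState (fun g => L (g.comp S)) where
  add f g := by
    rw [← h.add]; rfl
  nonneg f hf := h.nonneg _ (fun x => hf _)
  one := by
    rw [← h.one]; rfl

/-- Shannon entropy of a partition of unity. -/
noncomputable def Ent (L : C(X, ℝ) → ℝ) (P : PU X) : ℝ := ∑ k, Real.negMulLog (L (P.φ k))

theorem gibbs {κ : Type*} [Fintype κ] (p q : κ → ℝ) (hp : ∀ k, 0 ≤ p k) (hq : ∀ k, 0 ≤ q k)
    (h0 : ∀ k, q k = 0 → p k = 0) (hs : ∑ k, q k ≤ ∑ k, p k) :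
    ∑ k, Real.negMulLog (p k) ≤ ∑ k, - (p k * Real.log (q k)) := by
  have h : ∀ k, Real.negMulLog (p k) ≤ - (p k * Real.log (q k)) + (q k - p k) := by
    intro k
    rcases eq_or_lt_of_le (hp k) with h | h
    · rw [← h]; simp [hq k]
    · have hqk : 0 < q k := by
        rcases eq_or_lt_of_le (hq k) with h' | h'
        · exact absurd (h0 k h'.symm) h.ne'
        · exact h'
      have := Real.log_le_sub_one_of_pos (div_pos hqk h)
      rw [Real.log_div hqk.ne' h.ne'] at this
      have h2 := mul_le_mul_of_nonneg_left this h.le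
      have h3 : p k * (q k / p k - 1) = q k - p k := by field_simp
      rw [h3] at h2
      unfold Real.negMulLog
      linarith
  calc _ ≤ ∑ k, (- (p k * Real.log (q k)) + (q k - p k)) := Finset.sum_le_sum (fun k _ => h k)
    _ = ∑ k, - (p k * Real.log (q k)) + (∑ k, q k - ∑ k, p k) := by
      rw [Finset.sum_add_distrib, Finset.sum_sub_distrib]
    _ ≤ _ := by linarith

theorem PU.le_one (P : PU X) (k : P.κ) (x : X) : P.φ k x ≤ 1 := by
  have h := congrArg (fun f : C(X, ℝ) => f x) P.sum_one
  simp only [ContinuousMap.coe_sum, Finset.sum_apply, ContinuousMap.one_apply] at h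
  rw [← h]
  exact Finset.single_le_sum (f := fun k => P.φ k x) (fun i _ => P.nonneg i x) (Finset.mem_univ k)

theorem PU.sum_state (P : PU X) {L : C(X, ℝ) → ℝ} (h : IsState L) :
    ∑ k, L (P.φ k) = 1 := by
  rw [← h.sum, P.sum_one, h.one]

theorem PU.state_nonneg (P : PU X) {L : C(X, ℝ) → ℝ} (h : IsState L) (k : P.κ) :
    0 ≤ L (P.φ k) := h.nonneg _ (P.nonneg k)

theorem PU.state_le_one (P : PU X) {L : C(X, ℝ) → ℝ} (h : IsState L) (k : P.κ) :
    L (P.φ k) ≤ 1 := by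
  rw [← P.sum_state h]
  exact Finset.single_le_sum (f := fun k => L (P.φ k)) (fun i _ => P.state_nonneg h i)
    (Finset.mem_univ k)

theorem Ent_nonneg (P : PU X) {L : C(X, ℝ) → ℝ} (h : IsState L) : 0 ≤ Ent L P :=
  Finset.sum_nonneg fun k _ => Real.negMulLog_nonneg (P.state_nonneg h k) (P.state_le_one h k)

theorem Ent_le_log_card (P : PU X) {L : C(X, ℝ) → ℝ} (h : IsState L) :
    Ent L P ≤ Real.log (Fintype.card P.κ) := by
  have hne : (Fintype.card P.κ : ℝ) ≠ 0 := by
    intro h0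
    have h1 := P.sum_state h
    have : IsEmpty P.κ := Fintype.card_eq_zero_iff.mp (by exact_mod_cast h0)
    simp at h1
  have := gibbs (fun k => L (P.φ k)) (fun _ => (Fintype.card P.κ : ℝ)⁻¹)
    (P.state_nonneg h) (fun _ => by positivity) (fun k hk => absurd hk (inv_ne_zero hne))
    (by rw [P.sum_state h]; simp [hne])
  refine this.trans (le_of_eq ?_)
  simp only [Real.log_inv, mul_neg, neg_neg]
  rw [← Finset.sum_mul, P.sum_state h, one_mul]

/-- Product of partitions of unity. -/
def PU.prod (P Q : PU X) : PU X where
  κ := P.κ × Q.κ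
  ft := inferInstance
  φ k := P.φ k.1 * Q.φ k.2
  nonneg k x := mul_nonneg (P.nonneg _ _) (Q.nonneg _ _)
  sum_one := by
    rw [Fintype.sum_prod_type]
    simp only
    simp_rw [← Finset.mul_sum]
    rw [Q.sum_one]
    simp [P.sum_one]

theorem Ent_prod (P Q : PU X) {L : C(X, ℝ) → ℝ} (h : IsState L) :
    Ent L (P.prod Q) ≤ Ent L P + Ent L Q := by
  have m1 : ∀ i, ∑ j, L (P.φ i * Q.φ j) = L (P.φ i) := by
    intro i
    rw [← h.sum, ← Finset.mul_sum, Q.sum_one, mul_one]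
  have m2 : ∀ j, ∑ i, L (P.φ i * Q.φ j) = L (Q.φ j) := by
    intro i
    rw [← h.sum, ← Finset.sum_mul, P.sum_one, one_mul]
  have hn : ∀ i j, 0 ≤ L (P.φ i * Q.φ j) := fun i j =>
    h.nonneg _ (fun x => mul_nonneg (P.nonneg _ _) (Q.nonneg _ _))
  have z1 : ∀ i j, L (P.φ i) = 0 → L (P.φ i * Q.φ j) = 0 := by
    intro i j hi
    rw [← m1 i] at hi
    exact (Finset.sum_eq_zero_iff_of_nonneg (fun j _ => hn i j)).1 hi j (Finset.mem_univ j)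
  have z2 : ∀ i j, L (Q.φ j) = 0 → L (P.φ i * Q.φ j) = 0 := by
    intro i j hi
    rw [← m2 j] at hi
    exact (Finset.sum_eq_zero_iff_of_nonneg (fun i _ => hn i j)).1 hi i (Finset.mem_univ i)
  have g := gibbs (κ := P.κ × Q.κ) (fun k => L (P.φ k.1 * Q.φ k.2))
    (fun k => L (P.φ k.1) * L (Q.φ k.2)) (fun k => hn _ _)
    (fun k => mul_nonneg (P.state_nonneg h _) (Q.state_nonneg h _))
    (fun k hk => (mul_eq_zero.1 hk).elim (z1 _ _) (z2 _ _))
    (by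
      rw [Fintype.sum_prod_type, Fintype.sum_prod_type]
      simp only
      simp_rw [m1, ← Finset.mul_sum, Q.sum_state h, mul_one]
      exact le_rfl)
  refine g.trans (le_of_eq ?_)
  have e : ∀ k : P.κ × Q.κ, -(L (P.φ k.1 * Q.φ k.2) * Real.log (L (P.φ k.1) * L (Q.φ k.2)))
      = -(L (P.φ k.1 * Q.φ k.2) * Real.log (L (P.φ k.1)))
        + -(L (P.φ k.1 * Q.φ k.2) * Real.log (L (Q.φ k.2))) := by
    intro k
    by_cases h1 : L (P.φ k.1) = 0
    · rw [z1 _ _ h1]; simp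
    by_cases h2 : L (Q.φ k.2) = 0
    · rw [z2 _ _ h2]; simp
    rw [Real.log_mul h1 h2]; ring
  simp_rw [e]
  rw [Finset.sum_add_distrib]
  congr 1
  · rw [Fintype.sum_prod_type]
    refine Finset.sum_congr rfl fun i _ => ?_
    simp only
    rw [Finset.sum_neg_distrib, ← Finset.sum_mul, m1]
    simp [Real.negMulLog]
  · rw [Fintype.sum_prod_type_right]
    refine Finset.sum_congr rfl fun i _ => ?_
    simp only
    rw [Finset.sum_neg_distrib, ← Finset.sum_mul, m2]
    simp [Real.negMulLog]

/-- Pullback of a partition of unity. -/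
def PU.comp (P : PU X) (S : C(X, X)) : PU X where
  κ := P.κ
  ft := P.ft
  φ k := (P.φ k).comp S
  nonneg k x := P.nonneg _ _
  sum_one := by
    ext x
    have h := congrArg (fun f : C(X, ℝ) => f (S x)) P.sum_one
    simpa [ContinuousMap.coe_sum, Finset.sum_apply] using h

theorem Ent_comp (P : PU X) (S : C(X, X)) (L : C(X, ℝ) → ℝ) :
    Ent L (P.comp S) = Ent (fun g => L (g.comp S)) P := rfl

/-- Trivial partition of unity. -/
def PU.triv : PU X where
  κ := PUnit
  ft := inferInstance
  φ _ := 1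
  nonneg _ _ := by simp
  sum_one := by simp

theorem Ent_triv {L : C(X, ℝ) → ℝ} (h : IsState L) : Ent L (PU.triv : PU X) = 0 := by
  simp [Ent, PU.triv, h.one]

end

section
variable {X : Type u} [MetricSpace X]

/-- The members of `P` are `ε`-small at all times in `S`. -/
def Small (T : X → X) (ε : ℝ) (S : Set ℕ) (P : PU X) : Prop :=
  ∀ k x y, P.φ k x ≠ 0 → P.φ k y ≠ 0 → ∀ i ∈ S, dist (T^[i] x) (T^[i] y) ≤ ε

theorem Small.mono {T : X → X} {ε : ℝ} {S S' : Set ℕ} {P : PU X} (h : Small T ε S P)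
    (hS : S' ⊆ S) : Small T ε S' P := fun k x y hx hy i hi => h k x y hx hy i (hS hi)

theorem Small.prod {T : X → X} {ε : ℝ} {S S' : Set ℕ} {P Q : PU X} (h : Small T ε S P)
    (h' : Small T ε S' Q) : Small T ε (S ∪ S') (P.prod Q) := by
  rintro k x y hx hy i hi
  have hx' : P.φ k.1 x * Q.φ k.2 x ≠ 0 := hx
  have hy' : P.φ k.1 y * Q.φ k.2 y ≠ 0 := hy
  rcases hi with hi | hi
  · exact h k.1 x y (left_ne_zero_of_mul hx') (left_ne_zero_of_mul hy') i hi
  · exact h' k.2 x y (right_ne_zero_of_mul hx') (right_ne_zero_of_mul hy') i hi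

/-- Iterate as a continuous map. -/
def itc {T : X → X} (hT : Continuous T) (t : ℕ) : C(X, X) := ⟨T^[t], hT.iterate t⟩

theorem exists_blocks {T : X → X} (hT : Continuous T) {ε : ℝ} {m : ℕ} {P : PU X}
    (h : Small T ε (Set.Iio m) P) (l : List ℕ) :
    ∃ Q : PU X, Small T ε {i | ∃ t ∈ l, t ≤ i ∧ i < t + m} Q ∧
      ∀ L : C(X, ℝ) → ℝ, IsState L →
        Ent L Q ≤ (l.map (fun t => Ent (fun g => L (g.comp (itc hT t))) P)).sum := by
  induction l with
  | nil => exact ⟨PU.triv, by intro k x y _ _ i hi; simp at hi, fun L hL => by simp [Ent_triv hL]⟩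
  | cons t l ih =>
    obtain ⟨Q, hQ, hE⟩ := ih
    refine ⟨(P.comp (itc hT t)).prod Q, ?_, fun L hL => ?_⟩
    · have hc : Small T ε {i | t ≤ i ∧ i < t + m} (P.comp (itc hT t)) := by
        rintro k x y hx hy i ⟨hi1, hi2⟩
        have := h k (T^[t] x) (T^[t] y) hx hy (i - t) (by simp; omega)
        rwa [← Function.iterate_add_apply, ← Function.iterate_add_apply,
          Nat.sub_add_cancel hi1] at this
      refine (hc.prod hQ).mono ?_
      rintro i ⟨s, hs, h1, h2⟩
      rcases List.mem_cons.1 hs with rfl | hs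
      · exact Or.inl ⟨h1, h2⟩
      · exact Or.inr ⟨s, hs, h1, h2⟩
    · rw [List.map_cons, List.sum_cons]
      refine (Ent_prod _ _ hL).trans ?_
      rw [Ent_comp]
      have := hE L hL
      linarith

end

end MMD

namespace MMD

universe u

section
variable {X : Type u} [MetricSpace X]

theorem dynDist_le {T : X → X} {n : ℕ} {x y : X} {ε : ℝ} (hε : 0 ≤ ε)
    (h : ∀ i < n, dist (T^[i] x) (T^[i] y) ≤ ε) : dynDist T n x y ≤ ε := by
  unfold dynDist
  refine Real.iSup_le (fun k => Real.iSup_le (fun hk => h k (Finset.mem_range.1 hk)) hε) hε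

theorem le_dynDist [CompactSpace X] (T : X → X) {n : ℕ} (x y : X) {i : ℕ} (hi : i < n) :
    dist (T^[i] x) (T^[i] y) ≤ dynDist T n x y := by
  unfold dynDist
  have hb : ∀ a b : X, dist a b ≤ Metric.diam (univ : Set X) := fun a b =>
    Metric.dist_le_diam_of_mem isCompact_univ.isBounded (mem_univ _) (mem_univ _)
  have h2 : dist (T^[i] x) (T^[i] y) = ⨆ (_ : i ∈ Finset.range n), dist (T^[i] x) (T^[i] y) := by
    rw [ciSup_pos (Finset.mem_range.2 hi)]
  rw [h2]
  refine le_ciSup (f := fun k => ⨆ (_ : k ∈ Finset.range n), dist (T^[k] x) (T^[k] y)) ?_ i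
  refine ⟨Metric.diam (univ : Set X), ?_⟩
  rintro _ ⟨k, rfl⟩
  exact Real.iSup_le (fun _ => hb _ _) Metric.diam_nonneg

/-- Uniform functional on a finite set. -/
noncomputable def unif (E : Finset X) : C(X, ℝ) → ℝ := fun g => (∑ x ∈ E, g x) / E.card

theorem unif_state {E : Finset X} (hE : E.Nonempty) : IsState (unif E) where
  add f g := by simp [unif, Finset.sum_add_distrib, add_div]
  nonneg f hf := div_nonneg (Finset.sum_nonneg fun x _ => hf x) (by positivity)
  one := by
    have : (E.card : ℝ) ≠ 0 := by exact_mod_cast hE.card_pos.ne'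
    simp [unif, this]

theorem log_card_le_Ent {T : X → X} {ε : ℝ} (hε : 0 ≤ ε) {n : ℕ} {E : Finset X}
    (hE : E.Nonempty) (hsep : ∀ x ∈ E, ∀ y ∈ E, x ≠ y → ε < dynDist T n x y)
    {Q : PU X} (hQ : Small T ε (Set.Iio n) Q) : Real.log E.card ≤ Ent (unif E) Q := by
  have hc : (0 : ℝ) < E.card := by exact_mod_cast hE.card_pos
  have h1 : ∀ k, ∑ x ∈ E, Q.φ k x ≤ 1 := by
    intro k
    by_cases h : ∃ x ∈ E, Q.φ k x ≠ 0
    · obtain ⟨x, hx, hxk⟩ := h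
      rw [Finset.sum_eq_single_of_mem x hx]
      · exact Q.le_one k x
      · intro y hy hyx
        by_contra hne
        exact absurd (hsep y hy x hx hyx) (not_lt.2 (dynDist_le hε fun i hi => hQ k y x hne hxk i hi))
    · push Not at h
      rw [Finset.sum_eq_zero h]; exact zero_le_one
  have hst := unif_state hE
  have h2 : ∀ k, unif E (Q.φ k) * Real.log E.card ≤ Real.negMulLog (unif E (Q.φ k)) := by
    intro k
    rcases eq_or_lt_of_le (Q.state_nonneg hst k) with h | h
    · rw [← h]; simp
    · have hle : unif E (Q.φ k) ≤ (E.card : ℝ)⁻¹ := by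
        unfold unif; rw [div_eq_mul_inv]
        exact mul_le_of_le_one_left (by positivity) (h1 k)
      have := Real.log_le_log h hle
      rw [Real.log_inv] at this
      unfold Real.negMulLog
      nlinarith
  calc Real.log E.card = ∑ k, unif E (Q.φ k) * Real.log E.card := by
        rw [← Finset.sum_mul, Q.sum_state hst, one_mul]
    _ ≤ _ := Finset.sum_le_sum fun k _ => h2 k

theorem sum_blocks (e : ℕ → ℝ) (m q : ℕ) :
    ∑ r ∈ Finset.range m, ∑ j ∈ Finset.range q, e (r + j * m) = ∑ k ∈ Finset.range (q * m), e k := by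
  induction q with
  | zero => simp
  | succ q ih =>
    simp_rw [Finset.sum_range_succ]
    rw [Finset.sum_add_distrib, ih, add_mul, one_mul, Finset.sum_range_add]
    simp_rw [add_comm]

theorem block_ineq {T : X → X} (hT : Continuous T) {ε : ℝ} (hε : 0 ≤ ε) {n : ℕ}
    {E : Finset X}
    (hE : E.Nonempty) (hsep : ∀ x ∈ E, ∀ y ∈ E, x ≠ y → ε < dynDist T n x y)
    {m : ℕ} (hm : 0 < m) {P : PU X} (hP : Small T ε (Set.Iio m) P) :
    m * Real.log E.card ≤ 2 * m * Real.log (Fintype.card P.κ)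
      + ∑ k ∈ Finset.range n, Ent (fun g => unif E (g.comp (itc hT k))) P := by
  set e : ℕ → ℝ := fun k => Ent (fun g => unif E (g.comp (itc hT k))) P with he
  set K := Real.log (Fintype.card P.κ) with hK
  have hst := unif_state hE
  have e0 : ∀ k, 0 ≤ e k := fun k => Ent_nonneg P (hst.comp _)
  have eK : ∀ k, e k ≤ K := fun k => Ent_le_log_card P (hst.comp _)
  set q := n / m + 1 with hq
  have hr : ∀ r ∈ Finset.range m, Real.log E.card ≤ K + ∑ j ∈ Finset.range q, e (r + j * m) := by
    intro r hr
    have hrm := Finset.mem_range.1 hr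
    obtain ⟨Q, hQ, hEnt⟩ := exists_blocks hT hP (0 :: (List.range q).map (fun j => r + j * m))
    have hQ' : Small T ε (Set.Iio n) Q := by
      refine hQ.mono ?_
      intro i hi
      have hi : i < n := hi
      by_cases hir : i < r
      · exact ⟨0, by simp, by omega, by omega⟩
      · refine ⟨r + (i - r) / m * m, ?_, ?_, ?_⟩
        · refine List.mem_cons_of_mem _ (List.mem_map.2 ⟨(i - r) / m, List.mem_range.2 ?_, rfl⟩)
          have : (i - r) / m ≤ n / m := Nat.div_le_div_right (by omega)
          omega
        · have := Nat.div_mul_le_self (i - r) m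
          omega
        · have := Nat.lt_div_mul_add (a := i - r) hm
          omega
    refine (log_card_le_Ent hε hE hsep hQ').trans ((hEnt _ hst).trans ?_)
    rw [List.map_cons, List.sum_cons, List.map_map]
    refine add_le_add (eK 0) (le_of_eq ?_)
    rw [Finset.sum_range]
    rw [← List.sum_ofFn, List.ofFn_eq_map]
    rw [← List.map_coe_finRange_eq_range, List.map_map]
    rfl
  have hsum := Finset.sum_le_sum hr
  rw [Finset.sum_add_distrib, sum_blocks] at hsum
  simp only [Finset.sum_const, Finset.card_range, nsmul_eq_mul] at hsum
  have hle : ∑ k ∈ Finset.range (q * m), e k ≤ ∑ k ∈ Finset.range (n + m), e k := by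
    refine Finset.sum_le_sum_of_subset_of_nonneg ?_ (fun i _ _ => e0 i)
    refine Finset.range_subset_range.2 ?_
    rw [hq, add_mul, one_mul]
    have := Nat.div_mul_le_self n m
    omega
  rw [Finset.sum_range_add] at hle
  have h3 : ∑ x ∈ Finset.range m, e (n + x) ≤ m * K := by
    calc _ ≤ ∑ x ∈ Finset.range m, K := Finset.sum_le_sum fun i _ => eK _
      _ = _ := by simp
  linarith

end

section
variable {X : Type u} [MetricSpace X] [CompactSpace X] [MeasurableSpace X] [BorelSpace X]

/-- Integration functional. -/
noncomputable def I (μ : Measure X) : C(X, ℝ) → ℝ := fun g => ∫ x, g x ∂μ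

theorem integrable_cont (μ : Measure X) [IsFiniteMeasure μ] (g : C(X, ℝ)) :
    Integrable (fun x => g x) μ :=
  g.continuous.integrable_of_hasCompactSupport (HasCompactSupport.of_compactSpace _)

theorem I_state (μ : Measure X) [IsProbabilityMeasure μ] : IsState (I μ) where
  add f g := by
    simp only [I, ContinuousMap.add_apply]
    exact integral_add (integrable_cont μ f) (integrable_cont μ g)
  nonneg f hf := integral_nonneg hf
  one := by simp [I]

theorem continuous_I (g : C(X, ℝ)) :
    Continuous (fun μ : ProbabilityMeasure X => I (μ : Measure X) g) := by
  rw [continuous_iff_continuousAt]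
  intro μ
  have := (ProbabilityMeasure.tendsto_iff_forall_integral_tendsto.1
    (tendsto_id (α := ProbabilityMeasure X) (x := 𝓝 μ)))
    (BoundedContinuousFunction.mkOfCompact g)
  exact this

theorem continuous_Ent (P : PU X) :
    Continuous (fun μ : ProbabilityMeasure X => Ent (I (μ : Measure X)) P) := by
  unfold Ent
  exact continuous_finsetSum _ fun k _ => Real.continuous_negMulLog.comp (continuous_I _)

/-- Invariance in terms of integrals. -/
def Inv {T : X → X} (hT : Continuous T) (μ : Measure X) : Prop :=
  ∀ g : C(X, ℝ), I μ (g.comp (itc hT 1)) = I μ g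

theorem measure_ext {μ ν : Measure X} [IsFiniteMeasure μ] [IsFiniteMeasure ν]
    (h : ∀ g : C(X, ℝ), I μ g = I ν g) : μ = ν :=
  ext_of_forall_integral_eq_of_IsFiniteMeasure fun f => h f.toContinuousMap

theorem Inv.measurePreserving {T : X → X} {hT : Continuous T} {μ : Measure X}
    [IsFiniteMeasure μ] (h : Inv hT μ) : MeasurePreserving T μ μ := by
  refine ⟨hT.measurable, ?_⟩
  refine measure_ext fun g => ?_
  rw [← h g]
  exact integral_map hT.aemeasurable g.continuous.aestronglyMeasurable

theorem inv_of_measurePreserving {T : X → X} (hT : Continuous T) {μ : Measure X}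
    (h : MeasurePreserving T μ μ) : Inv hT μ := by
  intro g
  conv_rhs => rw [← h.map_eq]
  exact (integral_map hT.aemeasurable g.continuous.aestronglyMeasurable).symm

theorem Inv.iterate {T : X → X} {hT : Continuous T} {μ : Measure X} (h : Inv hT μ) (t : ℕ)
    (g : C(X, ℝ)) : I μ (g.comp (itc hT t)) = I μ g := by
  induction t with
  | zero => rfl
  | succ t ih =>
    rw [← ih, ← h (g.comp (itc hT t))]
    rfl

theorem exists_PU {ι : Type u} [Fintype ι] (V : ι → Set X) (ho : ∀ i, IsOpen (V i))
    (hc : ⋃ i, V i = univ) : ∃ φ : ι → C(X, ℝ), (∀ i x, 0 ≤ φ i x) ∧ ∑ i, φ i = 1 ∧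
      ∀ i x, φ i x ≠ 0 → x ∈ V i := by
  obtain ⟨f, hf⟩ := PartitionOfUnity.exists_isSubordinate (isClosed_univ) V ho (hc ▸ subset_rfl)
  refine ⟨fun i => f i, fun i x => f.nonneg i x, ?_, fun i x hx => hf i (subset_tsupport _ hx)⟩
  ext x
  have := f.sum_eq_one (mem_univ x)
  rw [finsum_eq_sum_of_fintype] at this
  simpa using this

/-- The index set for the infimum defining `F`. -/
def Idx (T : X → X) (ε : ℝ) := {p : ℕ × PU X // 0 < p.1 ∧ Small T ε (Set.Iio p.1) p.2}

theorem nonempty_idx (T : X → X) {ε : ℝ} (hε : 0 < ε) : Nonempty (Idx T ε) := by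
  obtain ⟨t, -, ht, hcov⟩ := (isCompact_univ (X := X)).elim_finite_subcover_image
    (b := univ) (c := fun x => Metric.ball x (ε / 2)) (fun _ _ => Metric.isOpen_ball)
    (fun x _ => mem_iUnion₂.2 ⟨x, mem_univ _, Metric.mem_ball_self (by positivity)⟩)
  have := ht.fintype
  obtain ⟨φ, h0, h1, h2⟩ := exists_PU (fun x : t => Metric.ball (x : X) (ε / 2))
    (fun _ => Metric.isOpen_ball) (by
      refine eq_univ_of_univ_subset (hcov.trans ?_)
      rw [biUnion_eq_iUnion])
  refine ⟨⟨(1, ⟨t, this, φ, h0, h1⟩), one_pos, ?_⟩⟩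
  intro k x y hx hy i hi
  have hi : i < 1 := hi
  obtain rfl : i = 0 := by omega
  have hx := h2 k x hx
  have hy := h2 k y hy
  rw [Metric.mem_ball] at hx hy
  have := dist_triangle_right x y (k : X)
  simp only [Function.iterate_zero, id]
  linarith

/-- The entropy functional at scale `ε`. -/
noncomputable def F (T : X → X) (ε : ℝ) (L : C(X, ℝ) → ℝ) : ℝ :=
  ⨅ p : Idx T ε, Ent L p.1.2 / p.1.1

theorem F_bdd (T : X → X) (ε : ℝ) {L : C(X, ℝ) → ℝ} (hL : IsState L) :
    BddBelow (range fun p : Idx T ε => Ent L p.1.2 / p.1.1) := by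
  refine ⟨0, ?_⟩
  rintro _ ⟨p, rfl⟩
  exact div_nonneg (Ent_nonneg _ hL) (by positivity)

theorem F_le {T : X → X} {ε : ℝ} {L : C(X, ℝ) → ℝ} (hL : IsState L) {m : ℕ} (hm : 0 < m)
    {P : PU X} (hP : Small T ε (Set.Iio m) P) : F T ε L ≤ Ent L P / m :=
  ciInf_le (F_bdd T ε hL) (⟨(m, P), hm, hP⟩ : Idx T ε)

theorem le_F {T : X → X} {ε : ℝ} (hε : 0 < ε) {L : C(X, ℝ) → ℝ} {c : ℝ}
    (h : ∀ (m : ℕ) (P : PU X), 0 < m → Small T ε (Set.Iio m) P → c ≤ Ent L P / m) :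
    c ≤ F T ε L := by
  have := nonempty_idx T hε
  exact le_ciInf fun p => h _ _ p.2.1 p.2.2

theorem exists_lt_of_F_lt {T : X → X} {ε : ℝ} (hε : 0 < ε) {L : C(X, ℝ) → ℝ} {c : ℝ}
    (h : F T ε L < c) :
    ∃ (m : ℕ) (P : PU X), 0 < m ∧ Small T ε (Set.Iio m) P ∧ Ent L P / m < c := by
  have := nonempty_idx T hε
  obtain ⟨p, hp⟩ := exists_lt_of_ciInf_lt h
  exact ⟨p.1.1, p.1.2, p.2.1, p.2.2, hp⟩

theorem usc_F (T : X → X) (ε : ℝ) :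
    UpperSemicontinuous (fun μ : ProbabilityMeasure X => F T ε (I (μ : Measure X))) :=
  upperSemicontinuous_ciInf (fun μ => F_bdd T ε (I_state _))
    (fun p => ((continuous_Ent _).div_const _).upperSemicontinuous)

theorem exists_emp {ι : Type*} (s : Finset ι) (hs : s.Nonempty) (f : ι → X) :
    ∃ μ : ProbabilityMeasure X, ∀ g : C(X, ℝ),
      I (μ : Measure X) g = (∑ i ∈ s, g (f i)) / s.card := by
  have hc : (s.card : ENNReal) ≠ 0 := by exact_mod_cast hs.card_pos.ne'
  let μ : Measure X := (s.card : ENNReal)⁻¹ • ∑ i ∈ s, Measure.dirac (f i)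
  have hμ : IsProbabilityMeasure μ := ⟨by
    simp [μ]
    exact ENNReal.inv_mul_cancel hc (by simp)⟩
  refine ⟨⟨μ, hμ⟩, fun g => ?_⟩
  simp only [I, μ, ProbabilityMeasure.coe_mk]
  rw [integral_smul_measure, integral_finsetSum_measure (fun i _ => integrable_cont _ g)]
  simp [integral_dirac, div_eq_inv_mul]

theorem exists_emp_orbit {T : X → X} (hT : Continuous T) {ε : ℝ} (hε : 0 ≤ ε) {n : ℕ}
    (hn : 0 < n) {E : Finset X}
    (hE : E.Nonempty) (hsep : ∀ x ∈ E, ∀ y ∈ E, x ≠ y → ε < dynDist T n x y) :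
    ∃ μ : ProbabilityMeasure X,
      (∀ g : C(X, ℝ), |I (μ : Measure X) (g.comp (itc hT 1)) - I (μ : Measure X) g|
        ≤ 2 * ‖g‖ / n) ∧
      ∀ (m : ℕ) (P : PU X), 0 < m → Small T ε (Set.Iio m) P →
        m * Real.log E.card ≤ 2 * m * Real.log (Fintype.card P.κ)
          + n * Ent (I (μ : Measure X)) P := by
  obtain ⟨μ, hμ⟩ := exists_emp (Finset.range n ×ˢ E)
    (Finset.Nonempty.product (Finset.nonempty_range_iff.2 hn.ne') hE) (fun p => T^[p.1] p.2)
  have hn' : (0 : ℝ) < n := by exact_mod_cast hn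
  have hc : (0 : ℝ) < E.card := by exact_mod_cast hE.card_pos
  have hst := unif_state hE
  have key : ∀ g : C(X, ℝ), I (μ : Measure X) g
      = ∑ k ∈ Finset.range n, (n : ℝ)⁻¹ * unif E (g.comp (itc hT k)) := by
    intro g
    rw [hμ, Finset.sum_product, Finset.card_product, Finset.card_range, ← Finset.mul_sum]
    simp only [unif]
    rw [← Finset.sum_div]
    simp only [ContinuousMap.comp_apply, itc, ContinuousMap.coe_mk]
    push_cast
    field_simp
  refine ⟨μ, fun g => ?_, fun m P hm hP => ?_⟩
  · have hb : ∀ k, |unif E (g.comp (itc hT k))| ≤ ‖g‖ := by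
      intro k
      unfold unif
      rw [abs_div, abs_of_pos hc, div_le_iff₀ hc]
      refine (Finset.abs_sum_le_sum_abs _ _).trans ?_
      refine (Finset.sum_le_card_nsmul _ _ ‖g‖ (fun x _ => g.norm_coe_le_norm _)).trans ?_
      rw [nsmul_eq_mul, mul_comm]
    have : I (μ : Measure X) (g.comp (itc hT 1)) - I (μ : Measure X) g
        = (n : ℝ)⁻¹ * (unif E (g.comp (itc hT n)) - unif E (g.comp (itc hT 0))) := by
      rw [key, key, ← Finset.sum_sub_distrib,
        ← Finset.sum_range_sub (fun k => unif E (g.comp (itc hT k))), Finset.mul_sum]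
      refine Finset.sum_congr rfl fun k _ => ?_
      rw [mul_sub]
      congr 3
      ext x
      simp only [ContinuousMap.comp_apply, itc, ContinuousMap.coe_mk]
      rw [Function.iterate_succ_apply' T k x]
      rfl
    rw [this, abs_mul, abs_of_pos (inv_pos.2 hn'), div_eq_inv_mul]
    refine mul_le_mul_of_nonneg_left ?_ (by positivity)
    have h1 := abs_le.1 (hb n)
    have h2 := abs_le.1 (hb 0)
    rw [abs_le]; constructor <;> linarith [h1.1, h1.2, h2.1, h2.2]
  · refine (block_ineq hT hε hE hsep hm hP).trans (add_le_add le_rfl ?_)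
    unfold Ent
    rw [Finset.sum_comm, Finset.mul_sum]
    refine Finset.sum_le_sum fun i _ => ?_
    have := Real.concaveOn_negMulLog.le_map_sum (t := Finset.range n) (w := fun _ => (n : ℝ)⁻¹)
      (p := fun k => unif E ((P.φ i).comp (itc hT k))) (fun _ _ => by positivity)
      (by simp [hn'.ne']) (fun k _ => P.state_nonneg (hst.comp (itc hT k)) i)
    simp only [smul_eq_mul] at this
    rw [← key, ← Finset.mul_sum] at this
    rw [← div_le_iff₀' hn', div_eq_inv_mul]
    exact this

theorem exists_inv_measure [Nonempty X] {T : X → X} (hT : Continuous T) {ε : ℝ} (hε : 0 < ε)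
    {c : ℝ} (hc : (c : EReal) < sepEnt T univ ε) :
    ∃ μ : ProbabilityMeasure X, Inv hT (μ : Measure X) ∧ c ≤ F T ε (I (μ : Measure X)) := by
  have hfreq := frequently_lt_of_lt_limsup (by isBoundedDefault) hc
  set A : Set ℕ := {n | (c : EReal) < ((Real.log (sepNum T n univ ε) / n : ℝ) : EReal)} with hA
  have hex : ∀ n : ℕ, ∃ μ : ProbabilityMeasure X, n ∈ A → 0 < n →
      (∀ g : C(X, ℝ), |I (μ : Measure X) (g.comp (itc hT 1)) - I (μ : Measure X) g|
        ≤ 2 * ‖g‖ / n) ∧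
      ∀ (m : ℕ) (P : PU X), 0 < m → Small T ε (Set.Iio m) P →
        c ≤ 2 * Real.log (Fintype.card P.κ) / n + Ent (I (μ : Measure X)) P / m := by
    intro n
    by_cases hn : n ∈ A ∧ 0 < n
    swap
    · obtain ⟨x⟩ := ‹Nonempty X›
      exact ⟨⟨Measure.dirac x, inferInstance⟩, fun h1 h2 => absurd ⟨h1, h2⟩ hn⟩
    obtain ⟨hnA, hn⟩ := hn
    have hnA : (c : EReal) < ((Real.log (sepNum T n univ ε) / n : ℝ) : EReal) := hnA
    rw [EReal.coe_lt_coe_iff] at hnA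
    have hn' : (0 : ℝ) < n := by exact_mod_cast hn
    have hE : ∃ E : Finset X, E.Nonempty ∧
        (∀ x ∈ E, ∀ y ∈ E, x ≠ y → ε < dynDist T n x y) ∧
        Real.log E.card = Real.log (sepNum T n univ ε) := by
      by_cases h0 : sepNum T n univ ε = 0
      · obtain ⟨x⟩ := ‹Nonempty X›
        refine ⟨{x}, by simp, ?_, by simp [h0]⟩
        intro a ha b hb hab
        rw [Finset.mem_singleton] at ha hb
        exact absurd (ha.trans hb.symm) hab
      · have hmem := Nat.sSup_mem (s := {m | ∃ E : Finset X, (E : Set X) ⊆ univ ∧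
          (∀ x ∈ E, ∀ y ∈ E, x ≠ y → ε < dynDist T n x y) ∧ E.card = m})
          ⟨0, ∅, by simp⟩ (by
            by_contra hb
            exact h0 (Nat.sSup_of_not_bddAbove hb))
        obtain ⟨E, -, h2, h3⟩ := hmem
        have h3 : E.card = sepNum T n univ ε := h3
        refine ⟨E, ?_, h2, by rw [h3]⟩
        rw [← Finset.card_pos, h3]; omega
    obtain ⟨E, hE, hsep, hlog⟩ := hE
    obtain ⟨μ, h1, h2⟩ := exists_emp_orbit hT hε.le hn hE hsep
    refine ⟨μ, fun _ _ => ⟨h1, fun m P hm hP => ?_⟩⟩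
    have hm' : (0 : ℝ) < m := by exact_mod_cast hm
    have h3 := h2 m P hm hP
    rw [hlog] at h3
    have h4 : c * n < Real.log (sepNum T n univ ε) := (lt_div_iff₀ hn').1 hnA
    have h5 : m * (c * n) ≤ 2 * m * Real.log (Fintype.card P.κ) + n * Ent (I (μ : Measure X)) P :=
      (mul_le_mul_of_nonneg_left h4.le hm'.le).trans h3
    have h6 : 2 * Real.log (Fintype.card P.κ) / n + Ent (I (μ : Measure X)) P / m
        = (2 * m * Real.log (Fintype.card P.κ) + n * Ent (I (μ : Measure X)) P) / (m * n) := by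
      field_simp
    rw [h6, le_div_iff₀ (by positivity)]
    linarith
  choose μ hμ using hex
  have hne : (atTop ⊓ 𝓟 A : Filter ℕ).NeBot := by
    rw [← frequently_mem_iff_neBot]
    exact hfreq
  let W : Ultrafilter ℕ := Ultrafilter.of (atTop ⊓ 𝓟 A)
  have hW : (W : Filter ℕ) ≤ atTop ⊓ 𝓟 A := Ultrafilter.of_le _
  have hWt : (W : Filter ℕ) ≤ atTop := hW.trans inf_le_left
  have hWA : ∀ᶠ n in (W : Filter ℕ), n ∈ A := (hW.trans inf_le_right) (mem_principal_self A)
  have hW0 : ∀ᶠ n in (W : Filter ℕ), 0 < n := hWt (eventually_gt_atTop 0)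
  obtain ⟨ν, -, hν⟩ := (isCompact_univ (X := ProbabilityMeasure X)).ultrafilter_le_nhds (W.map μ)
    (by simp)
  have hν : Tendsto μ W (𝓝 ν) := hν
  have hinv : ∀ C : ℝ, Tendsto (fun n : ℕ => C / n) W (𝓝 0) := fun C =>
    (tendsto_const_div_atTop_nhds_zero_nat C).mono_left hWt
  refine ⟨ν, fun g => ?_, le_F hε fun m P hm hP => ?_⟩
  · have t1 := ((continuous_I (g.comp (itc hT 1))).tendsto ν).comp hν
    have t2 := ((continuous_I g).tendsto ν).comp hν
    have t3 := (t1.sub t2).abs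
    have := le_of_tendsto_of_tendsto t3 (hinv (2 * ‖g‖)) (by
      filter_upwards [hWA, hW0] with n h1 h2
      exact (hμ n h1 h2).1 g)
    exact sub_eq_zero.1 (abs_nonpos_iff.1 this)
  · have t1 := (((continuous_Ent P).tendsto ν).comp hν).div_const (m : ℝ)
    have t2 := (hinv (2 * Real.log (Fintype.card P.κ))).add t1
    rw [zero_add] at t2
    refine ge_of_tendsto t2 ?_
    filter_upwards [hWA, hW0] with n h1 h2
    exact (hμ n h1 h2).2 m P hm hP

end

end MMD

namespace MMD

universe u

section
variable {X : Type u} [MetricSpace X] [CompactSpace X] [MeasurableSpace X] [BorelSpace X]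

theorem exists_power {T : X → X} {hT : Continuous T} {μ : Measure X} [IsProbabilityMeasure μ]
    (h : Inv hT μ) {ε : ℝ} {m : ℕ} {P : PU X} (hP : Small T ε (Set.Iio m) P) (k : ℕ) :
    ∃ Q : PU X, Small T ε (Set.Iio (k * m)) Q ∧ Ent (I μ) Q ≤ k * Ent (I μ) P := by
  obtain ⟨Q, hQ, hE⟩ := exists_blocks hT hP ((List.range k).map (· * m))
  refine ⟨Q, hQ.mono ?_, (hE _ (I_state μ)).trans ?_⟩
  · intro i hi
    simp only [mem_Iio] at hi
    have hm : 0 < m := by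
      rcases Nat.eq_zero_or_pos m with h | h
      · simp [h] at hi
      · exact h
    refine ⟨i / m * m, List.mem_map.2 ⟨i / m, List.mem_range.2 ?_, rfl⟩, Nat.div_mul_le_self i m, ?_⟩
    · exact (Nat.div_lt_iff_lt_mul hm).2 hi
    · have := Nat.div_add_mod i m
      have h2 := Nat.mod_lt i hm
      rw [mul_comm] at this
      omega
  · have : ∀ t, Ent (fun g => I μ (g.comp (itc hT t))) P = Ent (I μ) P := by
      intro t
      have : (fun g => I μ (g.comp (itc hT t))) = I μ := funext fun g => h.iterate t g
      rw [this]
    simp [this, Function.comp_def]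

/-- Mixture of two partitions of unity. -/
def PU.mix (ρ : C(X, ℝ)) (h0 : ∀ x, 0 ≤ ρ x) (h1 : ∀ x, ρ x ≤ 1) (P Q : PU X) : PU X where
  κ := P.κ ⊕ Q.κ
  ft := inferInstance
  φ := Sum.elim (fun i => ρ * P.φ i) (fun j => (1 - ρ) * Q.φ j)
  nonneg k x := by
    rcases k with i | j
    · exact mul_nonneg (h0 x) (P.nonneg i x)
    · exact mul_nonneg (by simpa using h1 x) (Q.nonneg j x)
  sum_one := by
    simp [Fintype.sum_sum_type, ← Finset.mul_sum, P.sum_one, Q.sum_one]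

theorem Small.mix {T : X → X} {ε : ℝ} {S : Set ℕ} {P Q : PU X} (h : Small T ε S P)
    (h' : Small T ε S Q) (ρ : C(X, ℝ)) (h0 : ∀ x, 0 ≤ ρ x) (h1 : ∀ x, ρ x ≤ 1) :
    Small T ε S (PU.mix ρ h0 h1 P Q) := by
  rintro (k | k) x y hx hy i hi
  · exact h k x y (right_ne_zero_of_mul (a := ρ x) hx) (right_ne_zero_of_mul (a := ρ y) hy) i hi
  · exact h' k x y (right_ne_zero_of_mul (a := (1 - ρ) x) hx)
      (right_ne_zero_of_mul (a := (1 - ρ) y) hy) i hi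

theorem clamp_aux (a y : ℝ) (ha : a = 1 ∨ a = 0) : |a - max 0 (min 1 y)| ≤ |a - y| := by
  have h : a = max 0 (min 1 a) := by rcases ha with rfl | rfl <;> simp
  conv_lhs => rw [h]
  refine (abs_max_sub_max_le_max _ _ _ _).trans ?_
  simp only [sub_self, abs_zero]
  refine max_le (abs_nonneg _) ((abs_min_sub_min_le_max _ _ _ _).trans ?_)
  simp

theorem exists_rho (μ : Measure X) [IsProbabilityMeasure μ] {A : Set X} (hA : MeasurableSet A) :
    ∃ ρ : ℕ → C(X, ℝ), (∀ n x, 0 ≤ ρ n x) ∧ (∀ n x, ρ n x ≤ 1) ∧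
      ∀ g : C(X, ℝ), Tendsto (fun n => I μ (ρ n * g)) atTop (𝓝 (∫ x in A, g x ∂μ)) := by
  have hint : Integrable (A.indicator (fun _ => (1 : ℝ))) μ := (integrable_const 1).indicator hA
  have h : ∀ n : ℕ, ∃ ρ : C(X, ℝ), (∀ x, 0 ≤ ρ x) ∧ (∀ x, ρ x ≤ 1) ∧
      ∫ x, |A.indicator (fun _ => (1 : ℝ)) x - ρ x| ∂μ ≤ 1 / ((n : ℝ) + 1) := by
    intro n
    obtain ⟨f, hf, hfi⟩ := hint.exists_boundedContinuous_integral_sub_le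
      (ε := 1 / ((n : ℝ) + 1)) (by positivity)
    refine ⟨⟨fun x => max 0 (min 1 (f x)), by fun_prop⟩, fun x => le_max_left _ _,
      fun x => max_le zero_le_one (min_le_left _ _), le_trans ?_ hf⟩
    refine integral_mono_of_nonneg (Eventually.of_forall fun x => abs_nonneg _)
      (hint.sub hfi).norm (Eventually.of_forall fun x => ?_)
    simp only [ContinuousMap.coe_mk, Real.norm_eq_abs]
    by_cases hx : x ∈ A
    · simp only [indicator_of_mem hx]
      exact clamp_aux _ _ (Or.inl rfl)
    · simp only [indicator_of_notMem hx]
      exact clamp_aux _ _ (Or.inr rfl)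
  choose ρ h0 h1 h2 using h
  refine ⟨ρ, h0, h1, fun g => ?_⟩
  rw [tendsto_iff_norm_sub_tendsto_zero]
  have hb : ∀ n : ℕ, ‖I μ (ρ n * g) - ∫ x in A, g x ∂μ‖ ≤ ‖g‖ * (1 / ((n : ℝ) + 1)) := by
    intro n
    rw [← integral_indicator hA]
    have hi : ∀ x, A.indicator (fun x => g x) x = A.indicator (fun _ => (1 : ℝ)) x * g x := by
      intro x
      by_cases hx : x ∈ A <;> simp [hx]
    have hint2 : Integrable (A.indicator fun x => g x) μ := (integrable_cont μ g).indicator hA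
    unfold I
    rw [← integral_sub (integrable_cont μ _) hint2]
    refine (norm_integral_le_integral_norm _).trans ?_
    refine le_trans ?_ (mul_le_mul_of_nonneg_left (h2 n) (norm_nonneg g))
    rw [← integral_const_mul]
    refine integral_mono_of_nonneg (Eventually.of_forall fun x => norm_nonneg _)
      (((hint.sub (integrable_cont μ (ρ n))).norm).const_mul _) (Eventually.of_forall fun x => ?_)
    simp only [hi, ContinuousMap.mul_apply]
    rw [← sub_mul, norm_mul, mul_comm, Real.norm_eq_abs (ρ n x - _), abs_sub_comm]
    exact mul_le_mul_of_nonneg_right (g.norm_coe_le_norm x) (abs_nonneg _)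
  refine squeeze_zero (fun _ => norm_nonneg _) hb ?_
  simpa using tendsto_one_div_add_atTop_nhds_zero_nat.const_mul ‖g‖

theorem sum_negMulLog_mul {P : PU X} {L : C(X, ℝ) → ℝ} (hL : IsState L) (t : ℝ) :
    ∑ k, Real.negMulLog (t * L (P.φ k)) = Real.negMulLog t + t * Ent L P := by
  simp_rw [Real.negMulLog_mul, Finset.sum_add_distrib, ← Finset.mul_sum, ← Finset.sum_mul,
    P.sum_state hL, one_mul]
  rfl

theorem I_cond (μ : Measure X) [IsProbabilityMeasure μ] {A : Set X} (hA : μ.real A ≠ 0)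
    (g : C(X, ℝ)) : ∫ x in A, g x ∂μ = μ.real A * I (ProbabilityTheory.cond μ A) g := by
  unfold I ProbabilityTheory.cond
  rw [integral_smul_measure, ENNReal.toReal_inv, smul_eq_mul, ← mul_assoc]
  have : (μ A).toReal = μ.real A := rfl
  rw [this, mul_inv_cancel₀ hA, one_mul]

theorem exists_mix (μ : Measure X) [IsProbabilityMeasure μ] {A : Set X} (hA : MeasurableSet A)
    (h0 : μ.real A ≠ 0) (h1 : μ.real Aᶜ ≠ 0) {T : X → X} {ε : ℝ} {S : Set ℕ} {P Q : PU X}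
    (hP : Small T ε S P) (hQ : Small T ε S Q) :
    ∃ R : PU X, Small T ε S R ∧ Ent (I μ) R ≤ μ.real A * Ent (I (ProbabilityTheory.cond μ A)) P
      + μ.real Aᶜ * Ent (I (ProbabilityTheory.cond μ Aᶜ)) Q + 1 := by
  have hμ0 : μ A ≠ 0 := fun h => h0 (by simp [measureReal_def, h])
  have hμ1 : μ Aᶜ ≠ 0 := fun h => h1 (by simp [measureReal_def, h])
  have := ProbabilityTheory.cond_isProbabilityMeasure hμ0
  have := ProbabilityTheory.cond_isProbabilityMeasure hμ1
  obtain ⟨ρ, hr0, hr1, hlim⟩ := exists_rho μ hA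
  have hlim2 : ∀ g : C(X, ℝ), Tendsto (fun n => I μ ((1 - ρ n) * g)) atTop
      (𝓝 (∫ x in Aᶜ, g x ∂μ)) := by
    intro g
    have e1 : ∀ n, I μ ((1 - ρ n) * g) = I μ g - I μ (ρ n * g) := by
      intro n
      have := (I_state μ).add ((1 - ρ n) * g) (ρ n * g)
      rw [← add_mul, sub_add_cancel, one_mul] at this
      linarith
    have e2 : ∫ x in Aᶜ, g x ∂μ = I μ g - ∫ x in A, g x ∂μ := by
      have := integral_add_compl hA (integrable_cont μ g)
      unfold I
      linarith
    simp_rw [e1, e2]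
    exact (hlim g).const_sub _
  have hl : Tendsto (fun n => Ent (I μ) (PU.mix (ρ n) (hr0 n) (hr1 n) P Q)) atTop
      (𝓝 (∑ k, Real.negMulLog (∫ x in A, P.φ k x ∂μ)
        + ∑ k, Real.negMulLog (∫ x in Aᶜ, Q.φ k x ∂μ))) := by
    have : ∀ n, Ent (I μ) (PU.mix (ρ n) (hr0 n) (hr1 n) P Q) =
        ∑ k, Real.negMulLog (I μ (ρ n * P.φ k)) + ∑ k, Real.negMulLog (I μ ((1 - ρ n) * Q.φ k)) := by
      intro n
      exact Fintype.sum_sum_type (α₁ := P.κ) (α₂ := Q.κ) _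
    simp_rw [this]
    refine Tendsto.add (tendsto_finsetSum _ fun k _ => ?_) (tendsto_finsetSum _ fun k _ => ?_)
    · exact (Real.continuous_negMulLog.tendsto _).comp (hlim _)
    · exact (Real.continuous_negMulLog.tendsto _).comp (hlim2 _)
  simp_rw [I_cond μ h0, I_cond μ h1] at hl
  rw [sum_negMulLog_mul (I_state _), sum_negMulLog_mul (I_state _)] at hl
  have hb : Real.negMulLog (μ.real A) + Real.negMulLog (μ.real Aᶜ) < 1 := by
    rw [probReal_compl_eq_one_sub hA, ← Real.binEntropy_eq_negMulLog_add_negMulLog_one_sub]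
    exact Real.binEntropy_le_log_two.trans_lt (by linarith [Real.log_two_lt_d9])
  obtain ⟨n, hn⟩ := (hl.eventually (gt_mem_nhds (a := μ.real A *
    Ent (I (ProbabilityTheory.cond μ A)) P
      + μ.real Aᶜ * Ent (I (ProbabilityTheory.cond μ Aᶜ)) Q + 1) (by linarith))).exists
  exact ⟨_, hP.mix hQ _ _ _, hn.le⟩

theorem inv_cond {T : X → X} {hT : Continuous T} {μ : Measure X} [IsProbabilityMeasure μ]
    (h : Inv hT μ) {A : Set X} (hA : MeasurableSet A) (hTA : T ⁻¹' A = A) :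
    Inv hT (ProbabilityTheory.cond μ A) := by
  refine inv_of_measurePreserving hT ?_
  have := h.measurePreserving.restrict_preimage hA
  rw [hTA] at this
  exact this.smul_measure _

theorem F_convex {T : X → X} {hT : Continuous T} {μ : Measure X} [IsProbabilityMeasure μ]
    (h : Inv hT μ) {A : Set X} (hA : MeasurableSet A) (hTA : T ⁻¹' A = A) 
    (h0 : μ.real A ≠ 0) (h1 : μ.real Aᶜ ≠ 0) {ε : ℝ} (hε : 0 < ε) :
    F T ε (I μ) ≤ μ.real A * F T ε (I (ProbabilityTheory.cond μ A))
      + μ.real Aᶜ * F T ε (I (ProbabilityTheory.cond μ Aᶜ)) := by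
  have hμ0 : μ A ≠ 0 := fun h => h0 (by simp [measureReal_def, h])
  have hμ1 : μ Aᶜ ≠ 0 := fun h => h1 (by simp [measureReal_def, h])
  have := ProbabilityTheory.cond_isProbabilityMeasure hμ0
  have := ProbabilityTheory.cond_isProbabilityMeasure hμ1
  have hs : μ.real A + μ.real Aᶜ = 1 := by rw [probReal_compl_eq_one_sub hA]; ring
  refine le_of_forall_pos_le_add fun γ hγ => ?_
  obtain ⟨m₁, P, hm₁, hP, hPe⟩ := exists_lt_of_F_lt (T := T) hε
    (lt_add_of_pos_right (F T ε (I (ProbabilityTheory.cond μ A))) (half_pos hγ))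
  obtain ⟨m₂, Q, hm₂, hQ, hQe⟩ := exists_lt_of_F_lt (T := T) hε
    (lt_add_of_pos_right (F T ε (I (ProbabilityTheory.cond μ Aᶜ))) (half_pos hγ))
  obtain ⟨k, hk⟩ := exists_nat_gt (2 / γ)
  have hk0 : (0 : ℝ) < k := lt_trans (by positivity) hk
  obtain ⟨P', hP', hPe'⟩ := exists_power (inv_cond h hA hTA) hP (m₂ * k)
  obtain ⟨Q', hQ', hQe'⟩ := exists_power (inv_cond h hA.compl (by rw [preimage_compl, hTA])) hQ
    (m₁ * k)
  rw [show m₂ * k * m₁ = m₁ * m₂ * k by ring] at hP'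
  rw [show m₁ * k * m₂ = m₁ * m₂ * k by ring] at hQ'
  obtain ⟨R, hR, hRe⟩ := exists_mix μ hA h0 h1 hP' hQ'
  have hk0' : 0 < k := by exact_mod_cast hk0
  have := F_le (I_state μ) (by positivity) hR
  refine this.trans ?_
  have h1' : (1 : ℝ) ≤ m₁ := by exact_mod_cast hm₁
  have h2' : (1 : ℝ) ≤ m₂ := by exact_mod_cast hm₂
  rw [div_lt_iff₀ (by positivity)] at hPe hQe
  push_cast at *
  have hM : 0 < (m₁ : ℝ) * m₂ * k := by positivity
  rw [div_le_iff₀ hM]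
  set t := μ.real A
  set s := μ.real Aᶜ
  have ht : 0 ≤ t := measureReal_nonneg
  have hs0 : 0 ≤ s := measureReal_nonneg
  have hg : 1 ≤ γ / 2 * (m₁ * m₂ * k) := by
    have a1 : 2 ≤ γ * k := by
      rw [div_lt_iff₀ hγ] at hk; linarith
    have a2 : (k : ℝ) ≤ m₁ * m₂ * k := le_mul_of_one_le_left hk0.le (by nlinarith)
    nlinarith
  have b1 := mul_le_mul_of_nonneg_left (hPe'.trans (mul_le_mul_of_nonneg_left hPe.le
    (by positivity))) ht
  have b2 := mul_le_mul_of_nonneg_left (hQe'.trans (mul_le_mul_of_nonneg_left hQe.le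
    (by positivity))) hs0
  have hs' : s = 1 - t := by linarith
  calc _ ≤ _ := hRe
    _ ≤ _ := add_le_add (add_le_add b1 b2) hg
    _ = _ := by rw [hs']; ring

theorem max_aux {t s a x y : ℝ} (ht : 0 < t) (hs : 0 < s) (hts : t + s = 1)
    (h : a ≤ t * x + s * y) (hy : y ≤ a) : a ≤ x := by
  by_contra hlt
  push Not at hlt
  have h1 := mul_lt_mul_of_pos_left hlt ht
  have h2 := mul_le_mul_of_nonneg_left hy hs.le
  have h3 : t * a + s * a = a := by rw [← add_mul, hts, one_mul]
  linarith

theorem exists_not_ergodic {T : X → X} {μ : Measure X} (hmp : MeasurePreserving T μ μ)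
    (h : ¬ Ergodic T μ) : ∃ A, MeasurableSet A ∧ T ⁻¹' A = A ∧ μ A ≠ 0 ∧ μ Aᶜ ≠ 0 := by
  by_contra hcon
  push Not at hcon
  refine h ⟨hmp, ⟨fun A hA hTA => ?_⟩⟩
  rw [Filter.eventuallyConst_set]
  by_cases h0 : μ A = 0
  · exact Or.inr (measure_eq_zero_iff_ae_notMem.1 h0)
  · exact Or.inl (mem_ae_iff.2 (hcon A hA hTA h0))

theorem not_extreme {T : X → X} {hT : Continuous T} {μ : Measure X} [IsProbabilityMeasure μ]
    (hμ : Inv hT μ) (h : ¬ Ergodic T μ) {ε a : ℝ} (hε : 0 < ε) (ha : a ≤ F T ε (I μ))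
    (hmax : ∀ ν : Measure X, IsProbabilityMeasure ν → Inv hT ν → F T ε (I ν) ≤ a) :
    ∃ (μ₁ μ₂ : Measure X) (t s : ℝ), IsProbabilityMeasure μ₁ ∧ IsProbabilityMeasure μ₂ ∧
      Inv hT μ₁ ∧ Inv hT μ₂ ∧ a ≤ F T ε (I μ₁) ∧ a ≤ F T ε (I μ₂) ∧ 0 < t ∧ 0 < s ∧ t + s = 1 ∧
      (∀ g, t * I μ₁ g + s * I μ₂ g = I μ g) ∧ μ₁ ≠ μ := by
  obtain ⟨A, hA, hTA, hμ0, hμ1⟩ := exists_not_ergodic hμ.measurePreserving h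
  have h0 : μ.real A ≠ 0 := by
    rw [measureReal_def]; exact ENNReal.toReal_ne_zero.2 ⟨hμ0, measure_ne_top _ _⟩
  have h1 : μ.real Aᶜ ≠ 0 := by
    rw [measureReal_def]; exact ENNReal.toReal_ne_zero.2 ⟨hμ1, measure_ne_top _ _⟩
  have i0 := ProbabilityTheory.cond_isProbabilityMeasure hμ0
  have i1 := ProbabilityTheory.cond_isProbabilityMeasure hμ1
  have hconv := F_convex hμ hA hTA h0 h1 hε
  have v0 := inv_cond hμ hA hTA
  have v1 := inv_cond hμ hA.compl (by rw [preimage_compl, hTA])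
  have l1 := hmax _ i0 v0
  have l2 := hmax _ i1 v1
  have hs : μ.real A + μ.real Aᶜ = 1 := by
    rw [probReal_compl_eq_one_sub hA]; ring
  have p0 : 0 < μ.real A := lt_of_le_of_ne measureReal_nonneg (Ne.symm h0)
  have p1 : 0 < μ.real Aᶜ := lt_of_le_of_ne measureReal_nonneg (Ne.symm h1)
  refine ⟨_, _, _, _, i0, i1, v0, v1, max_aux p0 p1 hs (ha.trans hconv) l2,
    max_aux p1 p0 (by rw [add_comm, hs]) (by rw [add_comm]; exact ha.trans hconv) l1, p0, p1, hs,
    fun g => ?_, fun heq => ?_⟩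
  · rw [← I_cond _ h0, ← I_cond _ h1]
    exact integral_add_compl hA (integrable_cont _ g)
  · apply hμ1
    rw [← heq, ProbabilityTheory.cond_apply hA]
    simp

theorem exists_max {T : X → X} (hT : Continuous T) {ε : ℝ}
    {μ₀ : ProbabilityMeasure X} (hμ₀ : Inv hT (μ₀ : Measure X)) :
    ∃ (a : ℝ) (M : Set (ProbabilityMeasure X)), IsCompact M ∧ M.Nonempty ∧
      F T ε (I (μ₀ : Measure X)) ≤ a ∧
      (∀ ν : Measure X, IsProbabilityMeasure ν → Inv hT ν → F T ε (I ν) ≤ a) ∧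
      ∀ μ, μ ∈ M ↔ Inv hT (μ : Measure X) ∧ a ≤ F T ε (I (μ : Measure X)) := by
  have hKc : IsClosed {μ : ProbabilityMeasure X | Inv hT (μ : Measure X)} := by
    have : {μ : ProbabilityMeasure X | Inv hT (μ : Measure X)} =
        ⋂ g : C(X, ℝ), {μ : ProbabilityMeasure X |
        I (μ : Measure X) (g.comp (itc hT 1)) = I (μ : Measure X) g} := by
      ext μ; simp [Inv]
    rw [this]
    exact isClosed_iInter fun g => isClosed_eq (continuous_I _) (continuous_I _)
  obtain ⟨ν, hν, hmax⟩ := ((usc_F T ε).upperSemicontinuousOn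
    {μ : ProbabilityMeasure X | Inv hT (μ : Measure X)}).exists_isMaxOn ⟨μ₀, hμ₀⟩ hKc.isCompact
  rw [isMaxOn_iff] at hmax
  have hc2 : IsClosed {μ : ProbabilityMeasure X |
      F T ε (I (ν : Measure X)) ≤ F T ε (I (μ : Measure X))} := (usc_F T ε).isClosed_preimage _
  have hc3 : IsCompact ({μ : ProbabilityMeasure X | Inv hT (μ : Measure X)} ∩
    {μ | F T ε (I (ν : Measure X)) ≤ F T ε (I (μ : Measure X))}) := (hKc.inter hc2).isCompact
  refine ⟨F T ε (I (ν : Measure X)), _, hc3, ⟨ν, hν, le_refl (F T ε (I (ν : Measure X)))⟩, hmax _ hμ₀, ?_, ?_⟩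
  · intro ν' hν' hi
    exact hmax ⟨ν', hν'⟩ hi
  · intro μ
    exact Iff.rfl

theorem exists_extreme {M : Set (ProbabilityMeasure X)} (hM : IsCompact M) (hne : M.Nonempty) :
    ∃ μ ∈ M, ∀ μ₁ ∈ M, ∀ μ₂ ∈ M, ∀ t s : ℝ, 0 < t → 0 < s → t + s = 1 →
      (∀ g, t * I (μ₁ : Measure X) g + s * I (μ₂ : Measure X) g = I (μ : Measure X) g) →
      (μ₁ : Measure X) = μ := by
  have hΦ : Continuous (fun μ : ProbabilityMeasure X => I (μ : Measure X)) :=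
    continuous_pi fun g => continuous_I g
  obtain ⟨x, hx⟩ := (hM.image hΦ).extremePoints_nonempty (hne.image _)
  rw [mem_extremePoints] at hx
  obtain ⟨⟨μ, hμ, rfl⟩, hext⟩ := hx
  refine ⟨μ, hμ, fun μ₁ h1 μ₂ h2 t s ht hs hts hg => ?_⟩
  have := (hext _ ⟨μ₁, h1, rfl⟩ _ ⟨μ₂, h2, rfl⟩ ⟨t, s, ht, hs, hts, funext hg⟩).1
  exact measure_ext fun g => congrFun this g

theorem exists_ergodic [Nonempty X] {T : X → X} (hT : Continuous T) {ε : ℝ} (hε : 0 < ε)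
    {c : ℝ} (hc : (c : EReal) < sepEnt T univ ε) :
    ∃ μ : Measure X, μ ∈ ergodicMeasures T ∧ c ≤ F T ε (I μ) := by
  obtain ⟨μ₀, hμ₀, hcμ₀⟩ := exists_inv_measure hT hε hc
  obtain ⟨a, M, hMc, hMne, h0a, hmax, hiff⟩ := exists_max hT (ε := ε) hμ₀
  obtain ⟨μ, hμM, hext⟩ := exists_extreme hMc hMne
  obtain ⟨hμK, hμa⟩ := (hiff μ).1 hμM
  refine ⟨μ, ⟨inferInstance, ?_⟩, (hcμ₀.trans h0a).trans hμa⟩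
  by_contra hne
  obtain ⟨μ₁, μ₂, t, s, i1, i2, v1, v2, m1, m2, ht, hs, hts, hg, hne1⟩ :=
    not_extreme hμK hne hε hμa hmax
  exact hne1 (hext ⟨μ₁, i1⟩ ((hiff _).2 ⟨v1, m1⟩) ⟨μ₂, i2⟩ ((hiff _).2 ⟨v2, m2⟩) t s ht hs hts hg)

end

end MMD

namespace MMD

universe u

section
variable {X : Type u} [MetricSpace X]

/-- `A` is covered by at most `N` open sets that are `ε`-small for times `< n`. -/
def Cov (T : X → X) (ε : ℝ) (n : ℕ) (A : Set X) (N : ℝ) : Prop :=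
  ∃ C : Finset (Set X), (∀ V ∈ C, IsOpen V ∧ ∀ x ∈ V, ∀ y ∈ V, ∀ i < n,
    dist (T^[i] x) (T^[i] y) ≤ ε) ∧ A ⊆ ⋃₀ (C : Set (Set X)) ∧ (C.card : ℝ) ≤ N

theorem Cov.mono {T : X → X} {ε : ℝ} {n n' : ℕ} {A A' : Set X} {N N' : ℝ} (h : Cov T ε n A N)
    (hn : n' ≤ n) (hA : A' ⊆ A) (hN : N ≤ N') : Cov T ε n' A' N' := by
  obtain ⟨C, h1, h2, h3⟩ := h
  exact ⟨C, fun V hV => ⟨(h1 V hV).1, fun x hx y hy i hi =>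
    (h1 V hV).2 x hx y hy i (hi.trans_le hn)⟩, hA.trans h2, h3.trans hN⟩

theorem Cov.union {T : X → X} {ε : ℝ} {n : ℕ} {A A' : Set X} {N N' : ℝ} (h : Cov T ε n A N)
    (h' : Cov T ε n A' N') : Cov T ε n (A ∪ A') (N + N') := by
  classical
  obtain ⟨C, h1, h2, h3⟩ := h
  obtain ⟨C', h1', h2', h3'⟩ := h'
  refine ⟨C ∪ C', fun V hV => ?_, ?_, ?_⟩
  · rcases Finset.mem_union.1 hV with hV | hV
    · exact h1 V hV
    · exact h1' V hV
  · rw [Finset.coe_union, sUnion_union]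
    exact union_subset_union h2 h2'
  · have : ((C ∪ C').card : ℝ) ≤ C.card + C'.card := by exact_mod_cast Finset.card_union_le _ _
    linarith

theorem Cov.empty (T : X → X) (ε : ℝ) (n : ℕ) : Cov T ε n ∅ 0 :=
  ⟨∅, by simp, by simp, by simp⟩

theorem Cov.biUnion {T : X → X} {ε : ℝ} {n : ℕ} {ι : Type*} (s : Finset ι) {A : ι → Set X}
    {N : ι → ℝ} (h : ∀ i ∈ s, Cov T ε n (A i) (N i)) :
    Cov T ε n (⋃ i ∈ s, A i) (∑ i ∈ s, N i) := by
  classical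
  induction s using Finset.induction_on with
  | empty => simpa using Cov.empty T ε n
  | insert a s ha ih =>
    rw [Finset.sum_insert ha, Finset.set_biUnion_insert]
    exact (h a (Finset.mem_insert_self a s)).union (ih fun i hi => h i (Finset.mem_insert_of_mem hi))

theorem Cov.concat {T : X → X} (hT : Continuous T) {ε : ℝ} {m n : ℕ} {A B : Set X} {N N' : ℝ}
    (h : Cov T ε m B N) (h' : Cov T ε n A N') :
    Cov T ε (m + n) (B ∩ T^[m] ⁻¹' A) (N * N') := by
  classical
  obtain ⟨C, h1, h2, h3⟩ := h
  obtain ⟨C', h1', h2', h3'⟩ := h'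
  refine ⟨Finset.image₂ (fun V W => V ∩ T^[m] ⁻¹' W) C C', ?_, ?_, ?_⟩
  · intro V₀ hV₀
    obtain ⟨V, hV, W, hW, rfl⟩ := Finset.mem_image₂.1 hV₀
    refine ⟨(h1 V hV).1.inter ((h1' W hW).1.preimage (hT.iterate m)), ?_⟩
    rintro x ⟨hx, hx'⟩ y ⟨hy, hy'⟩ i hi
    by_cases him : i < m
    · exact (h1 V hV).2 x hx y hy i him
    · obtain ⟨j, rfl⟩ := Nat.exists_eq_add_of_le (not_lt.1 him)
      have := (h1' W hW).2 _ hx' _ hy' j (by omega)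
      rwa [← Function.iterate_add_apply, ← Function.iterate_add_apply, add_comm j m] at this
  · rintro x ⟨hx, hx'⟩
    obtain ⟨V, hV, hxV⟩ := h2 hx
    obtain ⟨W, hW, hxW⟩ := h2' hx'
    exact ⟨_, Finset.mem_coe.2 (Finset.mem_image₂_of_mem (Finset.mem_coe.1 hV)
      (Finset.mem_coe.1 hW)), hxV, hxW⟩
  · have : ((Finset.image₂ (fun V W => V ∩ T^[m] ⁻¹' W) C C').card : ℝ) ≤ C.card * C'.card := by
      exact_mod_cast Finset.card_image₂_le _ _ _
    refine this.trans (mul_le_mul h3 h3' (by positivity) (le_trans (by positivity) h3))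

theorem Cov.zero (T : X → X) (ε : ℝ) (A : Set X) : Cov T ε 0 A 1 :=
  ⟨{univ}, by simp, by simp, by simp⟩

theorem Cov.pow {T : X → X} (hT : Continuous T) {ε Q : ℝ} (h : Cov T ε 1 univ Q) (k : ℕ) :
    Cov T ε k univ (Q ^ k) := by
  induction k with
  | zero => simpa using Cov.zero T ε univ
  | succ k ih => simpa [pow_succ] using ih.concat hT h

/-- Number of visits outside `G` before time `n`. -/
noncomputable def bad (T : X → X) (G : Set X) (n : ℕ) (x : X) : ℝ :=
  ∑ j ∈ Finset.range n, Gᶜ.indicator (fun _ => (1 : ℝ)) (T^[j] x)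

theorem bad_nonneg (T : X → X) (G : Set X) (n : ℕ) (x : X) : 0 ≤ bad T G n x :=
  Finset.sum_nonneg fun j _ => indicator_nonneg (fun _ _ => zero_le_one) _

theorem bad_add (T : X → X) (G : Set X) (m n : ℕ) (x : X) :
    bad T G (m + n) x = bad T G m x + bad T G n (T^[m] x) := by
  unfold bad
  rw [Finset.sum_range_add]
  congr 1
  refine Finset.sum_congr rfl fun j _ => ?_
  rw [← Function.iterate_add_apply, add_comm]

theorem token {T : X → X} (hT : Continuous T) {ε Q h : ℝ} (hQ : 1 ≤ Q) (hh : 0 ≤ h)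
    (hU : Cov T ε 1 univ Q) {ι : Type*} (s : Finset ι) (B : ι → Set X) (ℓ : ι → ℕ) (N : ι → ℝ)
    (R : ℕ) (hN : ∀ i ∈ s, 0 ≤ N i) (h1 : ∀ i ∈ s, 1 ≤ ℓ i) (hR : ∀ i ∈ s, ℓ i ≤ R)
    (hcov : ∀ i ∈ s, Cov T ε (ℓ i) (B i) (N i))
    (hsum : ∑ i ∈ s, N i * Real.exp (-(h * ℓ i)) ≤ 1 / 2) (n b : ℕ) :
    Cov T ε n {x | bad T (⋃ i ∈ s, B i) n x ≤ b} (Real.exp (h * (n + R)) * (2 * Q) ^ b) := by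
  set G := ⋃ i ∈ s, B i with hG
  have hpow : ∀ b : ℕ, 1 ≤ (2 * Q) ^ b := fun b => one_le_pow₀ (by linarith)
  induction n using Nat.strong_induction_on generalizing b with
  | _ n ih =>
  rcases Nat.eq_zero_or_pos n with rfl | hn
  · refine (Cov.zero T ε _).mono le_rfl subset_rfl ?_
    have : 1 ≤ Real.exp (h * ((0 : ℕ) + R)) := Real.one_le_exp (by positivity)
    exact one_le_mul_of_one_le_of_one_le this (hpow b)
  obtain ⟨n, rfl⟩ : ∃ k, n = k + 1 := ⟨n - 1, by omega⟩
  set E := Real.exp (h * ((n + 1 : ℕ) + R)) with hE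
  have hE0 : 0 < E := Real.exp_pos _
  have htok : ∀ i ∈ s, Cov T ε (n + 1) (B i ∩ {x | bad T G (n + 1) x ≤ b})
      (N i * Real.exp (-(h * ℓ i)) * (E * (2 * Q) ^ b)) := by
    intro i hi
    by_cases hle : ℓ i ≤ n + 1
    · have hc := (hcov i hi).concat hT (ih (n + 1 - ℓ i) (by have := h1 i hi; omega) b)
      refine hc.mono (by omega) ?_ (le_of_eq ?_)
      · rintro x ⟨hx, hx'⟩
        refine ⟨hx, ?_⟩
        have := bad_add T G (ℓ i) (n + 1 - ℓ i) x
        rw [Nat.add_sub_cancel' hle] at this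
        have h2 := bad_nonneg T G (ℓ i) x
        simp only [mem_ofPred_eq, mem_preimage] at hx' ⊢
        linarith
      · have : Real.exp (h * ((n + 1 - ℓ i : ℕ) + R)) = Real.exp (-(h * ℓ i)) * E := by
          rw [hE, ← Real.exp_add, Nat.cast_sub hle]
          congr 1; ring
        rw [this]; ring
    · have hc := hcov i hi
      refine hc.mono (by omega) inter_subset_left ?_
      have : 1 ≤ Real.exp (-(h * ℓ i)) * E := by
        rw [hE, ← Real.exp_add]
        apply Real.one_le_exp
        have : (ℓ i : ℝ) ≤ R := by exact_mod_cast hR i hi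
        have := mul_le_mul_of_nonneg_left this hh
        have h3 : 0 ≤ h * (n + 1 : ℕ) := by positivity
        nlinarith
      have h4 := one_le_mul_of_one_le_of_one_le this (hpow b)
      calc N i = N i * 1 := (mul_one _).symm
        _ ≤ N i * (Real.exp (-(h * ℓ i)) * E * (2 * Q) ^ b) :=
          mul_le_mul_of_nonneg_left h4 (hN i hi)
        _ = _ := by ring
  have hgood : Cov T ε (n + 1) (G ∩ {x | bad T G (n + 1) x ≤ b}) (1 / 2 * (E * (2 * Q) ^ b)) := by
    refine (Cov.biUnion s htok).mono le_rfl ?_ ?_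
    · rintro x ⟨hx, hx'⟩
      simp only [hG, mem_iUnion] at hx ⊢
      obtain ⟨i, hi, hxi⟩ := hx
      exact ⟨i, hi, hxi, hx'⟩
    · rw [← Finset.sum_mul]
      exact mul_le_mul_of_nonneg_right hsum (by positivity)
  have hb1 : ∀ x ∉ G, bad T G (n + 1) x = 1 + bad T G n (T x) := by
    intro x hx
    rw [add_comm n 1, bad_add]
    simp [bad, hx]
  have hbad : Cov T ε (n + 1) (Gᶜ ∩ {x | bad T G (n + 1) x ≤ b}) (1 / 2 * (E * (2 * Q) ^ b)) := by
    rcases b with _ | b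
    · refine (Cov.empty T ε (n + 1)).mono le_rfl ?_ (by positivity)
      rintro x ⟨hx, hx'⟩
      have := hb1 x hx
      have h2 := bad_nonneg T G n (T x)
      simp only [mem_ofPred_eq, Nat.cast_zero] at hx'
      linarith
    · have hc := hU.concat hT (ih n (by omega) b)
      refine hc.mono (by omega) ?_ ?_
      · rintro x ⟨hx, hx'⟩
        refine ⟨mem_univ _, ?_⟩
        have := hb1 x hx
        simp only [mem_ofPred_eq, mem_preimage, Nat.cast_add, Nat.cast_one,
          Function.iterate_one] at hx' ⊢
        linarith
      · have : Real.exp (h * (n + R)) ≤ E := by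
          rw [hE]
          apply Real.exp_le_exp.2
          push_cast
          nlinarith
        calc Q * (Real.exp (h * (n + R)) * (2 * Q) ^ b) ≤ Q * (E * (2 * Q) ^ b) := by gcongr
          _ = _ := by rw [pow_succ]; ring
  refine (hgood.union hbad).mono le_rfl ?_ (le_of_eq (by ring))
  intro x hx
  by_cases hxG : x ∈ G
  · exact Or.inl ⟨hxG, hx⟩
  · exact Or.inr ⟨hxG, hx⟩

end

section
variable {X : Type u} [MetricSpace X] [CompactSpace X] [MeasurableSpace X] [BorelSpace X]

theorem cov_cover {T : X → X} {ε : ℝ} {U : Finset (Set X)} (hU : IsFiniteOpenCover U)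
    (hd : ∀ V ∈ U, Metric.diam V ≤ ε) : Cov T ε 1 univ U.card := by
  refine ⟨U, fun V hV => ⟨hU.1 V hV, fun x hx y hy i hi => ?_⟩, hU.2.symm.subset, le_rfl⟩
  obtain rfl : i = 0 := by omega
  exact (Metric.dist_le_diam_of_mem (isCompact_univ.isBounded.subset (subset_univ _)) hx hy).trans (hd V hV)

theorem cov_refine {T : X → X} (hT : Continuous T) {ε : ℝ} {U : Finset (Set X)}
    (hU : IsFiniteOpenCover U)
    (hd : ∀ V ∈ U, Metric.diam V ≤ ε) {n : ℕ} {C : Finset (Set X)}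
    (hC : (C : Set (Set X)) ⊆ dynRefine T U n) {N : ℝ} (hN : (C.card : ℝ) ≤ N) :
    Cov T ε n (⋃₀ (C : Set (Set X))) N := by
  refine ⟨C, fun V hV => ?_, subset_rfl, hN⟩
  obtain ⟨f, hf, rfl⟩ := hC hV
  refine ⟨isOpen_iInter_of_finite fun i => (hU.1 _ (hf i)).preimage (hT.iterate _), ?_⟩
  intro x hx y hy i hi
  have hx' : T^[i] x ∈ f ⟨i, hi⟩ := mem_iInter.1 hx ⟨i, hi⟩
  have hy' : T^[i] y ∈ f ⟨i, hi⟩ := mem_iInter.1 hy ⟨i, hi⟩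
  exact (Metric.dist_le_diam_of_mem (isCompact_univ.isBounded.subset (subset_univ _)) hx' hy').trans
    (hd _ (hf ⟨i, hi⟩))

theorem markov {T : X → X} {μ : Measure X} [IsProbabilityMeasure μ]
    (hμ : MeasurePreserving T μ μ) {G : Set X} (hG : MeasurableSet G) {θ : ℝ} (hθ : 0 < θ)
    (hGθ : μ.real Gᶜ ≤ θ ^ 2) {n : ℕ} (hn : 0 < n) :
    μ.real {x | bad T G n x ≤ (⌊θ * n⌋₊ : ℕ)}ᶜ ≤ θ := by
  have hn' : (0 : ℝ) < n := by exact_mod_cast hn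
  have hint0 : Integrable (Gᶜ.indicator (fun _ => (1 : ℝ))) μ := (integrable_const 1).indicator hG.compl
  have hint : ∀ j, Integrable (fun x => Gᶜ.indicator (fun _ => (1 : ℝ)) (T^[j] x)) μ := fun j =>
    (hμ.iterate j).integrable_comp_of_integrable hint0
  have hI : ∫ x, bad T G n x ∂μ = n * μ.real Gᶜ := by
    unfold bad
    rw [integral_finsetSum _ fun j _ => hint j]
    have : ∀ j, ∫ x, Gᶜ.indicator (fun _ => (1 : ℝ)) (T^[j] x) ∂μ = μ.real Gᶜ := by
      intro j
      have h1 : ∫ x, Gᶜ.indicator (fun _ => (1 : ℝ)) x ∂(μ.map (T^[j])) = _ :=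
        integral_map (hμ.iterate j).measurable.aemeasurable (by
          rw [(hμ.iterate j).map_eq]; exact hint0.aestronglyMeasurable)
      rw [← h1, (hμ.iterate j).map_eq, integral_indicator hG.compl]
      simp
    simp [this]
  have hM := mul_meas_ge_le_integral_of_nonneg
    (Eventually.of_forall fun x => bad_nonneg T G n x)
    (integrable_finsetSum _ fun j _ => hint j : Integrable (bad T G n) μ) (θ * n)
  rw [hI] at hM
  have hsub : {x | bad T G n x ≤ (⌊θ * n⌋₊ : ℕ)}ᶜ ⊆ {x | θ * n ≤ bad T G n x} := by
    intro x hx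
    simp only [mem_compl_iff, mem_ofPred_eq, not_le] at hx ⊢
    by_contra hlt
    push Not at hlt
    have hnat : ∃ k : ℕ, bad T G n x = k := by
      classical
      refine ⟨∑ j ∈ Finset.range n, if T^[j] x ∈ Gᶜ then 1 else 0, ?_⟩
      simp [bad, indicator_apply]
    obtain ⟨k, hk⟩ := hnat
    rw [hk] at hx hlt
    have h1 : k ≤ ⌊θ * n⌋₊ := Nat.le_floor hlt.le
    have h2 : ⌊θ * n⌋₊ < k := by exact_mod_cast hx
    omega
  have h3 : μ.real {x | bad T G n x ≤ (⌊θ * n⌋₊ : ℕ)}ᶜ ≤ μ.real {x | θ * n ≤ bad T G n x} :=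
    measureReal_mono hsub
  have h4 : θ * n * μ.real {x | θ * n ≤ bad T G n x} ≤ θ * n * θ := by
    refine hM.trans ((mul_le_mul_of_nonneg_left hGθ hn'.le).trans (le_of_eq (by ring)))
  exact h3.trans (le_of_mul_le_mul_left h4 (by positivity))

end

end MMD

namespace MMD

universe u

section
variable {X : Type u} [MeasurableSpace X]

theorem select {T : X → X} {μ : Measure X} [IsProbabilityMeasure μ] (hμ : Ergodic T μ)
    {G : ℕ → Set X} (hG : ∀ n, MeasurableSet (G n)) {a : ENNReal} (ha : 0 < a) {n0 : ℕ}
    (h : ∀ n, n0 ≤ n → a ≤ μ (G n)) {η : ℝ} (hη : 0 < η) :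
    ∃ J : ℕ, ∀ L : ℕ, ∃ R : ℕ,
      μ.real (⋃ i ∈ Finset.range J ×ˢ Finset.Ico L R, T^[i.1] ⁻¹' G i.2)ᶜ ≤ η := by
  have hmT : ∀ j, Measurable (T^[j]) := fun j => hμ.measurable.iterate j
  set W : ℕ → Set X := fun L => ⋃ n, ⋃ (_ : L ≤ n), G n with hW
  have hWm : ∀ L, MeasurableSet (W L) := fun L =>
    MeasurableSet.iUnion fun n => MeasurableSet.iUnion fun _ => hG n
  have hWanti : Antitone W := by
    intro L L' hLL x hx
    simp only [hW, mem_iUnion] at hx ⊢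
    obtain ⟨n, hn, hx⟩ := hx
    exact ⟨n, hLL.trans hn, hx⟩
  set B := ⋂ L, W L with hB
  have hBm : MeasurableSet B := MeasurableSet.iInter hWm
  have hBa : a ≤ μ B := by
    have ht := tendsto_measure_iInter_atTop (μ := μ) (s := W)
      (fun L => (hWm L).nullMeasurableSet) hWanti ⟨0, measure_ne_top _ _⟩
    refine ge_of_tendsto' ht fun L => ?_
    refine (h (max L n0) (le_max_right _ _)).trans (measure_mono ?_)
    intro x hx
    simp only [hW, mem_iUnion]
    exact ⟨_, le_max_left _ _, hx⟩
  set D : ℕ → Set X := fun J => ⋃ j ∈ Finset.range J, T^[j] ⁻¹' B with hD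
  have hDmono : Monotone D := by
    intro J J' hJ x hx
    simp only [hD, mem_iUnion, Finset.mem_range] at hx ⊢
    obtain ⟨j, hj, hx⟩ := hx
    exact ⟨j, hj.trans_le hJ, hx⟩
  have hDm : ∀ J, MeasurableSet (D J) := fun J =>
    Finset.measurableSet_biUnion _ fun j _ => hmT j hBm
  have hDU : μ (⋃ J, D J) = 1 := by
    have hsub : T ⁻¹' (⋃ J, D J) ⊆ ⋃ J, D J := by
      intro x hx
      simp only [hD, mem_preimage, mem_iUnion, Finset.mem_range] at hx ⊢
      obtain ⟨J, j, hj, hx⟩ := hx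
      exact ⟨J + 1, j + 1, by omega, by rwa [Function.iterate_succ_apply]⟩
    rcases hμ.ae_empty_or_univ_of_preimage_ae_le (MeasurableSet.iUnion hDm).nullMeasurableSet
      (LE.le.eventuallyLE hsub) with h0 | h1
    · exfalso
      have : μ B ≤ μ (⋃ J, D J) := by
        refine measure_mono fun x hx => ?_
        simp only [hD, mem_iUnion, Finset.mem_range]
        exact ⟨1, 0, by omega, hx⟩
      rw [measure_congr h0, measure_empty] at this
      exact absurd (hBa.trans this) (not_le.2 ha)
    · rw [measure_congr h1, measure_univ]
  have hlt : ENNReal.ofReal (1 - η) < 1 := ENNReal.ofReal_lt_one.2 (by linarith)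
  have ht := tendsto_measure_iUnion_atTop (μ := μ) hDmono
  rw [hDU] at ht
  obtain ⟨J, hJ⟩ := (ht.eventually_const_lt hlt).exists
  refine ⟨J, fun L => ?_⟩
  set A : ℕ → Set X := fun R => ⋃ i ∈ Finset.range J ×ˢ Finset.Ico L R, T^[i.1] ⁻¹' G i.2 with hA
  have hAm : ∀ R, MeasurableSet (A R) := fun R =>
    Finset.measurableSet_biUnion _ fun i _ => hmT i.1 (hG i.2)
  have hAmono : Monotone A := by
    intro R R' hR x hx
    simp only [hA, mem_iUnion, Finset.mem_product, Finset.mem_range, Finset.mem_Ico] at hx ⊢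
    obtain ⟨i, hi, hx⟩ := hx
    exact ⟨i, ⟨hi.1, hi.2.1, hi.2.2.trans_le hR⟩, hx⟩
  have hsub : D J ⊆ ⋃ R, A R := by
    intro x hx
    simp only [hD, hB, hW, hA, mem_iUnion, mem_preimage, mem_iInter, Finset.mem_range,
      Finset.mem_product, Finset.mem_Ico] at hx ⊢
    obtain ⟨j, hj, hx⟩ := hx
    obtain ⟨n, hn, hx⟩ := hx L
    exact ⟨n + 1, (j, n), ⟨hj, hn, by simp⟩, hx⟩
  have ht2 := tendsto_measure_iUnion_atTop (μ := μ) hAmono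
  obtain ⟨R, hR⟩ := (ht2.eventually_const_lt (hJ.trans_le (measure_mono hsub))).exists
  refine ⟨R, ?_⟩
  change μ.real (A R)ᶜ ≤ η
  rw [measureReal_compl (hAm R), probReal_univ]
  by_contra hcon
  push Not at hcon
  have h3 : μ (A R) = ENNReal.ofReal (μ.real (A R)) := by
    simp [measureReal_def]
  rw [Function.comp_apply, h3] at hR
  exact absurd hR (not_lt.2 (ENNReal.ofReal_le_ofReal (by linarith)))

end

section
variable {X : Type u} [MetricSpace X] [CompactSpace X] [MeasurableSpace X] [BorelSpace X]

theorem cov_PU {T : X → X} {μ : Measure X} [IsProbabilityMeasure μ] {ε θ N N' : ℝ} (hθ : 0 < θ)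
    (hN : 1 ≤ N) (hN' : 1 ≤ N') {M : ℕ} {A : Set X}
    (hA : Cov T ε M A N) (hμA : μ.real Aᶜ ≤ θ) (hc : Cov T ε M univ N') :
    ∃ P : PU X, Small T ε (Set.Iio M) P ∧
      Ent (I μ) P ≤ Real.log 2 + Real.log N + 2 * θ * Real.log N' := by
  classical
  obtain ⟨C, h1, h2, h3⟩ := hA
  obtain ⟨C', h1', h2', h3'⟩ := hc
  set O := ⋃₀ (C : Set (Set X)) with hO
  have hOo : IsOpen O := isOpen_sUnion fun V hV => (h1 V hV).1
  obtain ⟨K, hKO, hKc, hK⟩ := hOo.measurableSet.exists_isClosed_sdiff_lt (measure_ne_top μ O)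
    (ε := ENNReal.ofReal θ) (by simpa using hθ)
  have hμK : μ.real Kᶜ ≤ 2 * θ := by
    have hs : Kᶜ ⊆ Aᶜ ∪ (O \ K) := by
      intro x hx
      by_cases hxA : x ∈ A
      · exact Or.inr ⟨h2 hxA, hx⟩
      · exact Or.inl hxA
    have e1 := measureReal_mono (μ := μ) hs
    have e2 := measureReal_union_le (μ := μ) Aᶜ (O \ K)
    have e3 : μ.real (O \ K) ≤ θ := by
      rw [measureReal_def]
      exact ENNReal.toReal_le_of_le_ofReal hθ.le hK.le
    linarith
  obtain ⟨φ, p0, p1, p2⟩ := exists_PU (X := X) (ι := ↥C ⊕ ↥C')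
    (Sum.elim (fun V => (V : Set X)) (fun V => (V : Set X) \ K)) (by
      rintro (V | V)
      · exact (h1 _ V.2).1
      · exact (h1' _ V.2).1.sdiff hKc) (by
      refine eq_univ_of_forall fun x => ?_
      by_cases hx : x ∈ K
      · obtain ⟨V, hV, hxV⟩ := hKO hx
        exact mem_iUnion.2 ⟨Sum.inl ⟨V, hV⟩, hxV⟩
      · obtain ⟨V, hV, hxV⟩ := h2' (mem_univ x)
        exact mem_iUnion.2 ⟨Sum.inr ⟨V, hV⟩, hxV, hx⟩)
  let P : PU X := ⟨↥C ⊕ ↥C', inferInstance, φ, p0, p1⟩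
  refine ⟨P, ?_, ?_⟩
  · rintro (V | V) x y hx hy i hi
    · exact (h1 _ V.2).2 x (p2 _ x hx) y (p2 _ y hy) i hi
    · exact (h1' _ V.2).2 x (p2 _ x hx).1 y (p2 _ y hy).1 i hi
  have hst := I_state μ
  set p : ↥C ⊕ ↥C' → ℝ := fun k => I μ (φ k) with hp
  have hp0 : ∀ k, 0 ≤ p k := P.state_nonneg hst
  have hp1 : ∑ k, p k = 1 := P.sum_state hst
  have hC' : ∑ k : ↥C', p (Sum.inr k) ≤ 2 * θ := by
    have hint : ∑ k : ↥C', p (Sum.inr k) = ∫ x, ∑ k : ↥C', φ (Sum.inr k) x ∂μ := by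
      rw [integral_finsetSum _ fun k _ => integrable_cont μ _]; rfl
    rw [hint]
    have hle : ∀ x, ∑ k : ↥C', φ (Sum.inr k) x ≤ Kᶜ.indicator (fun _ => (1 : ℝ)) x := by
      intro x
      by_cases hx : x ∈ K
      · rw [Finset.sum_eq_zero]
        · exact indicator_nonneg (fun _ _ => zero_le_one) _
        · intro k _
          by_contra hne
          exact (p2 _ x hne).2 hx
      · rw [indicator_of_mem (by exact hx)]
        have e := congrArg (fun g : C(X, ℝ) => g x) p1
        simp only [ContinuousMap.sum_apply, ContinuousMap.add_apply, ContinuousMap.one_apply,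
          Fintype.sum_sum_type] at e
        have : 0 ≤ ∑ k : ↥C, φ (Sum.inl k) x := Finset.sum_nonneg fun k _ => p0 _ x
        linarith
    refine (integral_mono (integrable_finsetSum _ fun k _ => integrable_cont μ _)
      ((integrable_const 1).indicator hKc.measurableSet.compl) hle).trans ?_
    rw [integral_indicator_const _ hKc.measurableSet.compl]
    simpa using hμK
  set q : ↥C ⊕ ↥C' → ℝ := Sum.elim (fun _ => 1 / (2 * N)) (fun _ => 1 / (2 * N')) with hq
  have hg := gibbs p q hp0 (by rintro (k | k) <;> simp only [hq, Sum.elim_inl, Sum.elim_inr] <;> positivity)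
    (by
      rintro (k | k) h0
      · exfalso
        have : 0 < 1 / (2 * N) := by positivity
        exact this.ne' h0
      · exfalso
        have : 0 < 1 / (2 * N') := by positivity
        exact this.ne' h0)
    (by
      rw [hp1, Fintype.sum_sum_type]
      simp only [hq, Sum.elim_inl, Sum.elim_inr, Finset.sum_const, Finset.card_univ,
        Fintype.card_coe, nsmul_eq_mul]
      have e1 : (C.card : ℝ) * (1 / (2 * N)) ≤ 1 / 2 := by
        rw [mul_one_div, div_le_iff₀ (by positivity)]; linarith
      have e2 : (C'.card : ℝ) * (1 / (2 * N')) ≤ 1 / 2 := by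
        rw [mul_one_div, div_le_iff₀ (by positivity)]; linarith
      linarith)
  refine (show Ent (I μ) P = ∑ k, Real.negMulLog (p k) from rfl).le.trans (hg.trans ?_)
  rw [Fintype.sum_sum_type] at hp1 ⊢
  simp only [hq, Sum.elim_inl, Sum.elim_inr, one_div, Real.log_inv, mul_neg, neg_neg]
  rw [← Finset.sum_mul, ← Finset.sum_mul, Real.log_mul (by norm_num) (by positivity),
    Real.log_mul (by norm_num) (by positivity)]
  have l1 := Real.log_nonneg hN
  have l2 := Real.log_nonneg hN'
  have a0 : 0 ≤ ∑ k : ↥C', p (Sum.inr k) := Finset.sum_nonneg fun k _ => hp0 _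
  set a := ∑ k : ↥C', p (Sum.inr k)
  set b := ∑ k : ↥C, p (Sum.inl k)
  have hb : b = 1 - a := by linarith
  rw [hb]
  nlinarith [mul_le_mul_of_nonneg_right hC' l2, mul_nonneg a0 l1]

end

end MMD

namespace MMD

universe u

section
variable {X : Type u} [MetricSpace X] [CompactSpace X] [MeasurableSpace X] [BorelSpace X]

theorem F_le_key {T : X → X} (hT : Continuous T) {μ : Measure X} [IsProbabilityMeasure μ]
    (hμ : Ergodic T μ) {ε Q h : ℝ} (hQ : 1 ≤ Q) (hh : 0 ≤ h) (hU : Cov T ε 1 univ Q)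
    {G : ℕ → Set X} (hG : ∀ n, MeasurableSet (G n)) {a : ENNReal} (ha : 0 < a) {n0 : ℕ}
    (hGa : ∀ n, n0 ≤ n → a ≤ μ (G n))
    (hGc : ∀ n, n0 ≤ n → Cov T ε n (G n) (Real.exp (h * n))) {η : ℝ} (hη : 0 < η) :
    F T ε (I μ) ≤ h + η * (1 + Real.log (2 * Q) + 2 * Real.log Q) := by
  obtain ⟨J, hJ⟩ := select hμ hG ha hGa (η := η ^ 2) (by positivity)
  set x := Real.exp (-η) with hx
  have hx0 : 0 < x := Real.exp_pos _
  have hx1 : x < 1 := by rw [hx, Real.exp_lt_one_iff]; linarith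
  have hlim : Tendsto (fun L : ℕ => (J * Q ^ J) * (x ^ L / (1 - x))) atTop (𝓝 ((J * Q ^ J) * (0 / (1 - x)))) :=
    ((tendsto_pow_atTop_nhds_zero_of_lt_one hx0.le hx1).div_const _).const_mul _
  rw [zero_div, mul_zero] at hlim
  obtain ⟨L, hL, hL0⟩ := ((hlim.eventually_le_const (show (0 : ℝ) < 1 / 2 by norm_num)).and
    (eventually_ge_atTop (max n0 1))).exists
  obtain ⟨R, hR⟩ := hJ L
  set s := Finset.range J ×ˢ Finset.Ico L R with hs
  have hsm : ∀ i ∈ s, i.1 < J ∧ L ≤ i.2 ∧ i.2 < R := by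
    intro i hi
    simpa [hs, Finset.mem_product] using hi
  have hn0 : n0 ≤ L := (le_max_left _ _).trans hL0
  have h1L : 1 ≤ L := (le_max_right _ _).trans hL0
  have hsum : ∑ i ∈ s, (Q ^ i.1 * Real.exp (h * (i.2 : ℕ))) * Real.exp (-((h + η) * ((i.1 + i.2 : ℕ) : ℝ)))
      ≤ 1 / 2 := by
    refine le_trans ?_ hL
    have hterm : ∀ i ∈ s, (Q ^ i.1 * Real.exp (h * (i.2 : ℕ))) *
        Real.exp (-((h + η) * ((i.1 + i.2 : ℕ) : ℝ))) ≤ Q ^ J * x ^ i.2 := by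
      intro i hi
      rw [mul_assoc, ← Real.exp_add, hx, ← Real.exp_nat_mul]
      refine mul_le_mul (pow_le_pow_right₀ hQ (hsm i hi).1.le) (Real.exp_le_exp.2 ?_)
        (Real.exp_pos _).le (by positivity)
      push_cast
      have : 0 ≤ (h + η) * (i.1 : ℝ) := by positivity
      linarith
    refine (Finset.sum_le_sum hterm).trans ?_
    rw [hs, Finset.sum_product]
    simp only [Finset.sum_const, Finset.card_range, nsmul_eq_mul, ← Finset.mul_sum]
    rw [mul_assoc]
    gcongr
    exact geom_sum_Ico_le_of_lt_one hx0.le hx1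
  have hcov : ∀ i ∈ s, Cov T ε (i.1 + i.2) (T^[i.1] ⁻¹' G i.2) (Q ^ i.1 * Real.exp (h * (i.2 : ℕ))) := by
    intro i hi
    have := (hU.pow hT i.1).concat hT (hGc i.2 (hn0.trans (hsm i hi).2.1))
    rwa [univ_inter] at this
  have hGm : MeasurableSet (⋃ i ∈ s, T^[i.1] ⁻¹' G i.2) :=
    Finset.measurableSet_biUnion _ fun i _ => (hT.iterate i.1).measurable (hG i.2)
  have hlogQ := Real.log_nonneg hQ
  have hlog2Q : 0 ≤ Real.log (2 * Q) := Real.log_nonneg (by linarith)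
  have hM : ∀ M : ℕ, 0 < M → F T ε (I μ) * M ≤ Real.log 2 + (h + η) * ((J + R : ℕ) : ℝ) +
      (h + η * (1 + Real.log (2 * Q) + 2 * Real.log Q)) * M := by
    intro M hM
    have hM' : (0 : ℝ) < M := by exact_mod_cast hM
    have hc := token hT hQ (by positivity : 0 ≤ h + η) hU s (fun i => T^[i.1] ⁻¹' G i.2)
      (fun i => i.1 + i.2) (fun i => Q ^ i.1 * Real.exp (h * (i.2 : ℕ))) (J + R)
      (fun i _ => by positivity) (fun i hi => by have := hsm i hi; omega)
      (fun i hi => by have := hsm i hi; omega) hcov hsum M ⌊η * M⌋₊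
    have hmk := markov hμ.toMeasurePreserving hGm hη hR hM
    have hb1 : (1 : ℝ) ≤ (2 * Q) ^ ⌊η * M⌋₊ := one_le_pow₀ (by linarith)
    have he1 : (1 : ℝ) ≤ Real.exp ((h + η) * (M + (J + R : ℕ))) := Real.one_le_exp (by positivity)
    obtain ⟨P, hP, hE⟩ := cov_PU hη (by nlinarith) (one_le_pow₀ hQ) hc hmk (hU.pow hT M)
    have hF := F_le (I_state μ) hM hP
    rw [le_div_iff₀ hM'] at hF
    refine hF.trans (hE.trans ?_)
    rw [Real.log_mul (by positivity) (by positivity), Real.log_exp, Real.log_pow, Real.log_pow]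
    have hfl : (⌊η * M⌋₊ : ℝ) ≤ η * M := Nat.floor_le (by positivity)
    have := mul_le_mul_of_nonneg_right hfl hlog2Q
    linarith
  by_contra hcon
  push Not at hcon
  set d := h + η * (1 + Real.log (2 * Q) + 2 * Real.log Q)
  set c := Real.log 2 + (h + η) * ((J + R : ℕ) : ℝ)
  obtain ⟨M, hMc⟩ := exists_nat_gt (c / (F T ε (I μ) - d))
  rw [div_lt_iff₀ (by linarith)] at hMc
  have := hM (M + 1) (by omega)
  push_cast at this
  linarith

theorem F_le_shapira [Nonempty X] {T : X → X} (hT : Continuous T) {μ : Measure X}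
    [IsProbabilityMeasure μ]
    (hμ : Ergodic T μ) {ε δ : ℝ} (hδ : 0 < δ) (hδ1 : δ < 1) {U : Finset (Set X)}
    (hU : IsFiniteOpenCover U) (hd : ∀ V ∈ U, Metric.diam V ≤ ε) :
    ((F T ε (I μ) : ℝ) : EReal) ≤ shapiraEnt T μ U δ := by
  classical
  have hQ : (1 : ℝ) ≤ U.card := by
    have : U.Nonempty := by
      obtain ⟨x⟩ := ‹Nonempty X›
      have hx : x ∈ ⋃₀ (U : Set (Set X)) := by rw [hU.2]; trivial
      obtain ⟨V, hV, _⟩ := hx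
      exact ⟨V, hV⟩
    exact_mod_cast this.card_pos
  refine EReal.le_of_forall_lt_iff_le.1 fun h hh => ?_
  have hev := eventually_lt_of_limsup_lt hh
  obtain ⟨n0, hn0⟩ := eventually_atTop.1 hev
  have hne : ∀ n, {m | ∃ F : Finset (Set X), ↑F ⊆ dynRefine T U n ∧
    ENNReal.ofReal δ ≤ μ (⋃₀ (F : Set (Set X))) ∧ F.card = m}.Nonempty := by
    intro n
    set E : Finset (Set X) := (Fintype.piFinset (fun _ : Fin n => U)).image
      (fun f => ⋂ i : Fin n, T^[(i : ℕ)] ⁻¹' f i) with hE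
    refine ⟨E.card, E, ?_, ?_, rfl⟩
    · intro V hV
      obtain ⟨f, hf, rfl⟩ := Finset.mem_image.1 (Finset.mem_coe.1 hV)
      exact ⟨f, fun i => Fintype.mem_piFinset.1 hf i, rfl⟩
    · have : ⋃₀ (E : Set (Set X)) = univ := by
        refine eq_univ_of_forall fun x => ?_
        have hx : ∀ i : Fin n, ∃ V ∈ U, T^[(i : ℕ)] x ∈ V := by
          intro i
          have : T^[(i : ℕ)] x ∈ ⋃₀ (U : Set (Set X)) := by rw [hU.2]; trivial
          exact this
        choose f hf hfx using hx
        refine ⟨_, Finset.mem_coe.2 (Finset.mem_image.2 ⟨f, Fintype.mem_piFinset.2 hf, rfl⟩), ?_⟩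
        exact mem_iInter.2 hfx
      rw [this, measure_univ]
      exact ENNReal.ofReal_le_one.2 hδ1.le
  have hmem : ∀ n, ∃ C : Finset (Set X), ↑C ⊆ dynRefine T U n ∧
    ENNReal.ofReal δ ≤ μ (⋃₀ (C : Set (Set X))) ∧ C.card = shapiraNum T μ U n δ :=
    fun n => Nat.sInf_mem (hne n)
  choose C hC1 hC2 hC3 using hmem
  have hcard : ∀ n, 1 ≤ shapiraNum T μ U n δ := by
    intro n
    rw [← hC3 n, Nat.one_le_iff_ne_zero]
    intro h0
    have := hC2 n
    rw [Finset.card_eq_zero.1 h0] at this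
    simp at this
    linarith
  have hle : ∀ n, max n0 1 ≤ n → ((C n).card : ℝ) ≤ Real.exp (h * n) ∧ 0 ≤ h := by
    intro n hn
    have h1 : (1 : ℝ) ≤ shapiraNum T μ U n δ := by exact_mod_cast hcard n
    have hn' : (0 : ℝ) < n := by exact_mod_cast (show 0 < n from lt_of_lt_of_le one_pos ((le_max_right _ _).trans hn))
    have := hn0 n ((le_max_left _ _).trans hn)
    have := EReal.coe_lt_coe_iff.1 this
    rw [div_lt_iff₀ hn'] at this
    rw [hC3 n]
    refine ⟨?_, ?_⟩
    · rw [← Real.log_le_iff_le_exp (by linarith)]; exact this.le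
    · have := Real.log_nonneg h1
      by_contra hcon
      push Not at hcon
      nlinarith
  have hh0 : 0 ≤ h := (hle (max n0 1) le_rfl).2
  have key := fun η (hη : 0 < η) => F_le_key hT hμ hQ hh0 (cov_cover hU hd)
    (G := fun n => ⋃₀ (C n : Set (Set X)))
    (fun n => (isOpen_sUnion fun V hV => by
      obtain ⟨f, hf, rfl⟩ := hC1 n hV
      exact isOpen_iInter_of_finite fun i => (hU.1 _ (hf i)).preimage (hT.iterate _)).measurableSet)
    (a := ENNReal.ofReal δ) (by simpa using hδ) (n0 := max n0 1) (fun n _ => hC2 n)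
    (fun n hn => cov_refine hT hU hd (hC1 n) (hle n hn).1) (η := η) hη
  refine EReal.coe_le_coe_iff.2 (le_of_forall_pos_le_add fun e he => ?_)
  have hK : 0 < 1 + Real.log (2 * U.card) + 2 * Real.log U.card := by
    have := Real.log_nonneg hQ
    have : 0 ≤ Real.log (2 * U.card) := Real.log_nonneg (by linarith)
    linarith
  have := key (e / (1 + Real.log (2 * U.card) + 2 * Real.log U.card)) (by positivity)
  rwa [div_mul_cancel₀ _ hK.ne'] at this

end

end MMD

namespace MMD

universe u

section
variable {X : Type u} [MetricSpace X] [CompactSpace X]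

theorem exists_net {ε : ℝ} (hε : 0 < ε) : ∃ t : Finset X, ∀ x : X, ∃ c ∈ t, dist x c < ε := by
  obtain ⟨t, -, ht, hc⟩ := (isCompact_univ (X := X)).finite_cover_balls hε
  refine ⟨ht.toFinset, fun x => ?_⟩
  have := hc (mem_univ x)
  simp only [mem_iUnion] at this
  obtain ⟨c, hct, hx⟩ := this
  exact ⟨c, ht.mem_toFinset.2 hct, hx⟩

theorem sep_bdd (T : X → X) {ε : ℝ} (hε : 0 < ε) (n : ℕ) :
    BddAbove {m | ∃ E : Finset X, ↑E ⊆ (univ : Set X) ∧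
      (∀ x ∈ E, ∀ y ∈ E, x ≠ y → ε < dynDist T n x y) ∧ E.card = m} := by
  classical
  obtain ⟨t, ht⟩ := exists_net (X := X) (half_pos hε)
  choose c hct hc using ht
  refine ⟨(Fintype.piFinset (fun _ : Fin n => t)).card, ?_⟩
  rintro m ⟨E, -, hE, rfl⟩
  refine Finset.card_le_card_of_injOn (fun x i => c (T^[(i : ℕ)] x)) ?_ ?_
  · intro x _
    exact Finset.mem_coe.2 (Fintype.mem_piFinset.2 fun i => hct _)
  · intro x hx y hy hxy
    by_contra hne
    refine absurd (hE x hx y hy hne) (not_lt.2 (dynDist_le hε.le fun i hi => ?_))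
    have e := congrFun hxy ⟨i, hi⟩
    simp only at e
    have h1 := hc (T^[i] x)
    have h2 := hc (T^[i] y)
    rw [e] at h1
    have := dist_triangle_right (T^[i] x) (T^[i] y) (c (T^[i] y))
    linarith

theorem exists_span (T : X → X) {ε : ℝ} (hε : 0 < ε) (n : ℕ) :
    ∃ E : Finset X, E.card = sepNum T n univ ε ∧
      ∀ x, ∃ y ∈ E, ∀ i < n, dist (T^[i] x) (T^[i] y) ≤ ε := by
  classical
  have hmem := Nat.sSup_mem (s := {m | ∃ E : Finset X, ↑E ⊆ (univ : Set X) ∧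
      (∀ x ∈ E, ∀ y ∈ E, x ≠ y → ε < dynDist T n x y) ∧ E.card = m})
    ⟨0, ∅, by simp, by simp, rfl⟩ (sep_bdd T hε n)
  obtain ⟨E, -, hE, hcard⟩ := hmem
  refine ⟨E, hcard, fun x => ?_⟩
  by_contra hcon
  push Not at hcon
  have hx : ∀ y ∈ E, ε < dynDist T n x y := by
    intro y hy
    obtain ⟨i, hi, hlt⟩ := hcon y hy
    exact hlt.trans_le (le_dynDist T x y hi)
  have hsymm : ∀ a b, dynDist T n a b = dynDist T n b a := fun a b => by
    simp only [dynDist, dist_comm]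
  have hxE : x ∉ E := by
    intro hxE
    obtain ⟨i, hi, hlt⟩ := hcon x hxE
    rw [dist_self] at hlt
    linarith
  have hle := le_csSup (sep_bdd T hε n) (a := (insert x E).card) ⟨insert x E, subset_univ _, by
    intro a ha b hb hab
    rcases Finset.mem_insert.1 ha with rfl | haE
    · rcases Finset.mem_insert.1 hb with rfl | hb
      · exact absurd rfl hab
      · exact hx b hb
    · rcases Finset.mem_insert.1 hb with rfl | hb
      · rw [hsymm]; exact hx a haE
      · exact hE a haE b hb hab, rfl⟩
  rw [Finset.card_insert_of_notMem hxE, ← hcard] at hle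
  omega

theorem exists_cover_le [MeasurableSpace X] (T : X → X) {ε δ : ℝ} (hε : 0 < ε) (hδ : δ < 1) :
    ∃ U : Finset (Set X), IsFiniteOpenCover U ∧ (∀ V ∈ U, Metric.diam V ≤ ε) ∧
      ∀ μ : Measure X, IsProbabilityMeasure μ → shapiraEnt T μ U δ ≤ sepEnt T univ (ε / 4) := by
  classical
  obtain ⟨t, ht⟩ := exists_net (X := X) (show 0 < ε / 4 by linarith)
  choose c hct hc using ht
  refine ⟨t.image fun x => Metric.ball x (ε / 2), ⟨?_, ?_⟩, ?_, ?_⟩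
  · intro V hV
    obtain ⟨x, -, rfl⟩ := Finset.mem_image.1 hV
    exact Metric.isOpen_ball
  · refine eq_univ_of_forall fun x => ?_
    refine ⟨_, Finset.mem_coe.2 (Finset.mem_image_of_mem _ (hct x)), ?_⟩
    rw [Metric.mem_ball]
    linarith [hc x]
  · intro V hV
    obtain ⟨x, -, rfl⟩ := Finset.mem_image.1 hV
    exact (Metric.diam_ball (by linarith)).trans (by linarith)
  · intro μ hμ
    refine limsup_le_limsup (Eventually.of_forall fun n => ?_)
    dsimp only
    refine EReal.coe_le_coe_iff.2 (div_le_div_of_nonneg_right ?_ (Nat.cast_nonneg n))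
    have hle : shapiraNum T μ (t.image fun x => Metric.ball x (ε / 2)) n δ
        ≤ sepNum T n univ (ε / 4) := by
      obtain ⟨E, hE, hsp⟩ := exists_span T (show 0 < ε / 4 by linarith) n
      set C : Finset (Set X) := E.image fun y =>
        ⋂ i : Fin n, T^[(i : ℕ)] ⁻¹' (Metric.ball (c (T^[(i : ℕ)] y)) (ε / 2)) with hC
      refine le_trans (Nat.sInf_le ⟨C, ?_, ?_, rfl⟩) (hE ▸ Finset.card_image_le)
      · intro V hV
        obtain ⟨y, -, rfl⟩ := Finset.mem_image.1 (Finset.mem_coe.1 hV)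
        exact ⟨fun i => Metric.ball (c (T^[(i : ℕ)] y)) (ε / 2),
          fun i => Finset.mem_image_of_mem _ (hct _), rfl⟩
      · have : ⋃₀ (C : Set (Set X)) = univ := by
          refine eq_univ_of_forall fun x => ?_
          obtain ⟨y, hy, hxy⟩ := hsp x
          refine ⟨_, Finset.mem_coe.2 (Finset.mem_image_of_mem _ hy), mem_iInter.2 fun i => ?_⟩
          rw [mem_preimage, Metric.mem_ball]
          have h1 := hxy i i.2
          have h2 := hc (T^[(i : ℕ)] y)
          have := dist_triangle (T^[(i : ℕ)] x) (T^[(i : ℕ)] y) (c (T^[(i : ℕ)] y))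
          linarith
        rw [this, measure_univ]
        exact ENNReal.ofReal_le_one.2 hδ.le
    rcases Nat.eq_zero_or_pos (shapiraNum T μ (t.image fun x => Metric.ball x (ε / 2)) n δ) with h0 | h0
    · rw [h0, Nat.cast_zero, Real.log_zero]
      exact Real.log_natCast_nonneg _
    · exact Real.log_le_log (by exact_mod_cast h0) (by exact_mod_cast hle)

/-- The supremum over ergodic measures of the infimum over covers. -/
noncomputable def supinf [MeasurableSpace X] (T : X → X) (δ ε : ℝ) : EReal :=
  ⨆ μ ∈ ergodicMeasures T, ⨅ U ∈ {U : Finset (Set X) |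
          IsFiniteOpenCover U ∧ ∀ V ∈ U, Metric.diam V ≤ ε}, shapiraEnt T μ U δ

theorem supinf_le [MeasurableSpace X] (T : X → X) {δ ε : ℝ} (hε : 0 < ε) (hδ : δ < 1) :
    supinf T δ ε ≤ sepEnt T univ (ε / 4) := by
  obtain ⟨U, hU, hd, hle⟩ := exists_cover_le T hε hδ
  refine iSup₂_le fun μ hμ => ?_
  exact (iInf₂_le U ⟨hU, hd⟩).trans (hle μ hμ.1)

theorem le_supinf [Nonempty X] [MeasurableSpace X] [BorelSpace X] {T : X → X} (hT : Continuous T)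
    {δ ε : ℝ} (hε : 0 < ε) (hδ0 : 0 < δ) (hδ : δ < 1) :
    sepEnt T univ ε ≤ supinf T δ ε := by
  refine EReal.ge_of_forall_gt_iff_ge.1 fun c hc => ?_
  obtain ⟨μ, hμ, hF⟩ := exists_ergodic hT hε hc
  refine le_trans ?_ (le_iSup₂ (f := fun (μ : Measure X) (_ : μ ∈ ergodicMeasures T) =>
    ⨅ U ∈ {U : Finset (Set X) |
          IsFiniteOpenCover U ∧ ∀ V ∈ U, Metric.diam V ≤ ε}, shapiraEnt T μ U δ) μ hμ)
  have := hμ.1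
  refine le_iInf₂ fun U hU => ?_
  exact (EReal.coe_le_coe_iff.2 hF).trans (F_le_shapira hT hμ.2 hδ0 hδ hU.1 hU.2)

theorem log_pos_of {ε : ℝ} (h : ε ∈ Ioo (0 : ℝ) 1) : 0 < Real.log (1 / ε) :=
  Real.log_pos (by rw [lt_div_iff₀ h.1]; linarith [h.2])

theorem main [Nonempty X] [MeasurableSpace X] [BorelSpace X] {T : X → X} (hT : Continuous T)
    {δ : ℝ} (hδ0 : 0 < δ) (hδ : δ < 1) :
    mdimUpper T = limsup (fun ε : ℝ => supinf T δ ε / ((Real.log (1 / ε) : ℝ) : EReal))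
      (𝓝[>] (0:ℝ)) := by
  have hI : ∀ᶠ ε in 𝓝[>] (0 : ℝ), ε ∈ Ioo (0 : ℝ) 1 := Ioo_mem_nhdsGT zero_lt_one
  refine le_antisymm ?_ ?_
  · refine limsup_le_limsup ?_
    filter_upwards [hI] with ε hε
    exact EReal.div_le_div_right_of_nonneg (by exact_mod_cast (log_pos_of hε).le)
      (le_supinf hT hε.1 hδ0 hδ)
  · refine EReal.le_of_forall_lt_iff_le.1 fun b hb => ?_
    obtain ⟨a, ha, hab⟩ := EReal.lt_iff_exists_real_btwn.1 hb
    have hab : a < b := by exact_mod_cast hab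
    have h1 := eventually_lt_of_limsup_lt ha
    have ht : Tendsto (fun ε : ℝ => ε / 4) (𝓝[>] (0 : ℝ)) (𝓝[>] (0 : ℝ)) := by
      refine tendsto_nhdsWithin_iff.2 ⟨?_, ?_⟩
      · have : Tendsto (fun ε : ℝ => ε / 4) (𝓝 (0 : ℝ)) (𝓝 (0 / 4)) := tendsto_id.div_const 4
        rw [zero_div] at this
        exact this.mono_left nhdsWithin_le_nhds
      · filter_upwards [self_mem_nhdsWithin] with ε hε
        have hε : 0 < ε := hε
        exact (show 0 < ε / 4 by linarith)
    have h2 := ht.eventually h1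
    have hlog : Tendsto (fun ε : ℝ => Real.log (1 / ε)) (𝓝[>] (0 : ℝ)) atTop := by
      simp only [one_div]
      exact Real.tendsto_log_atTop.comp tendsto_inv_nhdsGT_zero
    have h3 := hlog.eventually_ge_atTop (a * Real.log 4 / (b - a))
    refine limsup_le_of_le (by isBoundedDefault) ?_
    filter_upwards [hI, h2, h3] with ε hε h2 h3
    have hl := log_pos_of hε
    have hl4 : 0 < Real.log (1 / (ε / 4)) := log_pos_of ⟨by linarith [hε.1], by linarith [hε.1, hε.2]⟩
    have e4 : Real.log (1 / (ε / 4)) = Real.log 4 + Real.log (1 / ε) := by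
      rw [← Real.log_mul (by norm_num) (by have := hε.1; positivity)]
      congr 1
      have := hε.1.ne'
      field_simp
    rw [EReal.div_le_iff_le_mul (by exact_mod_cast hl) (EReal.coe_ne_top _)]
    refine (supinf_le T hε.1 hδ).trans ?_
    have h5 := h2.le
    rw [EReal.div_le_iff_le_mul (by exact_mod_cast hl4) (EReal.coe_ne_top _)] at h5
    refine h5.trans ?_
    rw [← EReal.coe_mul, ← EReal.coe_mul, EReal.coe_le_coe_iff, e4]
    rw [div_le_iff₀ (by linarith)] at h3
    nlinarith

end

end MMD

section Theorems

variable [MetricSpace X] [CompactSpace X] [Nonempty X] [MeasurableSpace X] [BorelSpace X]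

/-- Variational principle for the upper metric mean dimension in terms of Shapira's
entropy of finite open covers of small diameter (Theorem 3.2, first part). -/
theorem upper_mdim_eq_limsup_shapira (T : X → X) (hT : IsHomeomorph T)
    (δ : ℝ) (hδ : δ ∈ Set.Ioo (0:ℝ) 1) :
    mdimUpper T = limsup (fun ε : ℝ =>
      (⨆ μ ∈ ergodicMeasures T, ⨅ U ∈ {U : Finset (Set X) |
          IsFiniteOpenCover U ∧ ∀ V ∈ U, Metric.diam V ≤ ε}, shapiraEnt T μ U δ)
        / ((Real.log (1 / ε) : ℝ) : EReal)) (𝓝[>] (0:ℝ)) := by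
  exact MMD.main hT.continuous hδ.1 hδ.2

end Theorems
end

section
/- Let (X, d, T) be a topological dynamical system. Then for every δ ∈ (0,1), the lower metric mean dimension satisfies mdim̲_M(X,d,T) = liminf_{ε→0} (1/log(1/ε)) · sup_{μ ∈ E_T(X)} inf{ h_μ^S(U, δ) : U a finite open cover of X with diam(U) ≤ ε }. -/
open Filter MeasureTheory Set Topology

variable {X : Type*}

/-! ### Covering numbers -/

/-- Number of elements of the family `C` needed to cover `A`. -/
noncomputable def covN (C : Set (Set X)) (A : Set X) : ℕ :=
  sInf {m | ∃ F : Finset (Set X), ↑F ⊆ C ∧ A ⊆ ⋃₀ (F : Set (Set X)) ∧ F.card = m}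

theorem covN_le {C : Set (Set X)} {A : Set X} (F : Finset (Set X)) (hF : ↑F ⊆ C)
    (hA : A ⊆ ⋃₀ (F : Set (Set X))) : covN C A ≤ F.card :=
  Nat.sInf_le ⟨F, hF, hA, rfl⟩

theorem covN_empty (C : Set (Set X)) : covN C ∅ = 0 :=
  Nat.le_zero.1 (covN_le (C := C) (A := ∅) ∅ (by simp) (by simp))

theorem mem_dynRefine_iff {T : X → X} {U : Finset (Set X)} {n : ℕ} {V : Set X} :
    V ∈ dynRefine T U n ↔ ∃ g : ℕ → Set X, (∀ i < n, g i ∈ U) ∧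
      V = {x | ∀ i < n, T^[i] x ∈ g i} := by
  constructor
  · rintro ⟨f, hf, rfl⟩
    refine ⟨fun i => if h : i < n then f ⟨i, h⟩ else univ, ?_, ?_⟩
    · intro i hi
      simpa [hi] using hf _
    · ext x
      simp only [mem_iInter, mem_preimage, mem_ofPred_eq]
      constructor
      · intro h i hi
        simpa [hi] using h ⟨i, hi⟩
      · intro h i
        simpa using h i i.2
  · rintro ⟨g, hg, rfl⟩
    refine ⟨fun i => g i, fun i => hg i i.2, ?_⟩
    ext x
    simp only [mem_iInter, mem_preimage, mem_ofPred_eq]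
    exact ⟨fun h i => h i i.2, fun h i hi => h ⟨i, hi⟩⟩

theorem dynRefine_finite (T : X → X) (U : Finset (Set X)) (n : ℕ) :
    (dynRefine T U n).Finite := by
  have : dynRefine T U n ⊆
      (fun f : Fin n → U => ⋂ i : Fin n, T^[(i : ℕ)] ⁻¹' (f i : Set X)) '' univ := by
    rintro V ⟨f, hf, rfl⟩
    exact ⟨fun i => ⟨f i, hf i⟩, trivial, rfl⟩
  exact (Set.finite_univ.image _).subset this

theorem dynRefine_cover {T : X → X} {U : Finset (Set X)} (hU : ⋃₀ (U : Set (Set X)) = univ)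
    (n : ℕ) : ⋃₀ dynRefine T U n = univ := by
  rw [eq_univ_iff_forall]
  intro x
  have : ∀ i : ℕ, ∃ V ∈ U, T^[i] x ∈ V := fun i => by
    have : T^[i] x ∈ ⋃₀ (U : Set (Set X)) := by rw [hU]; trivial
    simpa using this
  choose g hg hg' using this
  exact ⟨_, mem_dynRefine_iff.2 ⟨g, fun i _ => hg i, rfl⟩, fun i _ => hg' i⟩

theorem covN_spec {C : Set (Set X)} (hfin : C.Finite) (hC : ⋃₀ C = univ) (A : Set X) :
    ∃ F : Finset (Set X), ↑F ⊆ C ∧ A ⊆ ⋃₀ (F : Set (Set X)) ∧ F.card = covN C A := by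
  have hne : {m | ∃ F : Finset (Set X), ↑F ⊆ C ∧ A ⊆ ⋃₀ (F : Set (Set X)) ∧ F.card = m}.Nonempty :=
    ⟨_, hfin.toFinset, by simp, by simp [hC], rfl⟩
  exact Nat.sInf_mem hne

theorem covN_mono {C : Set (Set X)} (hfin : C.Finite) (hC : ⋃₀ C = univ) {A B : Set X}
    (h : A ⊆ B) : covN C A ≤ covN C B := by
  obtain ⟨F, hF, hB, hc⟩ := covN_spec hfin hC B
  exact hc ▸ covN_le F hF (h.trans hB)

theorem covN_union {C : Set (Set X)} (hfin : C.Finite) (hC : ⋃₀ C = univ) (A B : Set X) :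
    covN C (A ∪ B) ≤ covN C A + covN C B := by
  classical
  obtain ⟨F, hF, hA, hc⟩ := covN_spec hfin hC A
  obtain ⟨F', hF', hB, hc'⟩ := covN_spec hfin hC B
  refine (covN_le (F ∪ F') (by simp [hF, hF']) ?_).trans
    ((Finset.card_union_le _ _).trans_eq (by rw [hc, hc']))
  rw [Finset.coe_union, sUnion_union]
  exact union_subset_union hA hB

theorem covN_biUnion {C : Set (Set X)} (hfin : C.Finite) (hC : ⋃₀ C = univ) {ι : Type*}
    (s : Finset ι) (A : ι → Set X) :
    covN C (⋃ i ∈ s, A i) ≤ ∑ i ∈ s, covN C (A i) := by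
  classical
  induction s using Finset.induction_on with
  | empty => simp [covN_empty]
  | insert a s ha ih =>
    rw [Finset.set_biUnion_insert, Finset.sum_insert ha]
    exact (covN_union hfin hC _ _).trans (by gcongr)

theorem covN_pos {C : Set (Set X)} (hfin : C.Finite) (hC : ⋃₀ C = univ) {A : Set X}
    (hA : A.Nonempty) : 0 < covN C A := by
  obtain ⟨F, hF, hA', hc⟩ := covN_spec hfin hC A
  rw [← hc, Finset.card_pos]
  obtain ⟨x, hx⟩ := hA
  obtain ⟨V, hV, -⟩ := hA' hx
  exact ⟨V, hV⟩

/-- Refinement of finite subfamilies. -/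
theorem exists_refine_finset {C C' : Set (Set X)} (h : ∀ V ∈ C', ∃ W ∈ C, V ⊆ W)
    (F : Finset (Set X)) (hF : ↑F ⊆ C') :
    ∃ F' : Finset (Set X), ↑F' ⊆ C ∧ ⋃₀ (F : Set (Set X)) ⊆ ⋃₀ (F' : Set (Set X)) ∧
      F'.card ≤ F.card := by
  classical
  choose! φ hφ hφ' using h
  refine ⟨F.image φ, ?_, ?_, Finset.card_image_le⟩
  · intro W hW
    simp only [Finset.coe_image, mem_image] at hW
    obtain ⟨V, hV, rfl⟩ := hW
    exact hφ V (hF hV)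
  · rintro x ⟨V, hV, hx⟩
    exact ⟨φ V, by simpa using ⟨V, hV, rfl⟩, hφ' V (hF hV) hx⟩

theorem covN_le_of_refine {C C' : Set (Set X)} (hfin : C'.Finite) (hC' : ⋃₀ C' = univ)
    (h : ∀ V ∈ C', ∃ W ∈ C, V ⊆ W) (A : Set X) : covN C A ≤ covN C' A := by
  obtain ⟨F, hF, hA, hc⟩ := covN_spec hfin hC' A
  obtain ⟨F', hF', hs, hle⟩ := exists_refine_finset h F hF
  exact (covN_le F' hF' (hA.trans hs)).trans (hc ▸ hle)

theorem dynRefine_anti {T : X → X} {U : Finset (Set X)} {m n : ℕ} (h : m ≤ n) :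
    ∀ V ∈ dynRefine T U n, ∃ W ∈ dynRefine T U m, V ⊆ W := by
  intro V hV
  obtain ⟨g, hg, rfl⟩ := mem_dynRefine_iff.1 hV
  exact ⟨_, mem_dynRefine_iff.2 ⟨g, fun i hi => hg i (hi.trans_le h), rfl⟩,
    fun x hx i hi => hx i (hi.trans_le h)⟩

theorem dynRefine_refine {T : X → X} {U U' : Finset (Set X)} {n : ℕ}
    (h : ∀ V ∈ U', ∃ W ∈ U, V ⊆ W) :
    ∀ V ∈ dynRefine T U' n, ∃ W ∈ dynRefine T U n, V ⊆ W := by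
  intro V hV
  obtain ⟨g, hg, rfl⟩ := mem_dynRefine_iff.1 hV
  choose! φ hφ hφ' using h
  exact ⟨_, mem_dynRefine_iff.2 ⟨fun i => φ (g i), fun i hi => hφ _ (hg i hi), rfl⟩,
    fun x hx i hi => hφ' _ (hg i hi) (hx i hi)⟩

theorem dynRefine_inter {T : X → X} {U : Finset (Set X)} {m n : ℕ} {V W : Set X}
    (hV : V ∈ dynRefine T U m) (hW : W ∈ dynRefine T U n) :
    V ∩ T^[m] ⁻¹' W ∈ dynRefine T U (m + n) := by
  obtain ⟨g, hg, rfl⟩ := mem_dynRefine_iff.1 hV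
  obtain ⟨g', hg', rfl⟩ := mem_dynRefine_iff.1 hW
  refine mem_dynRefine_iff.2 ⟨fun i => if i < m then g i else g' (i - m), ?_, ?_⟩
  · intro i hi
    by_cases h : i < m
    · simpa [h] using hg i h
    · simpa [h] using hg' (i - m) (by omega)
  · ext x
    simp only [mem_inter_iff, mem_ofPred_eq, mem_preimage]
    constructor
    · rintro ⟨h1, h2⟩ i hi
      by_cases h : i < m
      · simpa [h] using h1 i h
      · have := h2 (i - m) (by omega)
        rw [← Function.iterate_add_apply, Nat.sub_add_cancel (by omega)] at this
        simpa [h] using this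
    · intro h
      refine ⟨fun i hi => by simpa [hi] using h i (by omega), fun i hi => ?_⟩
      have := h (i + m) (by omega)
      rw [← Function.iterate_add_apply]
      simpa using this

/-- Abbreviation: covering number of `A` by `U^n`. -/
noncomputable def aN (T : X → X) (U : Finset (Set X)) (n : ℕ) (A : Set X) : ℕ :=
  covN (dynRefine T U n) A

section aN
variable {T : X → X} {U : Finset (Set X)}

theorem aN_mul (hU : ⋃₀ (U : Set (Set X)) = univ) (m n : ℕ) (A B : Set X) :
    aN T U (m + n) (A ∩ T^[m] ⁻¹' B) ≤ aN T U m A * aN T U n B := by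
  classical
  obtain ⟨F, hF, hA, hc⟩ := covN_spec (dynRefine_finite T U m) (dynRefine_cover hU m) A
  obtain ⟨G, hG, hB, hd⟩ := covN_spec (dynRefine_finite T U n) (dynRefine_cover hU n) B
  refine (covN_le ((F ×ˢ G).image fun p => p.1 ∩ T^[m] ⁻¹' p.2) ?_ ?_).trans
    (Finset.card_image_le.trans_eq ?_)
  · intro V hV
    simp only [Finset.coe_image, mem_image, Finset.mem_coe, Finset.mem_product] at hV
    obtain ⟨p, hp, rfl⟩ := hV
    exact dynRefine_inter (hF hp.1) (hG hp.2)
  · rintro x ⟨hx, hx'⟩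
    obtain ⟨V, hV, hxV⟩ := hA hx
    obtain ⟨W, hW, hxW⟩ := hB hx'
    refine ⟨V ∩ T^[m] ⁻¹' W, ?_, hxV, hxW⟩
    simp only [Finset.coe_image, mem_image, Finset.mem_coe, Finset.mem_product]
    exact ⟨(V, W), ⟨hV, hW⟩, rfl⟩
  · rw [Finset.card_product, hc, hd]; rfl

theorem aN_mono (hU : ⋃₀ (U : Set (Set X)) = univ) (n : ℕ) {A B : Set X} (h : A ⊆ B) :
    aN T U n A ≤ aN T U n B :=
  covN_mono (dynRefine_finite T U n) (dynRefine_cover hU n) h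

theorem aN_mono_time (hU : ⋃₀ (U : Set (Set X)) = univ) {m n : ℕ} (h : m ≤ n) (A : Set X) :
    aN T U m A ≤ aN T U n A :=
  covN_le_of_refine (dynRefine_finite T U n) (dynRefine_cover hU n) (dynRefine_anti h) A

theorem aN_union (hU : ⋃₀ (U : Set (Set X)) = univ) (n : ℕ) (A B : Set X) :
    aN T U n (A ∪ B) ≤ aN T U n A + aN T U n B :=
  covN_union (dynRefine_finite T U n) (dynRefine_cover hU n) A B

theorem aN_biUnion (hU : ⋃₀ (U : Set (Set X)) = univ) (n : ℕ) {ι : Type*}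
    (s : Finset ι) (A : ι → Set X) :
    aN T U n (⋃ i ∈ s, A i) ≤ ∑ i ∈ s, aN T U n (A i) :=
  covN_biUnion (dynRefine_finite T U n) (dynRefine_cover hU n) s A

theorem aN_empty (n : ℕ) : aN T U n ∅ = 0 := covN_empty _

theorem aN_zero_le (A : Set X) : aN T U 0 A ≤ 1 := by
  refine covN_le {univ} ?_ (by simp)
  simp only [Finset.coe_singleton, singleton_subset_iff]
  exact mem_dynRefine_iff.2 ⟨fun _ => univ, by simp, by simp⟩

theorem aN_univ_pos [Nonempty X] (hU : ⋃₀ (U : Set (Set X)) = univ) (n : ℕ) :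
    0 < aN T U n univ :=
  covN_pos (dynRefine_finite T U n) (dynRefine_cover hU n) univ_nonempty

open Classical in
/-- number of visits to `A` along times `0, n, …, (m-1)n`. -/
noncomputable def visits (T : X → X) (A : Set X) (n m : ℕ) (x : X) : ℕ :=
  ((Finset.range m).filter fun i => T^[i * n] x ∈ A).card

theorem visits_zero (A : Set X) (n : ℕ) (x : X) : visits T A n 0 x = 0 := by simp [visits]

open Classical in
theorem visits_succ (A : Set X) (n m : ℕ) (x : X) :
    visits T A n (m + 1) x = (if x ∈ A then 1 else 0) + visits T A n m (T^[n] x) := by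
  unfold visits
  simp only [Finset.card_filter]
  rw [Finset.sum_range_succ']
  simp only [zero_mul, Function.iterate_zero, id]
  rw [add_comm]
  congr 1
  refine Finset.sum_congr rfl fun i _ => ?_
  rw [← Function.iterate_add_apply, add_mul, one_mul]

/-- Blocks count. -/
theorem aN_blocks (hU : ⋃₀ (U : Set (Set X)) = univ) {n : ℕ} {A : Set X} {Q l : ℝ}
    (hQ : (aN T U n univ : ℝ) ≤ Q) (hl : 0 ≤ l) (hA : (aN T U n A : ℝ) ≤ l * Q) (m : ℕ) :
    ∀ k : ℕ, (aN T U (m * n) {x | k ≤ visits T A n m x} : ℝ) ≤ (2 * Q) ^ m * l ^ k := by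
  have hQ0 : 0 ≤ Q := le_trans (Nat.cast_nonneg _) hQ
  induction m with
  | zero =>
    intro k
    rcases Nat.eq_zero_or_pos k with rfl | hk
    · simpa using (aN_zero_le (T := T) (U := U) _)
    · have : {x : X | k ≤ visits T A n 0 x} = ∅ := by
        ext x; simp [visits_zero]; omega
      rw [this, aN_empty]
      simp; positivity
  | succ m ih =>
    have hmul : ∀ (B D : Set X), (aN T U ((m+1) * n) (B ∩ T^[n] ⁻¹' D) : ℝ)
        ≤ aN T U n B * aN T U (m * n) D := by
      intro B D
      have := aN_mul (T := T) hU n (m * n) B D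
      rw [show (m + 1) * n = n + m * n by ring]
      exact_mod_cast this
    intro k
    rcases k with _ | k
    · have h1 : {x : X | 0 ≤ visits T A n (m+1) x} ⊆
          univ ∩ T^[n] ⁻¹' {x | 0 ≤ visits T A n m x} := by intro x; simp
      have h2 : (aN T U ((m+1) * n) {x : X | 0 ≤ visits T A n (m+1) x} : ℝ) ≤
          aN T U ((m+1) * n) (univ ∩ T^[n] ⁻¹' {x | 0 ≤ visits T A n m x}) := by
        exact_mod_cast aN_mono hU _ h1
      refine h2.trans ((hmul _ _).trans ?_)
      have := ih 0
      simp only [pow_zero, mul_one] at this ⊢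
      calc _ ≤ Q * (2 * Q) ^ m := by gcongr
        _ ≤ (2 * Q) * (2 * Q) ^ m := by gcongr; linarith
        _ = _ := by ring
    · have h1 : {x : X | k + 1 ≤ visits T A n (m+1) x} ⊆
          (A ∩ T^[n] ⁻¹' {x | k ≤ visits T A n m x}) ∪
          (univ ∩ T^[n] ⁻¹' {x | k + 1 ≤ visits T A n m x}) := by
        intro x hx
        simp only [mem_ofPred_eq, visits_succ] at hx
        by_cases hxA : x ∈ A
        · left; simp [hxA] at hx ⊢; omega
        · right; simp [hxA] at hx ⊢; omega
      have h2 : (aN T U ((m+1) * n) {x : X | k + 1 ≤ visits T A n (m+1) x} : ℝ) ≤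
          aN T U ((m+1) * n) (A ∩ T^[n] ⁻¹' {x | k ≤ visits T A n m x}) +
          aN T U ((m+1) * n) (univ ∩ T^[n] ⁻¹' {x | k + 1 ≤ visits T A n m x}) := by
        exact_mod_cast (aN_mono hU _ h1).trans (aN_union hU _ _ _)
      refine h2.trans ((add_le_add (hmul _ _) (hmul _ _)).trans ?_)
      calc _ ≤ (l * Q) * ((2 * Q) ^ m * l ^ k) + Q * ((2 * Q) ^ m * l ^ (k + 1)) := by
            have := ih k
            have := ih (k + 1)
            gcongr
        _ = _ := by ring

/-- pigeonhole over residues. -/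
theorem visits_pigeon {n : ℕ} (hn : 0 < n) (A : Set X) (N : ℕ) (x : X) :
    ∃ j < n, visits T A 1 N x ≤ n * visits T A n (N / n + 1) (T^[j] x) := by
  classical
  have key : visits T A 1 N x ≤
      ∑ j ∈ Finset.range n, visits T A n (N / n + 1) (T^[j] x) := by
    unfold visits
    rw [← Finset.card_sigma]
    refine Finset.card_le_card_of_injOn (fun t => (⟨t % n, t / n⟩ : Σ _ : ℕ, ℕ)) ?_ ?_
    · intro t ht
      simp only [Finset.coe_filter, Finset.mem_range, mem_ofPred_eq, mul_one] at ht
      simp only [Finset.coe_sigma, mem_sigma_iff, Finset.mem_coe, Finset.mem_range,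
        Finset.mem_filter]
      refine ⟨Nat.mod_lt _ hn, Nat.lt_succ_of_le (Nat.div_le_div_right ht.1.le), ?_⟩
      rw [← Function.iterate_add_apply, mul_comm, Nat.div_add_mod]
      exact ht.2
    · intro t _ s _ h
      simp only [Sigma.mk.injEq, heq_eq_eq] at h
      rw [← Nat.div_add_mod t n, ← Nat.div_add_mod s n, h.1, h.2]
  by_contra! hcon
  have h2 : n * ∑ j ∈ Finset.range n, visits T A n (N / n + 1) (T^[j] x) <
      n * visits T A 1 N x := by
    rw [Finset.mul_sum]
    calc _ < ∑ j ∈ Finset.range n, visits T A 1 N x :=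
          Finset.sum_lt_sum_of_nonempty (by simpa using hn.ne')
            fun j hj => hcon j (Finset.mem_range.1 hj)
      _ = _ := by simp
  exact absurd key (not_le.2 (lt_of_mul_lt_mul_left h2 (Nat.zero_le _)))

theorem aN_visits (hU : ⋃₀ (U : Set (Set X)) = univ) {n : ℕ} (hn : 0 < n) {A : Set X}
    {Q l : ℝ} (hQ1 : 1 ≤ Q)
    (hQ : (aN T U n univ : ℝ) ≤ Q) (hl : 0 < l) (hl1 : l ≤ 1) (hA : (aN T U n A : ℝ) ≤ l * Q)
    (N : ℕ) (θ : ℝ) :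
    (aN T U N {x | θ * N ≤ visits T A 1 N x} : ℝ) ≤
      n * Q * ((2 * Q) ^ ((N : ℝ) / n + 1) * l ^ (θ * N / n)) := by
  set k : ℕ := ⌈θ * N / n⌉₊
  set m := N / n + 1
  have hn' : (0:ℝ) < n := by exact_mod_cast hn
  have hsub : {x : X | θ * N ≤ visits T A 1 N x} ⊆
      ⋃ j ∈ Finset.range n, (univ ∩ T^[j] ⁻¹' {x | k ≤ visits T A n m x}) := by
    intro x hx
    obtain ⟨j, hj, hv⟩ := visits_pigeon (T := T) hn A N x
    simp only [mem_iUnion, Finset.mem_range]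
    refine ⟨j, hj, trivial, ?_⟩
    simp only [mem_preimage, mem_ofPred_eq, k]
    rw [Nat.ceil_le, div_le_iff₀ hn']
    have hv' : (visits T A 1 N x : ℝ) ≤ n * visits T A n m (T^[j] x) := by exact_mod_cast hv
    simp only [mem_ofPred_eq] at hx
    linarith
  have h1 : aN T U N {x : X | θ * N ≤ visits T A 1 N x} ≤
      ∑ j ∈ Finset.range n, aN T U n univ * aN T U (m * n) {x | k ≤ visits T A n m x} := by
    refine (aN_mono hU _ hsub).trans ((aN_biUnion hU _ _ _).trans (Finset.sum_le_sum ?_))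
    intro j hj
    have hj' := Finset.mem_range.1 hj
    have hN : N ≤ j + m * n := by
      have := Nat.div_add_mod N n
      have := Nat.mod_lt N hn
      have : m * n = n * (N / n) + n := by simp only [m]; ring
      omega
    refine (aN_mono_time hU hN _).trans ((aN_mul hU _ _ _ _).trans ?_)
    gcongr
    exact aN_mono_time hU hj'.le _
  have h2 : (aN T U N {x : X | θ * N ≤ visits T A 1 N x} : ℝ) ≤
      n * (aN T U n univ * aN T U (m * n) {x | k ≤ visits T A n m x}) := by
    have : (aN T U N {x : X | θ * N ≤ visits T A 1 N x} : ℝ) ≤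
      ((∑ j ∈ Finset.range n, aN T U n univ * aN T U (m * n) {x | k ≤ visits T A n m x} : ℕ) : ℝ) :=
      by exact_mod_cast h1
    simpa using this
  refine h2.trans ?_
  have h3 := aN_blocks (T := T) hU hQ hl.le hA m k
  have h4 : (2 * Q) ^ m ≤ (2 * Q) ^ ((N : ℝ) / n + 1) := by
    rw [← Real.rpow_natCast]
    apply Real.rpow_le_rpow_of_exponent_le (by linarith)
    simp only [m]
    push_cast
    gcongr
    exact Nat.cast_div_le
  have h5 : l ^ k ≤ l ^ (θ * N / n) := by
    rw [← Real.rpow_natCast]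
    apply Real.rpow_le_rpow_of_exponent_ge hl hl1
    exact Nat.le_ceil _
  calc _ ≤ n * (Q * ((2 * Q) ^ m * l ^ k)) := by gcongr
    _ ≤ n * (Q * ((2 * Q) ^ ((N : ℝ) / n + 1) * l ^ (θ * N / n))) := by gcongr
    _ = _ := by ring

end aN

/-! ### Exponential smallness -/

/-- `V N` is covered by exponentially fewer sets than `exp (N h)`. -/
def SmallSeq (T : X → X) (U : Finset (Set X)) (h : ℝ) (V : ℕ → Set X) : Prop :=
  ∃ γ > 0, ∀ᶠ N : ℕ in atTop, (aN T U N (V N) : ℝ) ≤ Real.exp (N * (h - γ))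

section small
variable {T : X → X} {U : Finset (Set X)} {h : ℝ}

theorem SmallSeq.mono (hU : ⋃₀ (U : Set (Set X)) = univ) {V W : ℕ → Set X}
    (hW : SmallSeq T U h W) (hVW : ∀ᶠ N in atTop, V N ⊆ W N) : SmallSeq T U h V := by
  obtain ⟨γ, hγ, H⟩ := hW
  refine ⟨γ, hγ, ?_⟩
  filter_upwards [H, hVW] with N h1 h2
  exact le_trans (by exact_mod_cast aN_mono hU N h2) h1

theorem SmallSeq.empty : SmallSeq T U h (fun _ => ∅) := by
  refine ⟨1, one_pos, Eventually.of_forall fun N => ?_⟩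
  simp only [aN_empty, Nat.cast_zero]
  positivity

theorem SmallSeq.union (hU : ⋃₀ (U : Set (Set X)) = univ) {V W : ℕ → Set X}
    (hV : SmallSeq T U h V) (hW : SmallSeq T U h W) : SmallSeq T U h (fun N => V N ∪ W N) := by
  obtain ⟨γ, hγ, H⟩ := hV
  obtain ⟨γ', hγ', H'⟩ := hW
  set c := min γ γ' with hc
  have hc0 : 0 < c := lt_min hγ hγ'
  refine ⟨c / 2, by positivity, ?_⟩
  have hlim : ∀ᶠ N : ℕ in atTop, Real.log 2 ≤ N * (c / 2) :=
    (tendsto_natCast_atTop_atTop.atTop_mul_const (by positivity)).eventually_ge_atTop _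
  filter_upwards [H, H', hlim] with N h1 h2 h3
  have hN : (0:ℝ) ≤ N := Nat.cast_nonneg _
  have e1 : Real.exp (N * (h - γ)) ≤ Real.exp (N * (h - c)) := by
    gcongr; exact min_le_left _ _
  have e2 : Real.exp (N * (h - γ')) ≤ Real.exp (N * (h - c)) := by
    gcongr; exact min_le_right _ _
  have h4 : (aN T U N (V N ∪ W N) : ℝ) ≤ aN T U N (V N) + aN T U N (W N) := by
    exact_mod_cast aN_union hU N _ _
  calc _ ≤ 2 * Real.exp (N * (h - c)) := by linarith
    _ = Real.exp (Real.log 2 + N * (h - c)) := by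
      rw [Real.exp_add, Real.exp_log two_pos]
    _ ≤ _ := by
      rw [Real.exp_le_exp]; linarith

theorem not_smallSeq_univ (hlow : ∀ n : ℕ, Real.exp (n * h) ≤ aN T U n univ) :
    ¬ SmallSeq T U h (fun _ => univ) := by
  rintro ⟨γ, hγ, H⟩
  obtain ⟨N, h1, h2⟩ := (H.and (eventually_gt_atTop 0)).exists
  have := (hlow N).trans h1
  rw [Real.exp_le_exp] at this
  have hN : (0:ℝ) < N := by exact_mod_cast h2
  nlinarith [mul_pos hN hγ]

theorem smallSeq_visits [Nonempty X] (hU : ⋃₀ (U : Set (Set X)) = univ)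
    (hup : ∀ η > 0, ∀ᶠ n : ℕ in atTop, (aN T U n univ : ℝ) ≤ Real.exp (n * (h + η)))
    {γ θ : ℝ} (hγ : 0 < γ) (hθ : 0 < θ) :
    ∀ᶠ n : ℕ in atTop, ∀ A : Set X, (aN T U n A : ℝ) ≤ Real.exp (n * (h - γ)) →
      SmallSeq T U h (fun N => {x | θ * N ≤ visits T A 1 N x}) := by
  set η := θ * γ / 4 with hη
  have hη0 : 0 < η := by positivity
  have hlim : ∀ᶠ n : ℕ in atTop, Real.log 2 ≤ n * η :=
    (tendsto_natCast_atTop_atTop.atTop_mul_const hη0).eventually_ge_atTop _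
  filter_upwards [hup η hη0, hlim, eventually_gt_atTop 0] with n hn1 hn2 hn0 A hA
  refine ⟨η, hη0, ?_⟩
  set Q := Real.exp (n * (h + η)) with hQ
  set l := Real.exp (-(n * (η + γ))) with hl
  have hn' : (0:ℝ) < n := by exact_mod_cast hn0
  have hlQ : l * Q = Real.exp (n * (h - γ)) := by
    rw [hQ, hl, ← Real.exp_add]; congr 1; ring
  have hQ1 : 1 ≤ Q := le_trans (by exact_mod_cast aN_univ_pos (T := T) hU n) hn1
  have hl1 : l ≤ 1 := by
    rw [hl, Real.exp_le_one_iff]; nlinarith [mul_pos hn' (add_pos hη0 hγ)]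
  set D := Real.log n + n * (h + η) + Real.log 2 + n * (h + η) with hD
  have hlim2 : ∀ᶠ N : ℕ in atTop, D ≤ N * η :=
    (tendsto_natCast_atTop_atTop.atTop_mul_const hη0).eventually_ge_atTop _
  filter_upwards [hlim2] with N hN
  refine (aN_visits hU hn0 hQ1 hn1 (Real.exp_pos _) hl1 (hlQ ▸ hA) N θ).trans ?_
  have e1 : (2 * Q) ^ ((N : ℝ) / n + 1) =
      Real.exp ((Real.log 2 + n * (h + η)) * ((N : ℝ) / n + 1)) := by
    rw [Real.exp_mul, Real.exp_add, Real.exp_log two_pos]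
  have e2 : l ^ (θ * N / n) = Real.exp (-(n * (η + γ)) * (θ * N / n)) := by
    rw [Real.exp_mul]
  have e3 : (n : ℝ) = Real.exp (Real.log n) := (Real.exp_log hn').symm
  have e4 : (n : ℝ) * Q * ((2 * Q) ^ ((N : ℝ) / n + 1) * l ^ (θ * N / n)) =
      Real.exp (Real.log n + n * (h + η) + ((Real.log 2 + n * (h + η)) * ((N : ℝ) / n + 1)
        + -(n * (η + γ)) * (θ * N / n))) := by
    rw [e1, e2, Real.exp_add, Real.exp_add, Real.exp_add, Real.exp_log hn']
  rw [e4, Real.exp_le_exp]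
  have hNn : (0:ℝ) ≤ N := Nat.cast_nonneg _
  have e5 : Real.log n + n * (h + η) + ((Real.log 2 + n * (h + η)) * ((N : ℝ) / n + 1)
        + -(n * (η + γ)) * (θ * N / n)) =
      D + N * (h + η) - θ * N * (η + γ) + Real.log 2 * N / n := by
    rw [hD]; field_simp; ring
  have e6 : Real.log 2 * N / n ≤ η * N := by
    rw [div_le_iff₀ hn']; nlinarith
  rw [e5]
  have e7 : θ * N * γ = 4 * (N * η) := by rw [hη]; ring
  have e8 : 0 ≤ θ * N * η := by positivity
  nlinarith

theorem exists_rate [Nonempty X] (T : X → X) {U : Finset (Set X)}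
    (hU : ⋃₀ (U : Set (Set X)) = univ) :
    ∃ h : ℝ, (∀ n : ℕ, Real.exp (n * h) ≤ aN T U n univ) ∧
      (∀ η > 0, ∀ᶠ n : ℕ in atTop, (aN T U n univ : ℝ) ≤ Real.exp (n * (h + η))) ∧
      Tendsto (fun n : ℕ => Real.log (aN T U n univ) / n) atTop (𝓝 h) := by
  have hpos : ∀ n, (0:ℝ) < aN T U n univ := fun n => by exact_mod_cast aN_univ_pos hU n
  have hsub : Subadditive (fun n => Real.log (aN T U n univ)) := by
    intro m n
    rw [← Real.log_mul (hpos m).ne' (hpos n).ne']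
    apply Real.log_le_log (hpos _)
    have := aN_mul (T := T) hU m n univ univ
    rw [preimage_univ, univ_inter] at this
    exact_mod_cast this
  have hbdd : BddBelow (range fun n : ℕ => Real.log (aN T U n univ) / n) := by
    refine ⟨0, ?_⟩
    rintro _ ⟨n, rfl⟩
    exact div_nonneg (Real.log_natCast_nonneg _) (Nat.cast_nonneg _)
  refine ⟨hsub.lim, ?_, ?_, hsub.tendsto_lim hbdd⟩
  · intro n
    rcases Nat.eq_zero_or_pos n with rfl | hn
    · simpa using Nat.succ_le_of_lt (aN_univ_pos (T := T) hU 0)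
    · have hn' : (0:ℝ) < n := by exact_mod_cast hn
      have := hsub.lim_le_div hbdd hn.ne'
      rw [le_div_iff₀ hn'] at this
      rw [← Real.le_log_iff_exp_le (hpos n)]
      linarith
  · intro η hη
    have := (hsub.tendsto_lim hbdd).eventually_lt_const (lt_add_of_pos_right _ hη)
    filter_upwards [this, eventually_gt_atTop 0] with n h1 h2
    have hn' : (0:ℝ) < n := by exact_mod_cast h2
    rw [div_lt_iff₀ hn'] at h1
    rw [← Real.log_le_iff_le_exp (hpos n)]
    linarith

end small

/-! ### Empirical measures -/

section emp
variable [MeasurableSpace X]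

/-- Empirical measure of the orbit segment of length `n`. -/
noncomputable def emp (T : X → X) (n : ℕ) (x : X) : ProbabilityMeasure X :=
  if hn : n = 0 then ⟨Measure.dirac x, inferInstance⟩ else
  ⟨(n : ENNReal)⁻¹ • ∑ k ∈ Finset.range n, Measure.dirac (T^[k] x), ⟨by
    simp only [Measure.smul_apply, Measure.coe_finsetSum, Finset.sum_apply, measure_univ,
      Finset.sum_const, Finset.card_range, smul_eq_mul, nsmul_eq_mul, mul_one]
    exact ENNReal.inv_mul_cancel (by exact_mod_cast hn) (ENNReal.natCast_ne_top n)⟩⟩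

theorem emp_coe (T : X → X) {n : ℕ} (hn : 0 < n) (x : X) :
    (emp T n x : Measure X) = (n : ENNReal)⁻¹ • ∑ k ∈ Finset.range n, Measure.dirac (T^[k] x) := by
  simp [emp, hn.ne']

theorem emp_integral (T : X → X) {n : ℕ} (hn : 0 < n) (x : X) {f : X → ℝ}
    (hf : StronglyMeasurable f) :
    ∫ y, f y ∂(emp T n x : Measure X) = (∑ k ∈ Finset.range n, f (T^[k] x)) / n := by
  rw [emp_coe T hn, integral_smul_measure, integral_finsetSum_measure]
  · simp only [integral_dirac' _ _ hf]
    simp [div_eq_inv_mul]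
  · intro i _
    exact integrable_dirac' hf (by simp [enorm])

theorem emp_visits (T : X → X) {n : ℕ} (hn : 0 < n) (x : X) {A : Set X} (hA : MeasurableSet A)
    {θ : ℝ} (h : ENNReal.ofReal θ < (emp T n x : Measure X) A) :
    θ * n ≤ visits T A 1 n x := by
  classical
  have hn' : (0:ℝ) < n := by exact_mod_cast hn
  have : (emp T n x : Measure X) A = (n : ENNReal)⁻¹ * visits T A 1 n x := by
    rw [emp_coe T hn]
    simp only [Measure.smul_apply, Measure.coe_finsetSum, Finset.sum_apply,
      Measure.dirac_apply' _ hA, smul_eq_mul, visits, Finset.card_filter, mul_one]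
    congr 1
    push_cast
    rfl
  rw [this] at h
  have h2 : ENNReal.ofReal θ < ENNReal.ofReal ((n:ℝ)⁻¹ * visits T A 1 n x) := by
    rw [ENNReal.ofReal_mul (by positivity), ENNReal.ofReal_inv_of_pos hn',
      ENNReal.ofReal_natCast, ENNReal.ofReal_natCast]
    exact h
  have h3 := (ENNReal.ofReal_lt_ofReal_iff'.1 h2).1
  rw [← div_eq_inv_mul, lt_div_iff₀ hn'] at h3
  exact h3.le

end emp

/-! ### Measures carrying full growth -/

section growth
set_option linter.unusedSectionVars false
variable [MetricSpace X] [CompactSpace X] [Nonempty X] [MeasurableSpace X] [BorelSpace X]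
variable {T : X → X} {U : Finset (Set X)} {h : ℝ}

/-- Measures such that orbit segments with empirical measure nearby have full growth rate. -/
def KSet (T : X → X) (U : Finset (Set X)) (h : ℝ) : Set (ProbabilityMeasure X) :=
  {μ | ∀ G ∈ 𝓝 μ, ¬ SmallSeq T U h (fun N => {x | emp T N x ∈ G})}

theorem smallSeq_of_disjoint (hU : ⋃₀ (U : Set (Set X)) = univ)
    {S : Set (ProbabilityMeasure X)} (hS : IsCompact S) (hd : ∀ μ ∈ S, μ ∉ KSet T U h) :
    SmallSeq T U h (fun N => {x | emp T N x ∈ S}) := by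
  refine hS.induction_on (p := fun S => SmallSeq T U h (fun N => {x | emp T N x ∈ S}))
    SmallSeq.empty ?_ ?_ ?_
  · intro s t hst ht
    exact ht.mono hU (Eventually.of_forall fun N x hx => hst hx)
  · intro s t hs ht
    exact hs.union hU ht
  · intro μ hμ
    have := hd μ hμ
    simp only [KSet, mem_ofPred_eq, not_forall, not_not] at this
    obtain ⟨G, hG, hs⟩ := this
    exact ⟨G, mem_nhdsWithin_of_mem_nhds hG, hs⟩

theorem KSet_nonempty (hU : ⋃₀ (U : Set (Set X)) = univ)
    (hlow : ∀ n : ℕ, Real.exp (n * h) ≤ aN T U n univ) : (KSet T U h).Nonempty := by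
  by_contra hne
  rw [not_nonempty_iff_eq_empty] at hne
  have := smallSeq_of_disjoint (T := T) (h := h) hU (S := univ) isCompact_univ
    (by simp [hne])
  exact not_smallSeq_univ hlow (by simpa using this)

theorem KSet_isClosed : IsClosed (KSet T U h) := by
  rw [← isOpen_compl_iff, isOpen_iff_mem_nhds]
  intro μ hμ
  simp only [KSet, mem_compl_iff, mem_ofPred_eq, not_forall, not_not] at hμ
  obtain ⟨G, hG, hs⟩ := hμ
  filter_upwards [eventually_mem_nhds_iff.2 hG] with ν hν
  simp only [KSet, mem_compl_iff, mem_ofPred_eq, not_forall, not_not]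
  exact ⟨G, hν, hs⟩

theorem KSet_measure_le (hU : ⋃₀ (U : Set (Set X)) = univ)
    (hup : ∀ η > 0, ∀ᶠ n : ℕ in atTop, (aN T U n univ : ℝ) ≤ Real.exp (n * (h + η)))
    {μ : ProbabilityMeasure X} (hμ : μ ∈ KSet T U h) {γ θ : ℝ} (hγ : 0 < γ) (hθ : 0 < θ) :
    ∀ᶠ n : ℕ in atTop, ∀ A : Set X, IsOpen A → (aN T U n A : ℝ) ≤ Real.exp (n * (h - γ)) →
      (μ : Measure X) A ≤ ENNReal.ofReal θ := by
  filter_upwards [smallSeq_visits (T := T) hU hup hγ hθ] with n hn A hAo hA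
  by_contra! hcon
  have hl := ProbabilityMeasure.le_liminf_measure_open_of_tendsto
    (μs := fun ν : ProbabilityMeasure X => ν) (L := 𝓝 μ) tendsto_id hAo
  have hG : ∀ᶠ ν : ProbabilityMeasure X in 𝓝 μ, ENNReal.ofReal θ < (ν : Measure X) A :=
    eventually_lt_of_lt_liminf (hcon.trans_le hl)
  refine hμ _ hG ((hn A hA).mono hU ?_)
  filter_upwards [eventually_gt_atTop 0] with N hN x hx
  exact emp_visits T hN x hAo.measurableSet hx

theorem emp_continuous (hT : Continuous T) {n : ℕ} (hn : 0 < n) :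
    Continuous (emp T n) := by
  rw [ProbabilityMeasure.continuous_iff_forall_continuousMap_continuous_integral]
  intro f
  simp only [emp_integral T hn _ f.continuous.stronglyMeasurable]
  refine Continuous.div_const (continuous_finsetSum _ fun k _ => ?_) _
  exact f.continuous.comp (hT.iterate k)

theorem KSet_invariant (hU : ⋃₀ (U : Set (Set X)) = univ) (hT : Continuous T)
    {μ : ProbabilityMeasure X} (hμ : μ ∈ KSet T U h) :
    MeasurePreserving T (μ : Measure X) (μ : Measure X) := by
  refine ⟨hT.measurable, ?_⟩
  have : IsProbabilityMeasure (Measure.map T (μ : Measure X)) :=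
    Measure.isProbabilityMeasure_map hT.measurable.aemeasurable
  apply ext_of_forall_integral_eq_of_IsFiniteMeasure
  intro f
  rw [integral_map hT.measurable.aemeasurable f.continuous.aestronglyMeasurable]
  by_contra hne
  let g : C(X, ℝ) := ⟨fun x => f (T x) - f x, by fun_prop⟩
  have hint : ∀ ν : ProbabilityMeasure X, ∫ x, g x ∂(ν : Measure X) =
      ∫ x, f (T x) ∂(ν : Measure X) - ∫ x, f x ∂(ν : Measure X) := by
    intro ν
    refine integral_sub ?_ ?_
    · exact (show Continuous fun x => f (T x) by fun_prop).integrable_of_hasCompactSupport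
        (HasCompactSupport.of_compactSpace _)
    · exact f.continuous.integrable_of_hasCompactSupport (HasCompactSupport.of_compactSpace _)
  have hcont : Continuous fun ν : ProbabilityMeasure X => |∫ x, g x ∂(ν : Measure X)| :=
    (ProbabilityMeasure.continuous_integral_continuousMap g).abs
  set d := |∫ x, g x ∂(μ : Measure X)| with hd
  have hd0 : 0 < d := by rw [hd, abs_pos, hint]; exact sub_ne_zero.2 hne
  have hG : ∀ᶠ ν : ProbabilityMeasure X in 𝓝 μ, d / 2 < |∫ x, g x ∂(ν : Measure X)| :=
    hcont.continuousAt.eventually_const_lt (half_lt_self hd0)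
  refine hμ _ hG (SmallSeq.empty.mono hU ?_)
  have hlim : ∀ᶠ n : ℕ in atTop, 2 * ‖f‖ ≤ n * (d / 2) :=
    (tendsto_natCast_atTop_atTop.atTop_mul_const (by positivity)).eventually_ge_atTop _
  filter_upwards [hlim, eventually_gt_atTop 0] with N h1 h2 x hx
  exfalso
  have hN : (0:ℝ) < N := by exact_mod_cast h2
  have hx' : d / 2 < |∫ y, g y ∂(emp T N x : Measure X)| := hx
  rw [emp_integral T h2 x g.continuous.stronglyMeasurable] at hx'
  have hs : ∑ k ∈ Finset.range N, g (T^[k] x) = f (T^[N] x) - f x := by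
    have := Finset.sum_range_sub (fun k => f (T^[k] x)) N
    simp only [Function.iterate_succ_apply', Function.iterate_zero, id] at this
    exact this
  rw [hs, abs_div, abs_of_pos hN, lt_div_iff₀ hN] at hx'
  have h3 := f.norm_coe_le_norm (T^[N] x)
  have h4 := f.norm_coe_le_norm x
  have h5 := norm_sub_le (f (T^[N] x)) (f x)
  simp only [Real.norm_eq_abs] at h3 h4 h5
  linarith

end growth

/-! ### Ergodicity of a maximizer -/

section ergo
set_option linter.unusedSectionVars false
variable [MetricSpace X] [CompactSpace X] [Nonempty X] [MeasurableSpace X] [BorelSpace X]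
variable {T : X → X} {U : Finset (Set X)} {h : ℝ}

/-- A dense sequence of continuous functions. -/
noncomputable def fS (X : Type*) [MetricSpace X] [CompactSpace X] : ℕ → C(X, ℝ) :=
  TopologicalSpace.denseSeq C(X, ℝ)

/-- Weights. -/
noncomputable def cS (X : Type*) [MetricSpace X] [CompactSpace X] (i : ℕ) : ℝ :=
  (1 / 2) ^ i / (1 + ‖fS X i‖) ^ 2

theorem cS_pos (i : ℕ) : 0 < cS X i := by unfold cS; positivity

theorem cS_bound (i : ℕ) {u : ℝ} (hu : |u| ≤ ‖fS X i‖) :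
    cS X i * u ^ 2 ≤ (1 / 2 : ℝ) ^ i := by
  unfold cS
  rw [div_mul_eq_mul_div, div_le_iff₀ (by positivity)]
  have hsq : u ^ 2 ≤ (1 + ‖fS X i‖) ^ 2 := by
    rw [← sq_abs]
    exact pow_le_pow_left₀ (abs_nonneg u) (by linarith) 2
  exact mul_le_mul_of_nonneg_left hsq (by positivity)

theorem abs_integral_le (ν : Measure X) [IsProbabilityMeasure ν] (f : C(X, ℝ)) :
    |∫ x, f x ∂ν| ≤ ‖f‖ := by
  have := norm_integral_le_of_norm_le_const (μ := ν) (f := f) (C := ‖f‖)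
    (Eventually.of_forall fun x => f.norm_coe_le_norm x)
  simpa using this

/-- Strictly convex continuous functional on probability measures. -/
noncomputable def Phi (ν : ProbabilityMeasure X) : ℝ :=
  ∑' i, cS X i * (∫ x, fS X i x ∂(ν : Measure X)) ^ 2

theorem Phi_summable (ν : ProbabilityMeasure X) :
    Summable fun i => cS X i * (∫ x, fS X i x ∂(ν : Measure X)) ^ 2 :=
  Summable.of_nonneg_of_le (fun i => mul_nonneg (cS_pos i).le (sq_nonneg _))
    (fun i => cS_bound i (abs_integral_le _ _)) summable_geometric_two

theorem Phi_nonneg (ν : ProbabilityMeasure X) : 0 ≤ Phi ν :=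
  tsum_nonneg fun i => mul_nonneg (cS_pos i).le (sq_nonneg _)

theorem Phi_le (ν : ProbabilityMeasure X) : Phi ν ≤ 2 := by
  rw [← tsum_geometric_two]
  exact (Phi_summable ν).tsum_le_tsum (fun i => cS_bound i (abs_integral_le _ _))
    summable_geometric_two

theorem Phi_continuous : Continuous (Phi : ProbabilityMeasure X → ℝ) := by
  refine continuous_tsum (fun i => ?_) summable_geometric_two (fun i ν => ?_)
  · exact continuous_const.mul
      ((ProbabilityMeasure.continuous_integral_continuousMap (fS X i)).pow 2)
  · rw [Real.norm_of_nonneg (mul_nonneg (cS_pos i).le (sq_nonneg _))]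
    exact cS_bound i (abs_integral_le _ _)

theorem cont_integrable {f : X → ℝ} (hf : Continuous f) (ν : Measure X) [IsFiniteMeasure ν] :
    Integrable f ν :=
  hf.integrable_of_hasCompactSupport (HasCompactSupport.of_compactSpace _)

/-- Birkhoff averages. -/
noncomputable def avg (T : X → X) (L : ℕ) (f : C(X, ℝ)) (y : X) : ℝ :=
  ∫ x, f x ∂(emp T L y : Measure X)

theorem avg_continuous (hT : Continuous T) {L : ℕ} (hL : 0 < L) (f : C(X, ℝ)) :
    Continuous (avg T L f) :=
  (ProbabilityMeasure.continuous_integral_continuousMap f).comp (emp_continuous hT hL)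

theorem avg_eq {L : ℕ} (hL : 0 < L) (f : C(X, ℝ)) (y : X) :
    avg T L f y = (∑ k ∈ Finset.range L, f (T^[k] y)) / L :=
  emp_integral T hL y f.continuous.stronglyMeasurable

/-- Averages have the same integral over invariant sets. -/
theorem integral_avg (hT : Continuous T) {μ : Measure X} [IsProbabilityMeasure μ]
    (hμ : MeasurePreserving T μ μ) {L : ℕ} (hL : 0 < L) (f : C(X, ℝ)) {B : Set X}
    (hB : MeasurableSet B) (hTB : T ⁻¹' B = B) :
    ∫ y in B, avg T L f y ∂μ = ∫ y in B, f y ∂μ := by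
  have hL' : (L:ℝ) ≠ 0 := by exact_mod_cast hL.ne'
  have hpre : ∀ k, T^[k] ⁻¹' B = B := fun k => by
    induction k with
    | zero => rfl
    | succ k ih => rw [Function.iterate_succ, preimage_comp, ih, hTB]
  have hk : ∀ k, ∫ y in B, f (T^[k] y) ∂μ = ∫ y in B, f y ∂μ := by
    intro k
    have h1 := (hμ.iterate k).map_eq
    have h2 : Measure.map (T^[k]) (μ.restrict B) = μ.restrict B := by
      conv_lhs => rw [← hpre k]
      rw [← Measure.restrict_map (hT.iterate k).measurable hB, h1]
    conv_rhs => rw [← h2]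
    rw [integral_map (hT.iterate k).measurable.aemeasurable f.continuous.aestronglyMeasurable]
  simp only [avg_eq hL, integral_div]
  rw [integral_finsetSum]
  · simp only [hk]
    simp [hL']
  · intro k _
    exact cont_integrable (f.continuous.comp (hT.iterate k)) _

theorem var_le (hT : Continuous T) {μ : ProbabilityMeasure X}
    (hμ : MeasurePreserving T (μ : Measure X) (μ : Measure X)) {L : ℕ} (hL : 0 < L) (i : ℕ) :
    Phi μ + cS X i * ∫ y, (avg T L (fS X i) y - ∫ x, fS X i x ∂(μ : Measure X)) ^ 2 ∂(μ : Measure X)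
      ≤ ∫ y, Phi (emp T L y) ∂(μ : Measure X) := by
  set m : ℕ → ℝ := fun j => ∫ x, fS X j x ∂(μ : Measure X) with hm
  set v : ℕ → ℝ := fun j => ∫ y, (avg T L (fS X j) y - m j) ^ 2 ∂(μ : Measure X) with hv
  have hc : ∀ j, Continuous (avg T L (fS X j)) := fun j => avg_continuous hT hL _
  have hmean : ∀ j, ∫ y, avg T L (fS X j) y ∂(μ : Measure X) = m j := by
    intro j
    have := integral_avg hT hμ hL (fS X j) MeasurableSet.univ preimage_univ
    simpa using this
  have hsq : ∀ j, ∫ y, (avg T L (fS X j) y) ^ 2 ∂(μ : Measure X) = v j + (m j) ^ 2 := by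
    intro j
    have e1 : ∀ y, (avg T L (fS X j) y - m j) ^ 2 =
        (avg T L (fS X j) y) ^ 2 - (2 * m j) * avg T L (fS X j) y + (m j) ^ 2 := fun y => by ring
    simp only [hv, e1]
    rw [integral_add, integral_sub, integral_const_mul, hmean]
    · simp; ring
    · exact cont_integrable ((hc j).pow 2) _
    · exact cont_integrable (continuous_const.mul (hc j)) _
    · exact cont_integrable (((hc j).pow 2).sub (continuous_const.mul (hc j))) _
    · exact integrable_const _
  have hv0 : ∀ j, 0 ≤ v j := fun j => integral_nonneg fun y => sq_nonneg _
  have habs : ∀ j y, cS X j * (avg T L (fS X j) y) ^ 2 ≤ (1/2 : ℝ) ^ j := fun j y =>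
    cS_bound j (abs_integral_le _ _)
  have hint : ∀ j, ∫ y, cS X j * (avg T L (fS X j) y) ^ 2 ∂(μ : Measure X) =
      cS X j * (m j) ^ 2 + cS X j * v j := by
    intro j; rw [integral_const_mul, hsq]; ring
  have hint_le : ∀ j, ∫ y, cS X j * (avg T L (fS X j) y) ^ 2 ∂(μ : Measure X) ≤ (1/2 : ℝ) ^ j := by
    intro j
    have := integral_mono (μ := (μ : Measure X))
      (cont_integrable (continuous_const.mul ((hc j).pow 2)) _)
      (integrable_const ((1/2 : ℝ) ^ j)) (habs j)
    simpa using this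
  have hnn : ∀ j y, 0 ≤ cS X j * (avg T L (fS X j) y) ^ 2 := fun j y =>
    mul_nonneg (cS_pos j).le (sq_nonneg _)
  have hsum : Summable fun j => ∫ y, cS X j * (avg T L (fS X j) y) ^ 2 ∂(μ : Measure X) :=
    Summable.of_nonneg_of_le (fun j => integral_nonneg (hnn j)) hint_le summable_geometric_two
  have hswap : ∫ y, Phi (emp T L y) ∂(μ : Measure X) =
      ∑' j, ∫ y, cS X j * (avg T L (fS X j) y) ^ 2 ∂(μ : Measure X) := by
    symm
    refine integral_tsum_of_summable_integral_norm
      (fun j => cont_integrable (continuous_const.mul ((hc j).pow 2)) _) ?_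
    refine hsum.congr fun j => ?_
    refine integral_congr_ae (Eventually.of_forall fun y => ?_)
    exact (Real.norm_of_nonneg (hnn j y)).symm
  have hs1 : Summable fun j => cS X j * (m j) ^ 2 := Phi_summable μ
  have hs2 : Summable fun j => cS X j * v j := by
    simp only [hint] at hsum
    refine Summable.of_nonneg_of_le (fun j => mul_nonneg (cS_pos j).le (hv0 j)) (fun j => ?_) hsum
    have := mul_nonneg (cS_pos (X := X) j).le (sq_nonneg (m j))
    linarith
  rw [hswap]
  simp only [hint]
  rw [hs1.tsum_add hs2]
  refine add_le_add le_rfl ?_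
  exact hs2.le_tsum i fun j _ => mul_nonneg (cS_pos j).le (hv0 j)

theorem Phi_int_le (hU : ⋃₀ (U : Set (Set X)) = univ) (hT : Continuous T)
    (hup : ∀ η > 0, ∀ᶠ n : ℕ in atTop, (aN T U n univ : ℝ) ≤ Real.exp (n * (h + η)))
    {μ : ProbabilityMeasure X} (hμ : μ ∈ KSet T U h) (hmax : ∀ ν ∈ KSet T U h, Phi ν ≤ Phi μ)
    {η : ℝ} (hη : 0 < η) :
    ∀ᶠ L : ℕ in atTop, ∫ y, Phi (emp T L y) ∂(μ : Measure X) ≤ Phi μ + 3 * η := by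
  have hcl : IsClosed {ν : ProbabilityMeasure X | Phi μ + η ≤ Phi ν} :=
    isClosed_le continuous_const Phi_continuous
  obtain ⟨γ, hγ, hs⟩ := smallSeq_of_disjoint (T := T) (U := U) (h := h) hU hcl.isCompact
    (fun ν hν hK => by
      have := hmax ν hK
      have hν' : Phi μ + η ≤ Phi ν := hν
      linarith)
  filter_upwards [hs, KSet_measure_le hU hup hμ hγ hη, eventually_gt_atTop 0] with L h1 h2 hL
  have hcont : Continuous fun y => Phi (emp T L y) := Phi_continuous.comp (emp_continuous hT hL)
  set A : Set X := {y | Phi μ + η < Phi (emp T L y)} with hA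
  have hAo : IsOpen A := isOpen_lt continuous_const hcont
  have h3 : (aN T U L A : ℝ) ≤ Real.exp (L * (h - γ)) := by
    refine le_trans ?_ h1
    exact_mod_cast aN_mono hU L (fun y (hy : Phi μ + η < Phi (emp T L y)) => hy.le)
  have h4 := h2 A hAo h3
  have h5 : (μ : Measure X).real A ≤ η := ENNReal.toReal_le_of_le_ofReal hη.le h4
  have hint2 : Integrable (A.indicator fun _ => (2:ℝ)) (μ : Measure X) :=
    (integrable_const _).indicator hAo.measurableSet
  calc ∫ y, Phi (emp T L y) ∂(μ : Measure X)
      ≤ ∫ y, ((Phi μ + η) + A.indicator (fun _ => (2:ℝ)) y) ∂(μ : Measure X) := by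
        refine integral_mono (cont_integrable hcont _) ((integrable_const _).add hint2) ?_
        intro y
        by_cases hy : y ∈ A
        · simp only [indicator_of_mem hy]
          have := Phi_le (emp T L y)
          have := Phi_nonneg μ
          linarith
        · simp only [indicator_of_notMem hy, add_zero]
          exact not_lt.1 hy
    _ = (Phi μ + η) + 2 * (μ : Measure X).real A := by
        rw [integral_add (integrable_const _) hint2, integral_indicator hAo.measurableSet]
        simp [mul_comm]
    _ ≤ _ := by linarith

theorem continuous_int (ν : Measure X) [IsFiniteMeasure ν] :
    Continuous fun f : C(X, ℝ) => ∫ x, f x ∂ν := by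
  refine (LipschitzWith.of_dist_le_mul (K := ⟨ν.real univ, measureReal_nonneg⟩) ?_).continuous
  intro f g
  rw [dist_eq_norm, ← integral_sub (cont_integrable f.continuous _) (cont_integrable g.continuous _)]
  have := norm_integral_le_of_norm_le_const (μ := ν) (f := fun x => f x - g x) (C := dist f g)
    (Eventually.of_forall fun x => by
      rw [dist_eq_norm]; exact (f - g).norm_coe_le_norm x)
  rw [mul_comm] at this
  exact this

theorem maximizer_ergodic (hU : ⋃₀ (U : Set (Set X)) = univ) (hT : Continuous T)
    (hup : ∀ η > 0, ∀ᶠ n : ℕ in atTop, (aN T U n univ : ℝ) ≤ Real.exp (n * (h + η)))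
    {μ : ProbabilityMeasure X} (hμ : μ ∈ KSet T U h) (hmax : ∀ ν ∈ KSet T U h, Phi ν ≤ Phi μ) :
    Ergodic T (μ : Measure X) := by
  have hinv := KSet_invariant hU hT hμ
  refine ⟨hinv, ⟨fun B hB hTB => ?_⟩⟩
  have key : ∀ f : C(X, ℝ), ∫ y in B, f y ∂(μ : Measure X) =
      (μ : Measure X).real B * ∫ y, f y ∂(μ : Measure X) := by
    intro f
    have hd : DenseRange (fS X) := TopologicalSpace.denseRange_denseSeq _
    refine hd.induction_on f (isClosed_eq (continuous_int _)
      (continuous_const.mul (continuous_int _))) ?_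
    intro i
    set m := ∫ x, fS X i x ∂(μ : Measure X) with hm
    rw [← sub_eq_zero, ← abs_nonpos_iff]
    refine le_of_forall_pos_le_add fun e he => ?_
    rw [zero_add]
    have hη : 0 < cS X i * (e ^ 2 / 4) / 3 := by have := cS_pos (X := X) i; positivity
    obtain ⟨L, h1, hL⟩ := ((Phi_int_le hU hT hup hμ hmax hη).and (eventually_gt_atTop 0)).exists
    have h2 := (var_le hT hinv hL i).trans h1
    have hc := avg_continuous hT hL (fS X i)
    set v := ∫ y, (avg T L (fS X i) y - m) ^ 2 ∂(μ : Measure X) with hv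
    have h3 : v ≤ e ^ 2 / 4 := by
      have : cS X i * v ≤ cS X i * (e ^ 2 / 4) := by linarith
      exact le_of_mul_le_mul_left this (cS_pos i)
    rw [← integral_avg hT hinv hL (fS X i) hB hTB]
    have e1 : ∫ y in B, avg T L (fS X i) y ∂(μ : Measure X) - (μ : Measure X).real B * m =
        ∫ y in B, (avg T L (fS X i) y - m) ∂(μ : Measure X) := by
      rw [integral_sub (cont_integrable hc _) (integrable_const _)]
      simp
    rw [e1]
    have hcm : Continuous fun y => |avg T L (fS X i) y - m| := (hc.sub continuous_const).abs
    have hcs : Continuous fun y => (avg T L (fS X i) y - m) ^ 2 := (hc.sub continuous_const).pow 2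
    calc |∫ y in B, (avg T L (fS X i) y - m) ∂(μ : Measure X)|
        ≤ ∫ y in B, |avg T L (fS X i) y - m| ∂(μ : Measure X) := abs_integral_le_integral_abs
      _ ≤ ∫ y, |avg T L (fS X i) y - m| ∂(μ : Measure X) :=
          setIntegral_le_integral (cont_integrable hcm _)
            (Eventually.of_forall fun y => abs_nonneg _)
      _ ≤ ∫ y, (e / 2 + (2 / e) * (avg T L (fS X i) y - m) ^ 2) ∂(μ : Measure X) := by
          refine integral_mono (cont_integrable hcm _)
            (cont_integrable (continuous_const.add (continuous_const.mul hcs)) _) ?_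
          intro y
          simp only
          set u := avg T L (fS X i) y - m
          rw [← sq_abs u]
          have hu := abs_nonneg u
          have : |u| * e ≤ (e / 2 + 2 / e * |u| ^ 2) * e := by
            have : (e / 2 + 2 / e * |u| ^ 2) * e = e ^ 2 / 2 + 2 * |u| ^ 2 := by
              field_simp
            rw [this]; nlinarith [sq_nonneg (e - 2 * |u|), sq_nonneg e, sq_nonneg (|u|)]
          exact le_of_mul_le_mul_right this he
      _ = e / 2 + (2 / e) * v := by
          have hI : Integrable (fun y => 2 / e * (avg T L (fS X i) y - m) ^ 2) (μ : Measure X) :=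
            cont_integrable (continuous_const.mul hcs) _
          rw [integral_add (integrable_const _) hI, integral_const_mul]
          simp [hv]
      _ ≤ e / 2 + (2 / e) * (e ^ 2 / 4) := by gcongr
      _ = e := by field_simp; norm_num
  have hmeas : (μ : Measure X).restrict B = ((μ : Measure X) B) • (μ : Measure X) := by
    have : IsFiniteMeasure (((μ : Measure X) B) • (μ : Measure X)) :=
      Measure.smul_finite _ (measure_ne_top _ _)
    apply ext_of_forall_integral_eq_of_IsFiniteMeasure
    intro f
    rw [integral_smul_measure]
    exact key ⟨f, f.continuous⟩
  have hz : (μ : Measure X) B * (μ : Measure X) Bᶜ = 0 := by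
    have := congrArg (fun ν : Measure X => ν Bᶜ) hmeas
    simp only [Measure.smul_apply, smul_eq_mul, Measure.restrict_apply hB.compl,
      compl_inter_self, measure_empty] at this
    exact this.symm
  rw [eventuallyConst_set']
  rcases mul_eq_zero.1 hz with h0 | h0
  · left; exact ae_eq_empty.2 h0
  · right; exact ae_eq_univ.2 h0

/-- Strong form of the local variational principle. -/
theorem exists_ergodic (hU : IsFiniteOpenCover U) (hT : Continuous T) {δ : ℝ} (hδ : 0 < δ)
    (hδ1 : δ ≤ 1) :
    ∃ μ ∈ ergodicMeasures (X := X) T,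
      limsup (fun n : ℕ => ((Real.log (aN T U n univ) / n : ℝ) : EReal)) atTop
        ≤ shapiraEnt T μ U δ := by
  obtain ⟨h, hlow, hup, hlim⟩ := exists_rate T hU.2
  obtain ⟨μ, hμ, hmax⟩ := (KSet_isClosed (T := T) (U := U) (h := h)).isCompact.exists_isMaxOn
    (KSet_nonempty hU.2 hlow) Phi_continuous.continuousOn
  have herg := maximizer_ergodic hU.2 hT hup hμ (fun ν hν => hmax hν)
  refine ⟨μ, ⟨inferInstance, herg⟩, ?_⟩
  have hl : limsup (fun n : ℕ => ((Real.log (aN T U n univ) / n : ℝ) : EReal)) atTop = (h : EReal) :=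
    (continuous_coe_real_ereal.continuousAt.tendsto.comp hlim).limsup_eq
  rw [hl]
  refine le_of_forall_lt fun c hc => ?_
  obtain ⟨r, hcr, hrh⟩ := EReal.lt_iff_exists_real_btwn.1 hc
  refine hcr.trans_le ?_
  have hrh' : r < h := by exact_mod_cast hrh
  refine le_limsup_of_frequently_le (Eventually.frequently ?_)
  have hγ : 0 < h - r := by linarith
  filter_upwards [KSet_measure_le hU.2 hup hμ hγ (half_pos hδ), eventually_gt_atTop 0]
    with n hn hn0
  have hn' : (0:ℝ) < n := by exact_mod_cast hn0
  rw [EReal.coe_le_coe_iff, le_div_iff₀ hn']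
  have hne : {m | ∃ F : Finset (Set X), ↑F ⊆ dynRefine T U n ∧
      ENNReal.ofReal δ ≤ (μ : Measure X) (⋃₀ (F : Set (Set X))) ∧ F.card = m}.Nonempty := by
    refine ⟨_, (dynRefine_finite T U n).toFinset, by simp, ?_, rfl⟩
    rw [Finite.coe_toFinset, dynRefine_cover hU.2 n, measure_univ]
    exact ENNReal.ofReal_le_one.2 hδ1
  obtain ⟨F, hF, hFm, hFc⟩ := Nat.sInf_mem hne
  have hFc' : F.card = shapiraNum T (μ : Measure X) U n δ := hFc
  rw [← hFc']
  by_contra! hcon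
  have hpos : 0 < F.card := by
    rw [Finset.card_pos, Finset.nonempty_iff_ne_empty]
    rintro rfl
    simp at hFm
    linarith
  have h1 : (F.card : ℝ) ≤ Real.exp (n * r) := by
    rw [← Real.log_le_iff_le_exp (by exact_mod_cast hpos)]
    linarith
  have h2 := hn (⋃₀ (F : Set (Set X))) ?_ ?_
  · have := hFm.trans h2
    rw [ENNReal.ofReal_le_ofReal_iff (half_pos hδ).le] at this
    linarith
  · refine isOpen_sUnion fun V hV => ?_
    obtain ⟨f, hf, rfl⟩ := hF hV
    exact isOpen_iInter_of_finite fun i => (hU.1 _ (hf i)).preimage (hT.iterate _)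
  · rw [show h - (h - r) = r by ring]
    refine le_trans ?_ h1
    exact_mod_cast covN_le F hF le_rfl

end ergo

/-! ### Final assembly -/

theorem liminf_compare {P Q : ℝ → EReal} (h : ∀ ε > 0, P (4 * ε) ≤ Q ε) :
    liminf (fun ε : ℝ => P ε / ((Real.log (1 / ε) : ℝ) : EReal)) (𝓝[>] (0:ℝ)) ≤
      liminf (fun ε : ℝ => Q ε / ((Real.log (1 / ε) : ℝ) : EReal)) (𝓝[>] (0:ℝ)) := by
  refine le_of_forall_lt fun a ha => ?_
  obtain ⟨c, hac, hc⟩ := EReal.lt_iff_exists_real_btwn.1 ha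
  obtain ⟨c', hcc', hc'⟩ := EReal.lt_iff_exists_real_btwn.1 hc
  refine hac.trans_le ?_
  have hcc : c < c' := by exact_mod_cast hcc'
  have h4 : Tendsto (fun ε : ℝ => 4 * ε) (𝓝[>] 0) (𝓝[>] 0) := by
    refine tendsto_nhdsWithin_of_tendsto_nhds_of_eventually_within _ ?_ ?_
    · have : Tendsto (fun ε : ℝ => 4 * ε) (𝓝 0) (𝓝 (4 * 0)) :=
        (continuous_const.mul continuous_id).tendsto 0
      rw [mul_zero] at this
      exact this.mono_left nhdsWithin_le_nhds
    · filter_upwards [self_mem_nhdsWithin] with ε hε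
      have : (0:ℝ) < ε := hε
      exact mem_Ioi.2 (by linarith)
  have hlog : Tendsto (fun ε : ℝ => Real.log (1 / ε)) (𝓝[>] 0) atTop := by
    simp only [one_div]
    exact Real.tendsto_log_atTop.comp tendsto_inv_nhdsGT_zero
  have e1 := h4.eventually (eventually_lt_of_lt_liminf hc')
  refine le_liminf_of_le (by isBoundedDefault) ?_
  filter_upwards [e1, self_mem_nhdsWithin, hlog.eventually_gt_atTop 0,
    (hlog.comp h4).eventually_gt_atTop 0,
    hlog.eventually_ge_atTop (c' * Real.log 4 / (c' - c))] with ε h1 h2 h3 h5 h6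
  have hε : 0 < ε := h2
  simp only [Function.comp] at h5
  rw [EReal.le_div_iff_mul_le (by exact_mod_cast h3) (EReal.coe_ne_top _)]
  have h7 := h1.le
  rw [EReal.le_div_iff_mul_le (by exact_mod_cast h5) (EReal.coe_ne_top _)] at h7
  refine le_trans ?_ (h7.trans (h ε hε))
  rw [← EReal.coe_mul, ← EReal.coe_mul, EReal.coe_le_coe_iff]
  have h8 : Real.log (1 / (4 * ε)) = Real.log (1 / ε) - Real.log 4 := by
    rw [one_div, one_div, Real.log_inv, Real.log_inv, Real.log_mul (by norm_num) hε.ne']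
    ring
  rw [h8]
  rw [div_le_iff₀ (by linarith)] at h6
  nlinarith

theorem limsup_log_mono {a b : ℕ → ℕ} (h : ∀ n, a n ≤ b n) :
    limsup (fun n : ℕ => ((Real.log (a n) / n : ℝ) : EReal)) atTop ≤
      limsup (fun n : ℕ => ((Real.log (b n) / n : ℝ) : EReal)) atTop := by
  refine limsup_le_limsup (Eventually.of_forall fun n => ?_)
  simp only [EReal.coe_le_coe_iff]
  refine div_le_div_of_nonneg_right ?_ (Nat.cast_nonneg _)
  rcases Nat.eq_zero_or_pos (a n) with h0 | h0
  · rw [h0]; simp only [Nat.cast_zero, Real.log_zero]; exact Real.log_natCast_nonneg _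
  · exact Real.log_le_log (by exact_mod_cast h0) (by exact_mod_cast h n)

section final
set_option linter.unusedSectionVars false
variable [MetricSpace X] [CompactSpace X] [Nonempty X] [MeasurableSpace X] [BorelSpace X]
variable {T : X → X} {U : Finset (Set X)}

theorem bounded_any (s : Set X) : Bornology.IsBounded s :=
  (isCompact_univ (X := X)).isBounded.subset (subset_univ s)

theorem dist_le_dynDist {n k : ℕ} (hk : k < n) (x y : X) :
    dist (T^[k] x) (T^[k] y) ≤ dynDist T n x y := by
  unfold dynDist
  have hb : BddAbove (range fun k : ℕ =>
      ⨆ _ : k ∈ Finset.range n, dist (T^[k] x) (T^[k] y)) := by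
    refine ⟨Metric.diam (univ : Set X), ?_⟩
    rintro _ ⟨j, rfl⟩
    refine Real.iSup_le (fun _ => ?_) Metric.diam_nonneg
    exact Metric.dist_le_diam_of_mem (bounded_any _) (mem_univ _) (mem_univ _)
  refine le_trans ?_ (le_ciSup hb k)
  rw [ciSup_pos (Finset.mem_range.2 hk)]

theorem dynDist_le {n : ℕ} {r : ℝ} (hr : 0 ≤ r) {x y : X}
    (h : ∀ k < n, dist (T^[k] x) (T^[k] y) ≤ r) : dynDist T n x y ≤ r :=
  Real.iSup_le (fun k => Real.iSup_le (fun hk => h k (Finset.mem_range.1 hk)) hr) hr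

theorem exists_cov {r : ℝ} (hr : 0 < r) : ∃ U : Finset (Set X), IsFiniteOpenCover U ∧
    (∀ V ∈ U, Metric.diam V ≤ 4 * r) ∧
    (∀ V : Set X, Metric.diam V ≤ r → ∃ W ∈ U, V ⊆ W) ∧
    (∀ x : X, ∃ W ∈ U, Metric.closedBall x r ⊆ W) := by
  classical
  obtain ⟨t, -, hfin, ht⟩ := (isCompact_univ (X := X)).finite_cover_balls hr
  have key : ∀ x : X, ∃ W ∈ hfin.toFinset.image (fun x => Metric.ball x (2 * r)),
      Metric.closedBall x r ⊆ W := by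
    intro x
    obtain ⟨z, hz, hxz⟩ := mem_iUnion₂.1 (ht (mem_univ x))
    refine ⟨Metric.ball z (2 * r), Finset.mem_image.2 ⟨z, by simpa using hz, rfl⟩, ?_⟩
    intro y hy
    rw [Metric.mem_closedBall] at hy
    rw [Metric.mem_ball] at hxz ⊢
    have := dist_triangle y x z
    linarith
  refine ⟨hfin.toFinset.image fun x => Metric.ball x (2 * r), ⟨?_, ?_⟩, ?_, ?_, key⟩
  · intro V hV
    obtain ⟨z, _, rfl⟩ := Finset.mem_image.1 hV
    exact Metric.isOpen_ball
  · rw [eq_univ_iff_forall]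
    intro x
    obtain ⟨W, hW, hs⟩ := key x
    exact ⟨W, hW, hs (Metric.mem_closedBall_self hr.le)⟩
  · intro V hV
    obtain ⟨z, _, rfl⟩ := Finset.mem_image.1 hV
    have := Metric.diam_ball (x := z) (r := 2 * r) (by linarith)
    linarith
  · intro V hV
    rcases V.eq_empty_or_nonempty with rfl | ⟨x, hx⟩
    · obtain ⟨W, hW, -⟩ := key (Classical.arbitrary X)
      exact ⟨W, hW, empty_subset _⟩
    · obtain ⟨W, hW, hs⟩ := key x
      refine ⟨W, hW, fun y hy => hs ?_⟩
      rw [Metric.mem_closedBall]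
      exact (Metric.dist_le_diam_of_mem (bounded_any V) hy hx).trans hV

theorem card_sep_le (hU : IsFiniteOpenCover U) {ε : ℝ} (hε : 0 ≤ ε)
    (hd : ∀ V ∈ U, Metric.diam V ≤ ε) {n : ℕ} (E : Finset X)
    (hE : ∀ x ∈ E, ∀ y ∈ E, x ≠ y → ε < dynDist T n x y) :
    E.card ≤ aN T U n univ := by
  obtain ⟨F, hF, hA, hc⟩ := covN_spec (dynRefine_finite T U n) (dynRefine_cover hU.2 n) univ
  have hx : ∀ x : X, ∃ V ∈ F, x ∈ V := fun x => by
    obtain ⟨V, hV, hxV⟩ := hA (mem_univ x)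
    exact ⟨V, hV, hxV⟩
  choose φ hφ hφ' using hx
  unfold aN
  rw [← hc]
  refine Finset.card_le_card_of_injOn φ (fun x _ => hφ x) ?_
  intro x hx y hy hxy
  by_contra hne
  have h1 := hE x hx y hy hne
  refine absurd h1 (not_lt.2 (dynDist_le hε fun k hk => ?_))
  obtain ⟨g, hg, hgV⟩ := mem_dynRefine_iff.1 (hF (hφ x))
  have a1 := hφ' x
  have a2 := hφ' y
  rw [← hxy] at a2
  rw [hgV] at a1 a2
  exact (Metric.dist_le_diam_of_mem (bounded_any _) (a1 k hk) (a2 k hk)).trans (hd _ (hg k hk))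

theorem sepNum_bdd {ε : ℝ} (hε : 0 < ε) (n : ℕ) :
    BddAbove {m | ∃ E : Finset X, ↑E ⊆ (univ : Set X) ∧
      (∀ x ∈ E, ∀ y ∈ E, x ≠ y → ε < dynDist T n x y) ∧ E.card = m} := by
  obtain ⟨U, hU, hd, -, -⟩ := exists_cov (X := X) (r := ε / 4) (by linarith)
  refine ⟨aN T U n univ, ?_⟩
  rintro _ ⟨E, -, hE, rfl⟩
  exact card_sep_le hU hε.le (fun V hV => (hd V hV).trans (by linarith)) E hE

theorem sepNum_nonempty (ε : ℝ) (n : ℕ) :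
    {m | ∃ E : Finset X, ↑E ⊆ (univ : Set X) ∧
      (∀ x ∈ E, ∀ y ∈ E, x ≠ y → ε < dynDist T n x y) ∧ E.card = m}.Nonempty :=
  ⟨0, ∅, by simp, by simp, rfl⟩

theorem sepNum_le (hU : IsFiniteOpenCover U) {ε : ℝ} (hε : 0 ≤ ε)
    (hd : ∀ V ∈ U, Metric.diam V ≤ ε) (n : ℕ) :
    sepNum T n univ ε ≤ aN T U n univ := by
  refine csSup_le (sepNum_nonempty ε n) ?_
  rintro _ ⟨E, -, hE, rfl⟩
  exact card_sep_le hU hε hd E hE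

theorem dynDist_comm (n : ℕ) (x y : X) : dynDist T n x y = dynDist T n y x := by
  unfold dynDist
  simp only [dist_comm]

theorem aN_le_sepNum {r : ℝ} (hr : 0 < r)
    (hb : ∀ x : X, ∃ W ∈ U, Metric.closedBall x r ⊆ W) (n : ℕ) :
    aN T U n univ ≤ sepNum T n univ r := by
  classical
  obtain ⟨E, -, hE, hc⟩ := Nat.sSup_mem (sepNum_nonempty (T := T) r n) (sepNum_bdd hr n)
  have hc' : E.card = sepNum T n univ r := hc
  rw [← hc']
  have hspan : ∀ y : X, ∃ x ∈ E, dynDist T n x y ≤ r := by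
    intro y
    by_contra! hcon
    by_cases hy : y ∈ E
    · have h1 := hcon y hy
      have h2 : dynDist T n y y ≤ 0 := dynDist_le le_rfl (fun k _ => by simp)
      linarith
    have hle : (insert y E).card ≤ E.card := by
      conv_rhs => rw [hc]
      refine le_csSup (sepNum_bdd hr n) ⟨insert y E, subset_univ _, ?_, rfl⟩
      intro a ha b hb' hab
      rw [Finset.mem_insert] at ha hb'
      rcases ha with rfl | ha <;> rcases hb' with rfl | hb'
      · exact absurd rfl hab
      · rw [dynDist_comm]; exact hcon b hb'
      · exact hcon a ha
      · exact hE a ha b hb' hab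
    rw [Finset.card_insert_of_notMem hy] at hle
    omega
  choose w hw hws using hb
  refine (covN_le (E.image fun x => {y | ∀ i < n, T^[i] y ∈ w (T^[i] x)}) ?_ ?_).trans
    Finset.card_image_le
  · intro V hV
    rw [Finset.mem_coe, Finset.mem_image] at hV
    obtain ⟨x, _, rfl⟩ := hV
    exact mem_dynRefine_iff.2 ⟨fun i => w (T^[i] x), fun i _ => hw _, rfl⟩
  · intro y _
    obtain ⟨x, hx, hxy⟩ := hspan y
    refine ⟨{y | ∀ i < n, T^[i] y ∈ w (T^[i] x)},
      Finset.mem_coe.2 (Finset.mem_image.2 ⟨x, hx, rfl⟩), fun i hi => hws _ ?_⟩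
    rw [Metric.mem_closedBall, dist_comm]
    exact (dist_le_dynDist hi x y).trans hxy

theorem shapiraNum_le (hU : IsFiniteOpenCover U) {μ : Measure X} [IsProbabilityMeasure μ]
    {δ : ℝ} (hδ : δ ≤ 1) (n : ℕ) : shapiraNum T μ U n δ ≤ aN T U n univ := by
  obtain ⟨F, hF, hA, hc⟩ := covN_spec (dynRefine_finite T U n) (dynRefine_cover hU.2 n) univ
  unfold aN
  rw [← hc]
  refine Nat.sInf_le ⟨F, hF, ?_, rfl⟩
  rw [univ_subset_iff.1 hA, measure_univ]
  exact ENNReal.ofReal_le_one.2 hδ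

theorem shapiraNum_mono {U' : Finset (Set X)} (hU : IsFiniteOpenCover U)
    (h : ∀ V ∈ U, ∃ W ∈ U', V ⊆ W) {μ : Measure X} [IsProbabilityMeasure μ]
    {δ : ℝ} (hδ : δ ≤ 1) (n : ℕ) : shapiraNum T μ U' n δ ≤ shapiraNum T μ U n δ := by
  have hne : {m | ∃ F : Finset (Set X), ↑F ⊆ dynRefine T U n ∧
      ENNReal.ofReal δ ≤ μ (⋃₀ (F : Set (Set X))) ∧ F.card = m}.Nonempty := by
    refine ⟨_, (dynRefine_finite T U n).toFinset, by simp, ?_, rfl⟩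
    rw [Finite.coe_toFinset, dynRefine_cover hU.2 n, measure_univ]
    exact ENNReal.ofReal_le_one.2 hδ
  obtain ⟨F, hF, hFm, hFc⟩ := Nat.sInf_mem hne
  have hFc' : F.card = shapiraNum T μ U n δ := hFc
  rw [← hFc']
  obtain ⟨F', hF', hs, hle⟩ := exists_refine_finset (dynRefine_refine (T := T) (n := n) h) F hF
  exact le_trans (Nat.sInf_le ⟨F', hF', hFm.trans (measure_mono hs), rfl⟩) hle

theorem upper_bound {δ : ℝ} (hδ : δ ≤ 1) {ε : ℝ} (hε : 0 < ε) :
    (⨆ μ ∈ ergodicMeasures T, ⨅ U ∈ {U : Finset (Set X) |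
          IsFiniteOpenCover U ∧ ∀ V ∈ U, Metric.diam V ≤ 4 * ε}, shapiraEnt T μ U δ)
      ≤ sepEnt T (univ : Set X) ε := by
  obtain ⟨U, hU, hd, -, hb⟩ := exists_cov (X := X) hε
  refine iSup₂_le fun μ hμ => ?_
  have := hμ.1
  refine (iInf₂_le U ⟨hU, hd⟩).trans ?_
  exact limsup_log_mono fun n => (shapiraNum_le hU hδ n).trans (aN_le_sepNum hε hb n)

theorem lower_bound (hT : Continuous T) {δ : ℝ} (hδ0 : 0 < δ) (hδ : δ ≤ 1) {ε : ℝ}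
    (hε : 0 < ε) :
    sepEnt T (univ : Set X) (4 * ε) ≤
    (⨆ μ ∈ ergodicMeasures T, ⨅ U ∈ {U : Finset (Set X) |
          IsFiniteOpenCover U ∧ ∀ V ∈ U, Metric.diam V ≤ ε}, shapiraEnt T μ U δ) := by
  obtain ⟨U, hU, hd, hr, -⟩ := exists_cov (X := X) hε
  obtain ⟨μ, hμ, hle⟩ := exists_ergodic hU hT hδ0 hδ
  refine le_trans ?_ (le_iSup₂ (f := fun μ (_ : μ ∈ ergodicMeasures T) =>
    ⨅ U ∈ {U : Finset (Set X) |
          IsFiniteOpenCover U ∧ ∀ V ∈ U, Metric.diam V ≤ ε}, shapiraEnt T μ U δ) μ hμ)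
  refine le_iInf₂ fun U' hU' => ?_
  have := hμ.1
  have h1 : sepEnt T (univ : Set X) (4 * ε) ≤ _ :=
    limsup_log_mono fun n => sepNum_le (T := T) hU (by linarith) hd n
  refine h1.trans (hle.trans ?_)
  exact limsup_log_mono fun n =>
    shapiraNum_mono hU'.1 (fun V hV => hr V (hU'.2 V hV)) hδ n

end final

section Theorems

variable [MetricSpace X] [CompactSpace X] [Nonempty X] [MeasurableSpace X] [BorelSpace X]

/-- Variational principle for the lower metric mean dimension in terms of Shapira's
entropy of finite open covers of small diameter (Theorem 3.2, second part). -/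
theorem lower_mdim_eq_liminf_shapira (T : X → X) (hT : IsHomeomorph T)
    (δ : ℝ) (hδ : δ ∈ Set.Ioo (0:ℝ) 1) :
    mdimLower T = liminf (fun ε : ℝ =>
      (⨆ μ ∈ ergodicMeasures T, ⨅ U ∈ {U : Finset (Set X) |
          IsFiniteOpenCover U ∧ ∀ V ∈ U, Metric.diam V ≤ ε}, shapiraEnt T μ U δ)
        / ((Real.log (1 / ε) : ℝ) : EReal)) (𝓝[>] (0:ℝ)) := by
  refine le_antisymm ?_ ?_
  · exact liminf_compare (P := fun ε => sepEnt T univ ε)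
      fun ε hε => lower_bound hT.continuous hδ.1 hδ.2.le hε
  · exact liminf_compare (Q := fun ε => sepEnt T univ ε)
      (P := fun ε => ⨆ μ ∈ ergodicMeasures T, ⨅ U ∈ {U : Finset (Set X) |
          IsFiniteOpenCover U ∧ ∀ V ∈ U, Metric.diam V ≤ ε}, shapiraEnt T μ U δ)
      fun ε hε => upper_bound hδ.2.le hε

end Theorems
end
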